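/- Let n ≥ 2 and let (M,g) = (ℝ^n, g, o) be an asymptotically conical manifold with opening angle α ∈ (0,π/2) \ {arcsin(1/(2k+1)) : k ∈ ℕ} and asymptotic decay rate μ > 0, and assume the exponential map of (M,g) is proper at every point; let ε, κ be as in the context and fix a ∈ S^{n−1}. For each ρ > R_κ let Γ_ρ be a min-max geodesic segment of (M,g) joining p = ρa and q = −ρa with energy E(Γ_ρ) = Λ_{pq} (in particular ℓ_g(Γ_ρ) ≥ 2(1−ε)ρ). Then C_minmax := sup_{ρ > R_κ} dist(Γ_ρ, o) < ∞, i.e. all the min-max geodesic segments Γ_ρ meet a fixed Euclidean ball around the origin. -/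

import Mathlib

/-!
The mountain-pass value is controlled from below by topology. Every sweepout in the min-max class
contains a curve through the origin (`sweepout_hits_origin`): otherwise, suspending the equator, the
identity of the unit sphere would be homotopic in the punctured space to a reflection, contradicting
a degree computation (`not_homotopic_reflection`, which rests on the fact that the pulled back
integral of a test form depends polynomially on a deformation parameter, hence is constant). A curve
from `ρ a` to `-ρ a` through the origin has length at least `2 (1 - η) (ρ - R₁)`
(`RadialLower.clen_ge`), with `η` as small as desired, so Cauchy–Schwarz gives the same bound for
the speed `c` of `Γ_ρ`.

Geodesics are given metrically, as curves that locally realise the distance. They are shown to be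
`C¹`, because second differences are controlled by comparing the metric with a frozen form
(`geodesic_local_c1`), and then to solve the geodesic equation in momentum form
(`geodesic_unit_speed`).

Suppose now that some `Γ_ρ` stays outside a ball of large radius `R₀`. Along it the conservation
laws of the cone hold up to small relative errors (`conicalTraj_of_geodesic`): the radial momentum
grows at unit rate, and the angular momenta are almost constant. Since the length is almost `2 ρ`,
the closest distance to the origin is small compared with `ρ`, and so the direction turns by almost
`π / sin α` in a fixed plane (`CentredTraj.direction_close`). The endpoints being antipodal,
`1 + cos (π / sin α)` is bounded by a quantity that tends to `0` with the errors
(`one_add_cos_le_of_far`). If the `Γ_ρ` met no fixed ball, this would apply with arbitrarily small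
errors, so `cos (π / sin α) = -1` and `sin α = 1 / (2 k + 1)` for some `k`
(`exceptional_of_forall`), which is excluded.
-/

open scoped RealInnerProductSpace
open Real Set Filter

noncomputable section

/-- Euclidean `n`-space. -/
abbrev En (n : ℕ) : Type := EuclideanSpace ℝ (Fin n)

/-- A (pointwise) metric tensor on `ℝⁿ`: to each point it assigns a bilinear form,
recorded simply as an `ℝ`-valued function of two tangent vectors (tangent spaces being
identified with `ℝⁿ`). -/
abbrev MetricTensor (n : ℕ) : Type := En n → En n → En n → ℝ

/-- The standard cone metric `g_{C_α^n}` of opening angle `α`, written in Cartesian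
coordinates on `ℝⁿ \ {0}`:  `g_{C_α^n} = (1 - sin²α)·dρ⊗dρ + sin²α·(euclidean metric)`,
where `dρ(v) = ⟪v, x/‖x‖⟫`; this is `dρ⊗dρ + ρ² sin²α · g_{S^{n-1}}` in polar
coordinates. -/
def coneMetric (n : ℕ) (α : ℝ) : MetricTensor n := fun x v w =>
  (1 - Real.sin α ^ 2) * (⟪v, x⟫ * ⟪w, x⟫ / ‖x‖ ^ 2) + Real.sin α ^ 2 * ⟪v, w⟫

variable {n : ℕ}

/-- Length of a curve on `[a,b]` with respect to a metric tensor. -/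
def clen (G : MetricTensor n) (γ : ℝ → En n) (a b : ℝ) : ℝ :=
  ∫ t in a..b, Real.sqrt (G (γ t) (deriv γ t) (deriv γ t))

/-- Energy of a curve on `[a,b]` with respect to a metric tensor. -/
def cenergy (G : MetricTensor n) (γ : ℝ → En n) (a b : ℝ) : ℝ :=
  ∫ t in a..b, G (γ t) (deriv γ t) (deriv γ t)

/-- The Riemannian (length) distance induced by a metric tensor:
the infimum of lengths of `C¹` curves joining the two points. -/
def rdist (G : MetricTensor n) (x y : En n) : ℝ :=
  sInf {L : ℝ | ∃ γ : ℝ → En n, ContDiff ℝ 1 γ ∧ γ 0 = x ∧ γ 1 = y ∧ L = clen G γ 0 1}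

/-- The intrinsic (induced length) distance of the subset `S` for the metric tensor `G`:
the infimum of lengths of `C¹` curves joining the two points inside `S`. -/
def rdistIn (G : MetricTensor n) (S : Set (En n)) (x y : En n) : ℝ :=
  sInf {L : ℝ | ∃ γ : ℝ → En n, ContDiff ℝ 1 γ ∧ (∀ t ∈ Set.Icc (0:ℝ) 1, γ t ∈ S) ∧
    γ 0 = x ∧ γ 1 = y ∧ L = clen G γ 0 1}

/-- `γ`, restricted to the parameter set `I`, is a geodesic of the distance `d` with
constant speed `c`: locally it is a homothety of factor `c` (for `c = 1` this is a local
isometry, i.e. the arc-length parametrisation). -/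
def IsGeodesicOn (d : En n → En n → ℝ) (γ : ℝ → En n) (c : ℝ) (I : Set ℝ) : Prop :=
  ∀ t ∈ I, ∃ δ > 0, ∀ s ∈ I, ∀ u ∈ I, |s - t| < δ → |u - t| < δ →
    d (γ s) (γ u) = c * |s - u|

/-- A length-minimising geodesic segment from `p` to `q`, parametrised on `[0,1]`
with constant speed `d p q`. -/
def IsMinSeg (d : En n → En n → ℝ) (γ : ℝ → En n) (p q : En n) : Prop :=
  γ 0 = p ∧ γ 1 = q ∧
    ∀ s ∈ Set.Icc (0:ℝ) 1, ∀ u ∈ Set.Icc (0:ℝ) 1, d (γ s) (γ u) = d p q * |s - u|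

/-- The distance of the standard cone `C_α^n`. -/
def coneDist (n : ℕ) (α : ℝ) : En n → En n → ℝ := rdist (coneMetric n α)

/-- `(ℝⁿ, g)` is an asymptotically conical `C²` Riemannian manifold with opening
angle `α` and asymptotic decay rate `μ`: `g` is a complete `C²` Riemannian metric and
`A := g - g_{C_α^n}` has components whose derivatives of order `k ≤ 2` are
`O(|x|^{-μ-k})` at infinity. -/
structure IsAsympConical (n : ℕ) (g : MetricTensor n) (α μ : ℝ) : Prop where
  symm : ∀ x v w, g x v w = g x w v
  add_left : ∀ x v w u, g x (v + w) u = g x v u + g x w u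
  smul_left : ∀ x (a : ℝ) v u, g x (a • v) u = a * g x v u
  posdef : ∀ x v, v ≠ 0 → 0 < g x v v
  reg : ∀ i j : Fin n, ContDiff ℝ 2
    (fun x => g x (EuclideanSpace.single i 1) (EuclideanSpace.single j 1))
  decay : ∀ i j : Fin n, ∃ C R : ℝ, 0 < C ∧ ∀ x : En n, R ≤ ‖x‖ → ∀ k : ℕ, k ≤ 2 →
    ‖iteratedFDeriv ℝ k (fun y =>
        g y (EuclideanSpace.single i 1) (EuclideanSpace.single j 1) -
        coneMetric n α y (EuclideanSpace.single i 1) (EuclideanSpace.single j 1)) x‖ ≤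
      C * ‖x‖ ^ (-μ - (k : ℝ))
  complete : ∀ u : ℕ → En n,
    (∀ ε > 0, ∃ N, ∀ m ≥ N, ∀ k ≥ N, rdist g (u m) (u k) < ε) →
    ∃ x, ∀ ε > 0, ∃ N, ∀ m ≥ N, rdist g (u m) x < ε

/-- `ex` is the exponential map of the metric tensor `g` at the point `x`
(tangent spaces being identified with `ℝⁿ`): `ex v = γ_v(1)` where `γ_v` is the
constant-speed geodesic with `γ_v(0) = x`, `γ̇_v(0) = v`. -/
def IsExpAt (g : MetricTensor n) (x : En n) (ex : En n → En n) : Prop :=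
  ∀ v : En n, ∃ γ : ℝ → En n, γ 0 = x ∧ deriv γ 0 = v ∧
    IsGeodesicOn (rdist g) γ (Real.sqrt (g x v v)) Set.univ ∧ ex v = γ 1

/-- The exponential map of `g` exists and is proper at every point: preimages of
compact sets are compact. -/
def ProperExpAll (g : MetricTensor n) : Prop :=
  ∀ x : En n, ∃ ex : En n → En n, IsExpAt g x ex ∧
    ∀ K : Set (En n), IsCompact K → IsCompact (ex ⁻¹' K)

/-- Second variation of the energy of `γ` on `[a,b]` along the variation field `V`
(using the global chart to form the variation `γ + s·V`). -/
def secondVar (g : MetricTensor n) (γ V : ℝ → En n) (a b : ℝ) : ℝ :=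
  iteratedDeriv 2 (fun s : ℝ => cenergy g (fun t => γ t + s • V t) a b) 0

/-- The Morse index of `γ` on `[a,b]`, as a critical point of the energy, is at most
`m`: every linear space of `C¹` variation fields vanishing at the endpoints on which the
second variation of the energy is negative definite has dimension at most `m`. -/
def MorseIndexLEOn (g : MetricTensor n) (γ : ℝ → En n) (a b : ℝ) (m : ℕ) : Prop :=
  ∀ W : Submodule ℝ (ℝ → En n),
    (∀ V ∈ W, ContDiff ℝ 1 V ∧ V a = 0 ∧ V b = 0) →
    (∀ V ∈ W, V ≠ 0 → secondVar g γ V a b < 0) →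
    Module.rank ℝ W ≤ (m : Cardinal)

end

section

set_option maxSynthPendingDepth 3

/-! ### A degree argument -/

/-- A family of functions `f s : E → ℝ` depending polynomially on `s`, with coefficients that are
continuous functions on `E`. -/
def PolyFam {E : Type*} [TopologicalSpace E] (f : ℝ → E → ℝ) : Prop :=
  ∃ q : Polynomial C(E, ℝ), ∀ s x, f s x = (q.eval (ContinuousMap.const E s)) x

section PolyFam
variable {E : Type*} [TopologicalSpace E]

theorem PolyFam.affine {a b : E → ℝ} (ha : Continuous a) (hb : Continuous b) :
    PolyFam (fun s x => a x + s * b x) := by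
  refine ⟨Polynomial.C ⟨a, ha⟩ + Polynomial.X * Polynomial.C ⟨b, hb⟩, fun s x => ?_⟩
  simp
  ring

theorem PolyFam.const (c : ℝ) : PolyFam (fun (_ : ℝ) (_ : E) => c) := by
  refine ⟨Polynomial.C (ContinuousMap.const E c), fun s x => ?_⟩
  simp

theorem PolyFam.add {f g : ℝ → E → ℝ} (hf : PolyFam f) (hg : PolyFam g) :
    PolyFam (fun s x => f s x + g s x) := by
  obtain ⟨p, hp⟩ := hf
  obtain ⟨q, hq⟩ := hg
  exact ⟨p + q, fun s x => by simp [hp, hq]⟩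

theorem PolyFam.mul {f g : ℝ → E → ℝ} (hf : PolyFam f) (hg : PolyFam g) :
    PolyFam (fun s x => f s x * g s x) := by
  obtain ⟨p, hp⟩ := hf
  obtain ⟨q, hq⟩ := hg
  exact ⟨p * q, fun s x => by simp [hp, hq]⟩

theorem PolyFam.pow {f : ℝ → E → ℝ} (hf : PolyFam f) (N : ℕ) :
    PolyFam (fun s x => f s x ^ N) := by
  obtain ⟨p, hp⟩ := hf
  exact ⟨p ^ N, fun s x => by simp [hp]⟩

theorem PolyFam.sum {ι : Type*} (S : Finset ι) {f : ι → ℝ → E → ℝ} (hf : ∀ i, PolyFam (f i)) :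
    PolyFam (fun s x => ∑ i ∈ S, f i s x) := by
  choose p hp using hf
  refine ⟨∑ i ∈ S, p i, fun s x => ?_⟩
  simp [hp, Polynomial.eval_finsetSum]

theorem PolyFam.prod {ι : Type*} (S : Finset ι) {f : ι → ℝ → E → ℝ} (hf : ∀ i, PolyFam (f i)) :
    PolyFam (fun s x => ∏ i ∈ S, f i s x) := by
  choose p hp using hf
  refine ⟨∏ i ∈ S, p i, fun s x => ?_⟩
  simp [hp, Polynomial.eval_prod]

theorem PolyFam.det {m : ℕ} {f : Fin m → Fin m → ℝ → E → ℝ} (hf : ∀ i j, PolyFam (f i j)) :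
    PolyFam (fun s x => (Matrix.of fun i j => f i j s x).det) := by
  simp only [Matrix.det_apply', Matrix.of_apply]
  exact PolyFam.sum _ fun σ => (PolyFam.const _).mul (PolyFam.prod _ fun i => hf _ _)

theorem PolyFam.integral [MeasurableSpace E] [OpensMeasurableSpace E] [T2Space E]
    (μ : MeasureTheory.Measure E)
    [MeasureTheory.IsFiniteMeasureOnCompacts μ] {K : Set E} (hK : IsCompact K) {f : ℝ → E → ℝ}
    (hf : PolyFam f) : ∃ Q : Polynomial ℝ, ∀ s, ∫ x in K, f s x ∂μ = Q.eval s := by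
  obtain ⟨q, hq⟩ := hf
  refine ⟨∑ k ∈ Finset.range (q.natDegree + 1),
    Polynomial.C (∫ x in K, q.coeff k x ∂μ) * Polynomial.X ^ k, fun s => ?_⟩
  rw [Polynomial.eval_finsetSum]
  simp only [hq, Polynomial.eval_eq_sum_range (p := q)]
  simp only [Polynomial.eval_mul, Polynomial.eval_C, Polynomial.eval_pow, Polynomial.eval_X]
  simp only [ContinuousMap.coe_sum, Finset.sum_apply, ContinuousMap.coe_mul, Pi.mul_apply,
    ContinuousMap.coe_pow, Pi.pow_apply, ContinuousMap.const_apply]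
  rw [MeasureTheory.integral_finsetSum]
  · refine Finset.sum_congr rfl fun k _ => ?_
    rw [MeasureTheory.integral_mul_const]
  · intro k _
    exact ((q.coeff k).continuous.mul continuous_const).continuousOn.integrableOn_compact hK
end PolyFam

/-- Integrals of a polynomial test function pulled back along `T + s • h` depend polynomially
on `s`. -/
theorem polyFam_pullback {n : ℕ} (T : En n →L[ℝ] En n) {h : En n → En n} (hh : ContDiff ℝ 1 h)
    (M : ℝ) (N : ℕ) :
    PolyFam (fun s x => (T + s • fderiv ℝ h x).det *
      (1 - ‖T x + s • h x‖ ^ 2 / M ^ 2) ^ N) := by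
  have hc : Continuous (fderiv ℝ h) := hh.continuous_fderiv (by norm_num)
  have hh0 := hh.continuous
  refine PolyFam.mul ?_ (PolyFam.pow ?_ N)
  · have : ∀ s x, (T + s • fderiv ℝ h x).det = (Matrix.of fun i j =>
        (T (EuclideanSpace.single j 1)) i +
          s * (fderiv ℝ h x (EuclideanSpace.single j 1)) i).det := by
      intro s x
      rw [ContinuousLinearMap.det, ← LinearMap.det_toMatrix (EuclideanSpace.basisFun (Fin n) ℝ).toBasis]
      congr 1
    simp only [this]
    refine PolyFam.det fun i j => PolyFam.affine continuous_const ?_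
    fun_prop
  · have : ∀ s x, 1 - ‖T x + s • h x‖ ^ 2 / M ^ 2 =
        1 + ∑ i, (((T x) i + s * (h x) i) * (-1 / M ^ 2)) * ((T x) i + s * (h x) i) := by
      intro s x
      rw [EuclideanSpace.norm_sq_eq, Finset.sum_div, sub_eq_add_neg, ← Finset.sum_neg_distrib]
      congr 1
      refine Finset.sum_congr rfl fun i _ => ?_
      simp
      ring
    simp only [this]
    have key : ∀ i, PolyFam (fun s (x : En n) => (T x) i + s * (h x) i) := fun i =>
      PolyFam.affine (by fun_prop) (by fun_prop)
    exact (PolyFam.const 1).add (PolyFam.sum _ fun i => ((key i).mul (PolyFam.const _)).mul (key i))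

/-- A small Lipschitz perturbation of a linear isometry, supported in the ball of radius `3`, is
injective and maps that ball onto itself. -/
theorem bijOn_perturb {n : ℕ} (T : En n ≃ₗᵢ[ℝ] En n) {h : En n → En n} {C : NNReal}
    (hC : LipschitzWith C h) (h0 : ∀ x, 3 ≤ ‖x‖ → h x = 0) {s : ℝ} (hs : 0 ≤ s)
    (hsC : s * C < 1) :
    Function.Injective (fun x => T x + s • h x) ∧
      (fun x => T x + s • h x) '' Metric.closedBall 0 3 = Metric.closedBall 0 3 := by
  have hinj : Function.Injective (fun x => T x + s • h x) := by
    intro x y hxy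
    by_contra hne
    have hpos : 0 < ‖x - y‖ := norm_pos_iff.2 (sub_ne_zero.2 hne)
    have h1 : T (x - y) = s • (h y - h x) := by
      have : T x + s • h x = T y + s • h y := hxy
      rw [map_sub, smul_sub, sub_eq_sub_iff_add_eq_add, this, add_comm]
    have h2 : ‖x - y‖ ≤ s * (C * ‖x - y‖) := by
      calc ‖x - y‖ = ‖T (x - y)‖ := (T.norm_map _).symm
        _ = s * ‖h y - h x‖ := by rw [h1, norm_smul, Real.norm_of_nonneg hs]
        _ ≤ s * (C * ‖y - x‖) := by gcongr; exact hC.norm_sub_le y x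
        _ = s * (C * ‖x - y‖) := by rw [norm_sub_rev]
    nlinarith
  have hsurj : Function.Surjective (fun x => T x + s • h x) := by
    intro y
    have hcon : ContractingWith ⟨s * C, by positivity⟩ (fun x => T.symm (y - s • h x)) := by
      refine ⟨by exact_mod_cast hsC, LipschitzWith.of_dist_le_mul fun u v => ?_⟩
      rw [T.symm.dist_map, dist_eq_norm]
      have : y - s • h u - (y - s • h v) = s • (h v - h u) := by rw [smul_sub]; abel
      rw [this, norm_smul, Real.norm_of_nonneg hs, dist_eq_norm]
      calc s * ‖h v - h u‖ ≤ s * (C * ‖v - u‖) := by gcongr; exact hC.norm_sub_le v u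
        _ = s * C * ‖u - v‖ := by rw [norm_sub_rev, mul_assoc]
    refine ⟨hcon.fixedPoint, ?_⟩
    have := hcon.fixedPoint_isFixedPt
    have h3 : T.symm (y - s • h hcon.fixedPoint) = hcon.fixedPoint := this
    have h4 : T hcon.fixedPoint = y - s • h hcon.fixedPoint := by
      conv_lhs => rw [← h3]
      simp
    simp only [h4]; abel
  refine ⟨hinj, ?_⟩
  ext y
  simp only [mem_image, Metric.mem_closedBall, dist_zero_right]
  constructor
  · rintro ⟨x, hx, rfl⟩
    by_contra hy
    push Not at hy
    -- a point outside the ball is already the image of a point outside the ball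
    have h5 : (fun x => T x + s • h x) (T.symm (T x + s • h x)) = T x + s • h x := by
      simp only
      rw [h0 (T.symm (T x + s • h x)) (by rw [T.symm.norm_map]; exact hy.le)]
      simp
    have h6 := hinj h5
    rw [← h6, T.symm.norm_map] at hx
    linarith
  · intro hy
    obtain ⟨x, hx⟩ := hsurj y
    refine ⟨x, ?_, hx⟩
    by_contra hx'
    push Not at hx'
    simp only [h0 x hx'.le, smul_zero, add_zero] at hx
    rw [← hx, T.norm_map] at hy
    linarith

/-- A determinant that is `-1` stays negative along a small perturbation, because it cannot vanish. -/
theorem det_perturb_neg {n : ℕ} (T : En n ≃ₗᵢ[ℝ] En n)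
    (hT : ((T : En n ≃L[ℝ] En n) : En n →L[ℝ] En n).det = -1) {B : En n →L[ℝ] En n} {C : ℝ}
    (hB : ‖B‖ ≤ C) {s : ℝ} (hs : 0 ≤ s) (hsC : s * C < 1) :
    (((T : En n ≃L[ℝ] En n) : En n →L[ℝ] En n) + s • B).det < 0 := by
  have hne : ∀ r ∈ Icc 0 s, (((T : En n ≃L[ℝ] En n) : En n →L[ℝ] En n) + r • B).det ≠ 0 := by
    intro r hr hdet
    have hC0 : 0 ≤ C := (norm_nonneg _).trans hB
    have : (((((T : En n ≃L[ℝ] En n) : En n →L[ℝ] En n) + r • B : En n →L[ℝ] En n)) :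
        En n →ₗ[ℝ] En n).ker ≠ ⊥ := by
      intro hk
      have := (LinearMap.isUnit_iff_ker_eq_bot _).2 hk
      exact (LinearMap.isUnit_iff_isUnit_det _ |>.1 this).ne_zero hdet
    obtain ⟨v, hv, hv0⟩ := (Submodule.ne_bot_iff _).1 this
    have hv' : T v = - (r • B v) := by
      have : T v + r • B v = 0 := by simpa using hv
      exact eq_neg_of_add_eq_zero_left this
    have hpos := norm_pos_iff.2 hv0
    have : ‖v‖ ≤ r * (C * ‖v‖) := by
      calc ‖v‖ = ‖T v‖ := (T.norm_map v).symm
        _ = r * ‖B v‖ := by rw [hv', norm_neg, norm_smul, Real.norm_of_nonneg hr.1]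
        _ ≤ r * (C * ‖v‖) := by
          have := hr.1
          gcongr
          exact B.le_of_opNorm_le hB v
    have : r * C ≤ s * C := by gcongr; exact hr.2
    nlinarith
  by_contra hcon
  push Not at hcon
  have hcont : ContinuousOn
      (fun r : ℝ => (((T : En n ≃L[ℝ] En n) : En n →L[ℝ] En n) + r • B).det) (Icc 0 s) := by
    exact (ContinuousLinearMap.continuous_det (𝕜 := ℝ) (E := En n)).comp_continuousOn
      (by fun_prop)
  have hm : (0 : ℝ) ∈ Icc
      ((((T : En n ≃L[ℝ] En n) : En n →L[ℝ] En n) + (0 : ℝ) • B).det)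
      ((((T : En n ≃L[ℝ] En n) : En n →L[ℝ] En n) + s • B).det) := by
    refine ⟨?_, hcon⟩
    have h0 : ((T : En n ≃L[ℝ] En n) : En n →L[ℝ] En n) + (0 : ℝ) • B =
        ((T : En n ≃L[ℝ] En n) : En n →L[ℝ] En n) := by ext; simp
    rw [h0, hT]; norm_num
  obtain ⟨r, hr, hr0⟩ := intermediate_value_Icc hs hcont hm
  exact hne r hr hr0

/-- Change of variables for small `s`, then the identity theorem for polynomials: the integral of
the test function against the Jacobian of `T + h` is the one for `T`. -/
theorem integral_pullback {n : ℕ} (T : En n ≃ₗᵢ[ℝ] En n)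
    (hT : ((T : En n ≃L[ℝ] En n) : En n →L[ℝ] En n).det = -1) {h : En n → En n}
    (hh : ContDiff ℝ 1 h) (h0 : ∀ x, 3 ≤ ‖x‖ → h x = 0) (M : ℝ) (N : ℕ) :
    ∫ x in Metric.closedBall (0 : En n) 3,
      (((T : En n ≃L[ℝ] En n) : En n →L[ℝ] En n) + fderiv ℝ h x).det *
        (1 - ‖T x + h x‖ ^ 2 / M ^ 2) ^ N =
    - ∫ y in Metric.closedBall (0 : En n) 3, (1 - ‖y‖ ^ 2 / M ^ 2) ^ N := by
  have hcs : HasCompactSupport h := HasCompactSupport.intro (isCompact_closedBall (0 : En n) 3)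
    fun x hx => h0 x (by simpa using (not_le.1 (by simpa using hx)).le)
  obtain ⟨C, hC⟩ := hh.lipschitzWith_of_hasCompactSupport hcs (by norm_num)
  obtain ⟨Q, hQ⟩ := (polyFam_pullback ((T : En n ≃L[ℝ] En n) : En n →L[ℝ] En n) hh M N).integral
    MeasureTheory.volume (isCompact_closedBall (0 : En n) 3)
  have hsmall : ∀ s : ℝ, 0 ≤ s → s * C < 1 →
      Q.eval s = - ∫ y in Metric.closedBall (0 : En n) 3, (1 - ‖y‖ ^ 2 / M ^ 2) ^ N := by
    intro s hs hsC
    obtain ⟨hinj, him⟩ := bijOn_perturb T hC h0 hs hsC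
    have hder : ∀ x ∈ Metric.closedBall (0 : En n) 3,
        HasFDerivWithinAt (fun x => T x + s • h x)
          (((T : En n ≃L[ℝ] En n) : En n →L[ℝ] En n) + s • fderiv ℝ h x)
          (Metric.closedBall (0 : En n) 3) x := by
      intro x _
      have h1 : HasFDerivAt h (fderiv ℝ h x) x :=
        ((hh.differentiable (by norm_num)) x).hasFDerivAt
      have h2 := ((T : En n ≃L[ℝ] En n) : En n →L[ℝ] En n).hasFDerivAt (x := x)
      exact (h2.add (h1.const_smul s)).hasFDerivWithinAt
    have hcv := MeasureTheory.integral_image_eq_integral_abs_det_fderiv_smul MeasureTheory.volume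
      Metric.isClosed_closedBall.measurableSet hder hinj.injOn
      (fun y : En n => (1 - ‖y‖ ^ 2 / M ^ 2) ^ N)
    rw [him] at hcv
    rw [← hQ, hcv, ← MeasureTheory.integral_neg]
    refine MeasureTheory.integral_congr_ae (Eventually.of_forall fun x => ?_)
    have hneg := det_perturb_neg T hT (B := fderiv ℝ h x) (C := C)
      (norm_fderiv_le_of_lipschitz ℝ hC) hs hsC
    simp only [abs_of_neg hneg, smul_eq_mul]
    simp
  have hconst : Q = Polynomial.C
      (- ∫ y in Metric.closedBall (0 : En n) 3, (1 - ‖y‖ ^ 2 / M ^ 2) ^ N) := by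
    refine Polynomial.eq_of_infinite_eval_eq _ _ ?_
    refine (Set.Icc_infinite (show (0 : ℝ) < 1 / (C + 1) by positivity)).mono fun s hs => ?_
    have : s * C < 1 := by
      have h1 : s * C ≤ 1 / (C + 1) * C := by gcongr; exact hs.2
      have h2 : 1 / ((C : ℝ) + 1) * C < 1 := by
        rw [one_div, inv_mul_lt_iff₀ (by positivity)]
        simp
      linarith
    simpa using hsmall s hs.1 this
  have := hQ 1
  rw [hconst, Polynomial.eval_C] at this
  simpa using this

/-- Degree obstruction, smooth version: a map equal to an orientation reversing isometry near
infinity and to the identity near `0` has a zero other than `0`. -/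
theorem smooth_degree {n : ℕ} (T : En n ≃ₗᵢ[ℝ] En n)
    (hT : ((T : En n ≃L[ℝ] En n) : En n →L[ℝ] En n).det = -1) {h : En n → En n}
    (hh : ContDiff ℝ 1 h) (h0 : ∀ x, 3 ≤ ‖x‖ → h x = 0)
    (h1 : ∀ x, ‖x‖ ≤ 1 / 2 → h x = x - T x) (h2 : ∀ x, 1 / 2 ≤ ‖x‖ → T x + h x ≠ 0) : False := by
  set K := Metric.closedBall (0 : En n) 3 with hK
  have hKc : IsCompact K := isCompact_closedBall _ _
  have hcF : Continuous (fun x => T x + h x) := T.continuous.add hh.continuous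
  obtain ⟨M₀, hM₀⟩ := hKc.exists_bound_of_continuousOn hcF.continuousOn
  set M := max M₀ 4 with hM
  have hM4 : 4 ≤ M := le_max_right _ _
  have hFM : ∀ x ∈ K, ‖T x + h x‖ ≤ M := fun x hx => (hM₀ x hx).trans (le_max_left _ _)
  -- a positive lower bound for the map on the annulus
  obtain ⟨m, hm0, hm⟩ : ∃ m > 0, ∀ x ∈ K, 1 / 2 ≤ ‖x‖ → m ≤ ‖T x + h x‖ := by
    have hc : IsCompact (K ∩ {x | 1 / 2 ≤ ‖x‖}) :=
      hKc.inter_right (isClosed_le continuous_const continuous_norm)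
    rcases (K ∩ {x | 1 / 2 ≤ ‖x‖}).eq_empty_or_nonempty with he | hne
    · refine ⟨1, one_pos, fun x hx hx' => ?_⟩
      have : x ∈ K ∩ {x | 1 / 2 ≤ ‖x‖} := ⟨hx, hx'⟩
      rw [he] at this
      exact this.elim
    · obtain ⟨x₀, hx₀, hmin⟩ := hc.exists_isMinOn hne hcF.norm.continuousOn
      exact ⟨‖T x₀ + h x₀‖, norm_pos_iff.2 (h2 x₀ hx₀.2), fun x hx hx' => hmin ⟨hx, hx'⟩⟩
  have hcd : Continuous fun x =>
      (((T : En n ≃L[ℝ] En n) : En n →L[ℝ] En n) + fderiv ℝ h x).det := by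
    have := hh.continuous_fderiv (by norm_num)
    exact (ContinuousLinearMap.continuous_det (𝕜 := ℝ) (E := En n)).comp (by fun_prop)
  obtain ⟨D, hD⟩ := hKc.exists_bound_of_continuousOn hcd.continuousOn
  set δ := min (m / 2) (1 / 4) with hδ
  have hδ0 : 0 < δ := by positivity
  have hδm : δ < m := (min_le_left _ _).trans_lt (by linarith)
  have hδ4 : δ ≤ 1 / 4 := min_le_right _ _
  set U := Metric.ball (0 : En n) (1 / 2) with hU
  set V := Metric.closedBall (0 : En n) δ with hV
  have hVU : V ⊆ U := fun x hx => by
    simp only [hV, Metric.mem_closedBall, dist_zero_right] at hx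
    simp only [hU, Metric.mem_ball, dist_zero_right]; linarith
  have hUK : U ⊆ K := fun x hx => by
    simp only [hU, Metric.mem_ball, dist_zero_right] at hx
    simp only [hK, Metric.mem_closedBall, dist_zero_right]; linarith
  set q := 1 - m ^ 2 / M ^ 2 with hq
  set p := 1 - δ ^ 2 / M ^ 2 with hp
  have hM0 : 0 < M := by linarith
  set volK := MeasureTheory.volume.real K
  set volV := MeasureTheory.volume.real V
  have hvolV : 0 < volV := by
    refine ENNReal.toReal_pos (Metric.measure_closedBall_pos _ _ hδ0).ne' ?_
    exact (isCompact_closedBall _ _).measure_lt_top.ne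
  have hp0 : 0 < p := by
    have : δ ^ 2 / M ^ 2 < 1 := by
      rw [div_lt_one (by positivity)]
      exact pow_lt_pow_left₀ (by linarith) hδ0.le (by norm_num)
    linarith
  have hqp : q < p := by
    have : δ ^ 2 / M ^ 2 < m ^ 2 / M ^ 2 := by gcongr
    linarith
  -- on `K` the test function is nonnegative, and at most `q ^ N` on the annulus
  have hineq : ∀ N : ℕ, p ^ N * volV ≤ D * max q 0 ^ N * volK := by
    intro N
    have hIntegral := integral_pullback T hT hh h0 M N
    have hrhs : 0 ≤ ∫ y in K, (1 - ‖y‖ ^ 2 / M ^ 2) ^ N := by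
      refine MeasureTheory.setIntegral_nonneg Metric.isClosed_closedBall.measurableSet
        fun y hy => ?_
      have hy3 : ‖y‖ ≤ 3 := by simpa [hK] using hy
      have : ‖y‖ ^ 2 / M ^ 2 ≤ 1 := by
        rw [div_le_one (by positivity)]
        exact pow_le_pow_left₀ (norm_nonneg _) (by linarith) 2
      exact pow_nonneg (by linarith) _
    set f : En n → ℝ := fun x =>
      (((T : En n ≃L[ℝ] En n) : En n →L[ℝ] En n) + fderiv ℝ h x).det *
        (1 - ‖T x + h x‖ ^ 2 / M ^ 2) ^ N with hf
    have hfc : Continuous f := by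
      have h2 : Continuous fun x => (1 - ‖T x + h x‖ ^ 2 / M ^ 2) ^ N := by fun_prop
      exact hcd.mul h2
    have hfi : MeasureTheory.IntegrableOn f K := hfc.continuousOn.integrableOn_compact hKc
    have hsplit : ∫ x in K, f x = (∫ x in U, f x) + ∫ x in K \ U, f x := by
      rw [← MeasureTheory.integral_inter_add_sdiff Metric.isOpen_ball.measurableSet hfi,
        inter_eq_self_of_subset_right hUK]
    have hfU : ∀ x ∈ U, f x = (1 - ‖x‖ ^ 2 / M ^ 2) ^ N := by
      intro x hx
      have hx' : ‖x‖ < 1 / 2 := by simpa [hU] using hx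
      have hd : fderiv ℝ h x =
          ContinuousLinearMap.id ℝ (En n) - ((T : En n ≃L[ℝ] En n) : En n →L[ℝ] En n) := by
        have he : h =ᶠ[nhds x] fun y => y - T y := by
          filter_upwards [Metric.isOpen_ball.mem_nhds hx] with y hy
          exact h1 y (by simpa [hU] using (le_of_lt (by simpa [hU] using hy : ‖y‖ < 1/2)))
        rw [he.fderiv_eq]
        exact ((hasFDerivAt_id x).sub
          (((T : En n ≃L[ℝ] En n) : En n →L[ℝ] En n).hasFDerivAt (x := x))).fderiv
      simp only [hf, hd, h1 x hx'.le]
      simp [ContinuousLinearMap.det]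
    have hnn : ∀ x ∈ U, 0 ≤ (1 - ‖x‖ ^ 2 / M ^ 2) ^ N := by
      intro x hx
      have hx' : ‖x‖ < 1 / 2 := by simpa [hU] using hx
      have : ‖x‖ ^ 2 / M ^ 2 ≤ 1 := by
        rw [div_le_one (by positivity)]
        exact pow_le_pow_left₀ (norm_nonneg _) (by linarith) 2
      exact pow_nonneg (by linarith) _
    have hlow : p ^ N * volV ≤ ∫ x in U, f x := by
      calc p ^ N * volV = ∫ x in V, p ^ N := by
            rw [MeasureTheory.setIntegral_const, smul_eq_mul, mul_comm]
        _ ≤ ∫ x in V, f x := by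
            refine MeasureTheory.setIntegral_mono_on ?_ (hfi.mono_set (hVU.trans hUK))
              Metric.isClosed_closedBall.measurableSet fun x hx => ?_
            · exact (continuous_const.continuousOn.integrableOn_compact (isCompact_closedBall _ _))
            · rw [hfU x (hVU hx)]
              have : ‖x‖ ≤ δ := by simpa [hV] using hx
              refine pow_le_pow_left₀ hp0.le ?_ N
              simp only [hp]
              gcongr
        _ ≤ ∫ x in U, f x := by
            refine MeasureTheory.setIntegral_mono_set (hfi.mono_set hUK) ?_ hVU.eventuallyLE
            refine (MeasureTheory.ae_restrict_iff' Metric.isOpen_ball.measurableSet).2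
              (Eventually.of_forall fun x hx => ?_)
            rw [hfU x hx]
            exact hnn x hx
    have hD0 : 0 ≤ D := (norm_nonneg _).trans (hD 0 (by simp [hK]))
    have hup : ‖∫ x in K \ U, f x‖ ≤ D * max q 0 ^ N * volK := by
      have hle : ∀ x ∈ K \ U, ‖f x‖ ≤ D * max q 0 ^ N := by
        rintro x ⟨hxK, hxU⟩
        have hx' : 1 / 2 ≤ ‖x‖ := by simpa [hU] using hxU
        have hA := hm x hxK hx'
        have hB := hFM x hxK
        have hnon : 0 ≤ 1 - ‖T x + h x‖ ^ 2 / M ^ 2 := by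
          have : ‖T x + h x‖ ^ 2 / M ^ 2 ≤ 1 := by
            rw [div_le_one (by positivity)]
            exact pow_le_pow_left₀ (norm_nonneg _) hB 2
          linarith
        rw [hf, norm_mul, norm_pow, Real.norm_of_nonneg hnon]
        have := hD x hxK
        gcongr
        refine le_trans ?_ (le_max_left _ _)
        simp only [hq]
        gcongr
      have hfin : MeasureTheory.volume (K \ U) < ⊤ :=
        (MeasureTheory.measure_mono sdiff_subset).trans_lt hKc.measure_lt_top
      calc ‖∫ x in K \ U, f x‖ ≤ D * max q 0 ^ N * MeasureTheory.volume.real (K \ U) :=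
            MeasureTheory.norm_setIntegral_le_of_norm_le_const hfin hle
        _ ≤ _ := by
            gcongr
            exact MeasureTheory.measureReal_mono sdiff_subset hKc.measure_lt_top.ne
    have h3 := neg_abs_le (∫ x in K \ U, f x)
    rw [Real.norm_eq_abs] at hup
    have h4 : (∫ x in K, f x) = - ∫ y in K, (1 - ‖y‖ ^ 2 / M ^ 2) ^ N := hIntegral
    linarith
  -- compare exponential rates
  have hlim : Tendsto (fun N : ℕ => D * (max q 0 / p) ^ N * volK) atTop (nhds (D * 0 * volK)) := by
    refine ((tendsto_pow_atTop_nhds_zero_of_lt_one (by positivity) ?_).const_mul D).mul_const _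
    rw [div_lt_one hp0]
    exact max_lt hqp hp0
  have hge : ∀ N : ℕ, volV ≤ D * (max q 0 / p) ^ N * volK := by
    intro N
    have := hineq N
    have hpN : 0 < p ^ N := by positivity
    rw [div_pow]
    have h5 : D * (max q 0 ^ N / p ^ N) * volK = (D * max q 0 ^ N * volK) / p ^ N := by ring
    rw [h5, le_div_iff₀ hpN]
    linarith
  have := ge_of_tendsto' hlim hge
  simp at this
  linarith

/-- The continuous version of `smooth_degree`, obtained by smoothing away from the regions where the
map is linear. -/
theorem continuous_degree {n : ℕ} (T : En n ≃ₗᵢ[ℝ] En n)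
    (hT : ((T : En n ≃L[ℝ] En n) : En n →L[ℝ] En n).det = -1) {h : En n → En n}
    (hh : Continuous h) (h0 : ∀ x, 2 ≤ ‖x‖ → h x = 0)
    (h1 : ∀ x, ‖x‖ ≤ 1 → h x = x - T x) (h2 : ∀ x, x ≠ 0 → T x + h x ≠ 0) : False := by
  have hcF : Continuous (fun x => T x + h x) := T.continuous.add hh
  obtain ⟨m, hm0, hm⟩ : ∃ m > 0, ∀ x, 1 / 2 ≤ ‖x‖ → m ≤ ‖T x + h x‖ := by
    have hc : IsCompact (Metric.closedBall (0 : En n) 2 ∩ {x | 1 / 2 ≤ ‖x‖}) :=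
      (isCompact_closedBall _ _).inter_right (isClosed_le continuous_const continuous_norm)
    have hbig : ∀ x, 2 ≤ ‖x‖ → 2 ≤ ‖T x + h x‖ := by
      intro x hx
      rw [h0 x hx, add_zero, T.norm_map]; exact hx
    rcases (Metric.closedBall (0 : En n) 2 ∩ {x | 1 / 2 ≤ ‖x‖}).eq_empty_or_nonempty with he | hne
    · refine ⟨2, two_pos, fun x hx' => ?_⟩
      rcases le_total 2 ‖x‖ with hx | hx
      · exact hbig x hx
      · have : x ∈ Metric.closedBall (0 : En n) 2 ∩ {x | 1 / 2 ≤ ‖x‖} := ⟨by simpa using hx, hx'⟩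
        rw [he] at this
        exact this.elim
    · obtain ⟨x₀, hx₀, hmin⟩ := hc.exists_isMinOn hne hcF.norm.continuousOn
      have hx₀' : (1 : ℝ) / 2 ≤ ‖x₀‖ := hx₀.2
      have hpos : 0 < ‖T x₀ + h x₀‖ := norm_pos_iff.2 (h2 x₀ (norm_pos_iff.1 (by linarith)))
      refine ⟨min ‖T x₀ + h x₀‖ 2, lt_min hpos two_pos, fun x hx' => ?_⟩
      rcases le_total 2 ‖x‖ with hx | hx
      · exact (min_le_right _ _).trans (hbig x hx)
      · exact (min_le_left _ _).trans (hmin ⟨by simpa using hx, hx'⟩)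
  have hcs : HasCompactSupport h := HasCompactSupport.intro (isCompact_closedBall (0 : En n) 2)
    fun x hx => h0 x (by simpa using (not_le.1 (by simpa using hx)).le)
  obtain ⟨k, hk, hkd⟩ := (hcs.uniformContinuous_of_continuous hh).exists_contDiff_dist_le
    (half_pos hm0)
  let χ₀ : ContDiffBump (0 : En n) := ⟨1 / 2, 1, by norm_num, by norm_num⟩
  let χ₁ : ContDiffBump (0 : En n) := ⟨2, 3, by norm_num, by norm_num⟩
  have hχ₀in : ∀ x : En n, ‖x‖ ≤ 1 / 2 → χ₀ x = 1 := fun x hx =>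
    χ₀.one_of_mem_closedBall (by simpa [χ₀] using hx)
  have hχ₀out : ∀ x : En n, 1 ≤ ‖x‖ → χ₀ x = 0 := fun x hx =>
    χ₀.zero_of_le_dist (by simpa [χ₀] using hx)
  have hχ₁in : ∀ x : En n, ‖x‖ ≤ 2 → χ₁ x = 1 := fun x hx =>
    χ₁.one_of_mem_closedBall (by simpa [χ₁] using hx)
  have hχ₁out : ∀ x : En n, 3 ≤ ‖x‖ → χ₁ x = 0 := fun x hx =>
    χ₁.zero_of_le_dist (by simpa [χ₁] using hx)
  set w : En n → En n := fun x => χ₀ x • (x - T x) + (χ₁ x - χ₀ x) • k x with hw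
  have hdist : ∀ x, ‖w x - h x‖ ≤ m / 2 := by
    intro x
    have e1 : χ₀ x • (x - T x) = χ₀ x • h x := by
      rcases le_total ‖x‖ 1 with hx | hx
      · rw [h1 x hx]
      · rw [hχ₀out x hx, zero_smul, zero_smul]
    have e2 : (χ₁ x - 1) • h x = 0 := by
      rcases le_total ‖x‖ 2 with hx | hx
      · rw [hχ₁in x hx]; simp
      · rw [h0 x hx, smul_zero]
    have e3 : w x - h x = (χ₁ x - χ₀ x) • (k x - h x) := by
      have : w x - h x = (χ₁ x - χ₀ x) • (k x - h x) + (χ₁ x - 1) • h x := by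
        simp only [hw, e1]; module
      rw [this, e2, add_zero]
    have e4 : |χ₁ x - χ₀ x| ≤ 1 := by
      have := χ₀.nonneg' x
      have := χ₁.nonneg' x
      have := χ₀.le_one (x := x)
      have := χ₁.le_one (x := x)
      rw [abs_le]; constructor <;> linarith
    rw [e3, norm_smul, Real.norm_eq_abs, ← dist_eq_norm]
    have := (hkd x).le
    have h0' : 0 ≤ dist (k x) (h x) := dist_nonneg
    nlinarith [abs_nonneg (χ₁ x - χ₀ x)]
  refine smooth_degree T hT (h := w) ?_ ?_ ?_ ?_
  · have hk1 : ContDiff ℝ 1 k := hk.of_le (by exact_mod_cast le_top)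
    have a1 : ContDiff ℝ 1 (χ₀ : En n → ℝ) := χ₀.contDiff
    have a2 : ContDiff ℝ 1 (χ₁ : En n → ℝ) := χ₁.contDiff
    have a3 : ContDiff ℝ 1 (T : En n → En n) := T.contDiff
    exact (a1.smul (contDiff_id.sub a3)).add ((a2.sub a1).smul hk1)
  · intro x hx
    simp only [hw, hχ₁out x hx, hχ₀out x (by linarith)]; simp
  · intro x hx
    simp only [hw, hχ₁in x (by linarith), hχ₀in x hx]; simp
  · intro x hx hzero
    have a := hm x hx
    have b := hdist x
    have : T x + h x = - (w x - h x) := by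
      rw [← sub_eq_zero, ← hzero]; abel
    rw [this, norm_neg] at a
    linarith

/-- The identity of the unit sphere is not homotopic, in the punctured space, to an isometry of
determinant `-1`. -/
theorem not_homotopic_reflection {n : ℕ} (T : En n ≃ₗᵢ[ℝ] En n)
    (hT : ((T : En n ≃L[ℝ] En n) : En n →L[ℝ] En n).det = -1)
    (f₀ f₁ : C(Metric.sphere (0 : En n) 1, {x : En n // x ≠ 0}))
    (hf₀ : ∀ x, (f₀ x : En n) = x) (hf₁ : ∀ x, (f₁ x : En n) = T x) :
    ¬ f₀.Homotopic f₁ := by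
  rintro ⟨G⟩
  let nrm : {x : En n // x ≠ 0} → Metric.sphere (0 : En n) 1 := fun x =>
    ⟨‖(x : En n)‖⁻¹ • (x : En n), by
      simp [norm_smul, inv_mul_cancel₀ (norm_ne_zero_iff.2 x.2)]⟩
  have hnrm : Continuous nrm := by
    refine Continuous.subtype_mk ?_ _
    have h1 : Continuous fun x : {x : En n // x ≠ 0} => ‖(x : En n)‖ :=
      continuous_norm.comp continuous_subtype_val
    exact (h1.inv₀ fun x => norm_ne_zero_iff.2 x.2).smul continuous_subtype_val
  let k : {x : En n // x ≠ 0} → En n := fun x =>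
    ‖(x : En n)‖ • (G (Set.projIcc 0 1 zero_le_one (‖(x : En n)‖ - 1), nrm x) : En n)
  have hk : Continuous k := by
    refine Continuous.smul (continuous_norm.comp continuous_subtype_val) ?_
    refine continuous_subtype_val.comp (G.continuous.comp (Continuous.prodMk ?_ hnrm))
    exact continuous_projIcc.comp ((continuous_norm.comp continuous_subtype_val).sub
      continuous_const)
  have hksmall : ∀ x : {x : En n // x ≠ 0}, ‖(x : En n)‖ ≤ 1 → k x = x := by
    intro x hx
    have e : Set.projIcc (0 : ℝ) 1 zero_le_one (‖(x : En n)‖ - 1) = 0 :=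
      Set.projIcc_of_le_left _ (by linarith)
    simp only [k, e, ContinuousMap.Homotopy.apply_zero, hf₀, nrm]
    rw [smul_smul, mul_inv_cancel₀ (norm_ne_zero_iff.2 x.2), one_smul]
  have hkbig : ∀ x : {x : En n // x ≠ 0}, 2 ≤ ‖(x : En n)‖ → k x = T x := by
    intro x hx
    have e : Set.projIcc (0 : ℝ) 1 zero_le_one (‖(x : En n)‖ - 1) = 1 :=
      Set.projIcc_of_right_le _ (by linarith)
    simp only [k, e, ContinuousMap.Homotopy.apply_one, hf₁, nrm]
    rw [map_smul, smul_smul, mul_inv_cancel₀ (norm_ne_zero_iff.2 x.2), one_smul]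
  have hkne : ∀ x : {x : En n // x ≠ 0}, k x ≠ 0 := fun x =>
    smul_ne_zero (norm_ne_zero_iff.2 x.2) (G _).2
  classical
  let h : En n → En n := fun x => if hx : x ≠ 0 then k ⟨x, hx⟩ - T x else 0
  have hval : ∀ x (hx : x ≠ 0), h x = k ⟨x, hx⟩ - T x := fun x hx => by simp [h, hx]
  have hsmall : ∀ x, ‖x‖ ≤ 1 → h x = x - T x := by
    intro x hx
    by_cases hx0 : x = 0
    · simp [h, hx0]
    · rw [hval x hx0, hksmall ⟨x, hx0⟩ hx]
  refine continuous_degree T hT (h := h) ?_ ?_ hsmall ?_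
  · rw [continuous_iff_continuousAt]
    intro x
    by_cases hx0 : x = 0
    · have : h =ᶠ[nhds x] fun y => y - T y := by
        rw [hx0]
        filter_upwards [Metric.ball_mem_nhds (0 : En n) one_pos] with y hy
        exact hsmall y (by simpa using (le_of_lt (by simpa using hy : ‖y‖ < 1)))
      exact (ContinuousAt.congr (continuous_id.sub T.continuous).continuousAt this.symm)
    · have hon : ContinuousOn h {x | x ≠ 0} := by
        rw [continuousOn_iff_continuous_domRestrict]
        have : Set.domRestrict {x : En n | x ≠ 0} h = fun x => k x - T x := by
          funext x
          exact hval x x.2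
        rw [this]
        exact hk.sub (T.continuous.comp continuous_subtype_val)
      exact hon.continuousAt (isOpen_ne.mem_nhds hx0)
  · intro x hx
    have hx0 : x ≠ 0 := norm_pos_iff.1 (by linarith)
    rw [hval x hx0, hkbig ⟨x, hx0⟩ hx, sub_self]
  · intro x hx
    rw [hval x hx]
    simpa using hkne ⟨x, hx⟩

/-! ### Sweepouts pass through the origin -/

/-- The segment from a point of the half-circle through `a, ξ, -a` to a nonzero point `w` of the same
closed half-plane avoids the origin, provided `w = ± ρ a` at the poles `t = 0, 1`. This deforms the given
half-curves to round half-circles. -/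
theorem nonvanishing_segment {n : ℕ} {a ξ w : En n} (ha : ‖a‖ = 1) (hξ : ‖ξ‖ = 1)
    (hξa : ⟪ξ, a⟫ = 0) {ρ t s r σ : ℝ} (hρ : 0 < ρ) (ht : t ∈ Icc (0 : ℝ) 1)
    (hσ : σ ∈ Icc (0 : ℝ) 1) (hr : 0 ≤ r) (hw : w = s • a + r • ξ) (hw0 : w ≠ 0)
    (h0 : t = 0 → w = ρ • a) (h1 : t = 1 → w = -(ρ • a)) :
    (1 - σ) • (Real.cos (π * t) • a + Real.sin (π * t) • ξ) + σ • w ≠ 0 := by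
  intro hz
  have ha0 : a ≠ 0 := norm_pos_iff.1 (by rw [ha]; exact one_pos)
  rcases eq_or_ne t 0 with rfl | ht0
  · rw [h0 rfl] at hz
    have : ((1 - σ) + σ * ρ) • a = 0 := by
      rw [← hz]; simp; module
    rcases smul_eq_zero.1 this with h | h
    · rcases hσ.1.eq_or_lt with h2 | h2
      · rw [← h2] at h; simp at h
      · nlinarith [hσ.2, mul_pos h2 hρ]
    · exact ha0 h
  rcases eq_or_ne t 1 with rfl | ht1
  · rw [h1 rfl] at hz
    have : ((1 - σ) + σ * ρ) • a = 0 := by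
      rw [← neg_eq_zero, ← hz]; simp; module
    rcases smul_eq_zero.1 this with h | h
    · rcases hσ.1.eq_or_lt with h2 | h2
      · rw [← h2] at h; simp at h
      · nlinarith [hσ.2, mul_pos h2 hρ]
    · exact ha0 h
  have hsin : 0 < Real.sin (π * t) := by
    have ht0' : 0 < t := lt_of_le_of_ne ht.1 ht0.symm
    have ht1' : t < 1 := lt_of_le_of_ne ht.2 ht1
    refine Real.sin_pos_of_pos_of_lt_pi (by positivity) ?_
    nlinarith [Real.pi_pos]
  have hin := congrArg (fun y => ⟪y, ξ⟫) hz
  simp only [hw, inner_add_left, inner_smul_left, real_inner_self_eq_norm_sq, hξ,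
    real_inner_comm ξ a, hξa, inner_zero_left] at hin
  simp at hin
  have e1 : (1 - σ) * Real.sin (π * t) = 0 := by
    have := mul_nonneg (sub_nonneg.2 hσ.2) hsin.le
    have := mul_nonneg hσ.1 hr
    linarith
  have e2 : σ = 1 := by
    rcases mul_eq_zero.1 e1 with h | h <;> linarith
  rw [e2] at hz
  simp at hz
  exact hw0 hz

section Sweepout

variable {n : ℕ} (a : En n)

/-- The unit sphere of the hyperplane orthogonal to `a`. -/
def equator : Set (En n) := {ξ | ‖ξ‖ = 1 ∧ ⟪ξ, a⟫ = 0}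

theorem isCompact_equator : IsCompact (equator a) := by
  refine (isCompact_sphere (0 : En n) 1).of_isClosed_subset ?_ fun x hx => by simpa using hx.1
  exact (isClosed_eq continuous_norm continuous_const).inter
    (isClosed_eq (continuous_id.inner continuous_const) continuous_const)

/-- The suspension map onto the unit sphere: `t` is the normalised angle to `a`, and `ξ` the
direction of the component orthogonal to `a`. -/
noncomputable def suspend (z : En n × ℝ) : En n := Real.cos (π * z.2) • a + Real.sin (π * z.2) • z.1

theorem continuous_suspend : Continuous (suspend a) := by
  unfold suspend
  fun_prop

variable {a}

theorem suspend_norm (ha : ‖a‖ = 1) {ξ : En n} (hξ : ξ ∈ equator a) (t : ℝ) :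
    ‖suspend a (ξ, t)‖ = 1 := by
  have h : ‖suspend a (ξ, t)‖ ^ 2 = 1 := by
    rw [← real_inner_self_eq_norm_sq]
    simp only [suspend, inner_add_left, inner_add_right, inner_smul_left, inner_smul_right,
      real_inner_self_eq_norm_sq, ha, hξ.1, real_inner_comm ξ a, hξ.2]
    simp
    nlinarith [Real.sin_sq_add_cos_sq (π * t)]
  nlinarith [norm_nonneg (suspend a (ξ, t))]

theorem suspend_inner (ha : ‖a‖ = 1) {ξ : En n} (hξ : ξ ∈ equator a) (t : ℝ) :
    ⟪suspend a (ξ, t), a⟫ = Real.cos (π * t) := by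
  simp only [suspend, inner_add_left, inner_smul_left, real_inner_self_eq_norm_sq, ha, hξ.2]
  simp

theorem suspend_surj (ha : ‖a‖ = 1) {e : En n} (he : e ∈ equator a) {x : En n} (hx : ‖x‖ = 1) :
    ∃ ξ ∈ equator a, ∃ t ∈ Icc (0 : ℝ) 1, suspend a (ξ, t) = x := by
  set c := ⟪x, a⟫ with hc
  have hc1 : |c| ≤ 1 := by
    have := abs_real_inner_le_norm x a
    rwa [hx, ha, one_mul] at this
  rw [abs_le] at hc1
  set t := Real.arccos c / π with ht
  have htI : t ∈ Icc (0 : ℝ) 1 :=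
    ⟨div_nonneg (Real.arccos_nonneg c) Real.pi_pos.le,
      (div_le_one Real.pi_pos).2 (Real.arccos_le_pi c)⟩
  have hpt : π * t = Real.arccos c := by rw [ht]; field_simp
  have hcos : Real.cos (π * t) = c := by rw [hpt, Real.cos_arccos hc1.1 hc1.2]
  set y := x - c • a with hy
  have hya : ⟪y, a⟫ = 0 := by
    simp [hy, inner_sub_left, inner_smul_left, ← hc, ha]
  have hysq : ‖y‖ ^ 2 = 1 - c ^ 2 := by
    rw [← real_inner_self_eq_norm_sq, hy]
    simp only [inner_sub_left, inner_sub_right, inner_smul_left, inner_smul_right,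
      real_inner_self_eq_norm_sq, ha, hx, real_inner_comm x a, ← hc]
    simp
    ring
  have hsin : Real.sin (π * t) = ‖y‖ := by
    rw [hpt, Real.sin_arccos, ← hysq, Real.sqrt_sq (norm_nonneg _)]
  by_cases hy0 : y = 0
  · refine ⟨e, he, t, htI, ?_⟩
    simp only [suspend, hcos, hsin, hy0]
    have : x = c • a := by rwa [hy, sub_eq_zero] at hy0
    simp [← this]
  · refine ⟨‖y‖⁻¹ • y, ⟨?_, ?_⟩, t, htI, ?_⟩
    · simp [norm_smul, inv_mul_cancel₀ (norm_ne_zero_iff.2 hy0)]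
    · rw [inner_smul_left, hya, mul_zero]
    · simp only [suspend, hcos, hsin]
      rw [smul_smul, mul_inv_cancel₀ (norm_ne_zero_iff.2 hy0), one_smul, hy]
      abel

/-- A family of maps of the suspension that is constant at both poles descends to the sphere. -/
theorem exists_lift (ha : ‖a‖ = 1) {e : En n} (he : e ∈ equator a)
    (K : ℝ → En n → ℝ → En n)
    (hK : ContinuousOn (fun z : ℝ × En n × ℝ => K z.1 z.2.1 z.2.2)
      (Icc 0 1 ×ˢ (equator a ×ˢ Icc 0 1)))
    (hne : ∀ s ∈ Icc (0 : ℝ) 1, ∀ ξ ∈ equator a, ∀ t ∈ Icc (0 : ℝ) 1, K s ξ t ≠ 0)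
    (h0 : ∀ s ∈ Icc (0 : ℝ) 1, ∀ ξ ∈ equator a, ∀ η ∈ equator a, K s ξ 0 = K s η 0)
    (h1 : ∀ s ∈ Icc (0 : ℝ) 1, ∀ ξ ∈ equator a, ∀ η ∈ equator a, K s ξ 1 = K s η 1) :
    ∃ G : C(unitInterval × Metric.sphere (0 : En n) 1, {x : En n // x ≠ 0}),
      ∀ (s : unitInterval) (x : Metric.sphere (0 : En n) 1), ∀ ξ ∈ equator a,
        ∀ t ∈ Icc (0 : ℝ) 1, suspend a (ξ, t) = x → (G (s, x) : En n) = K s ξ t := by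
  have : CompactSpace (equator a) := isCompact_iff_compactSpace.1 (isCompact_equator a)
  let q₀ : unitInterval × (equator a × unitInterval) →
      unitInterval × Metric.sphere (0 : En n) 1 := fun z =>
    (z.1, ⟨suspend a (z.2.1, z.2.2), by simpa using suspend_norm ha z.2.1.2 _⟩)
  have hqc : Continuous q₀ := by
    refine continuous_fst.prodMk (Continuous.subtype_mk ?_ _)
    exact (continuous_suspend a).comp (by fun_prop)
  let q : C(unitInterval × (equator a × unitInterval),
      unitInterval × Metric.sphere (0 : En n) 1) := ⟨q₀, hqc⟩
  have hqs : Function.Surjective q := by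
    rintro ⟨s, x, hx⟩
    obtain ⟨ξ, hξ, t, ht, hxt⟩ := suspend_surj ha he (x := x) (by simpa using hx)
    exact ⟨(s, ⟨ξ, hξ⟩, ⟨t, ht⟩), by simp [q, q₀, hxt]⟩
  have hq : Topology.IsQuotientMap q := q.continuous.isClosedMap.isQuotientMap q.continuous hqs
  let k : C(unitInterval × (equator a × unitInterval), {x : En n // x ≠ 0}) :=
    ⟨fun z => ⟨K z.1 z.2.1 z.2.2, hne _ z.1.2 _ z.2.1.2 _ z.2.2.2⟩, by
      refine Continuous.subtype_mk ?_ _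
      refine hK.comp_continuous
        (f := fun z : unitInterval × (equator a × unitInterval) =>
          ((z.1 : ℝ), (z.2.1 : En n), (z.2.2 : ℝ))) (by fun_prop) fun z => ?_
      exact ⟨z.1.2, z.2.1.2, z.2.2.2⟩⟩
  have hfib : Function.FactorsThrough k q := by
    rintro ⟨s, ⟨ξ, hξ⟩, ⟨t, ht⟩⟩ ⟨s', ⟨ξ', hξ'⟩, ⟨t', ht'⟩⟩ hz
    simp only [q, q₀, ContinuousMap.coe_mk, Prod.mk.injEq, Subtype.mk.injEq] at hz
    obtain ⟨rfl, hz⟩ := hz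
    have hcos : Real.cos (π * t) = Real.cos (π * t') := by
      rw [← suspend_inner ha hξ t, hz, suspend_inner ha hξ' t']
    have htt : t = t' := by
      have := Real.injOn_cos ⟨by have := ht.1; positivity, by nlinarith [ht.2, Real.pi_pos]⟩
        ⟨by have := ht'.1; positivity, by nlinarith [ht'.2, Real.pi_pos]⟩ hcos
      exact mul_left_cancel₀ Real.pi_pos.ne' this
    subst htt
    refine Subtype.ext ?_
    change K s ξ t = K s ξ' t
    rcases eq_or_ne t 0 with rfl | ht0
    · exact h0 _ s.2 _ hξ _ hξ'
    rcases eq_or_ne t 1 with rfl | ht1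
    · exact h1 _ s.2 _ hξ _ hξ'
    have hsin : 0 < Real.sin (π * t) := by
      have ht0' : 0 < t := lt_of_le_of_ne ht.1 ht0.symm
      have ht1' : t < 1 := lt_of_le_of_ne ht.2 ht1
      refine Real.sin_pos_of_pos_of_lt_pi (by positivity) ?_
      nlinarith [Real.pi_pos]
    simp only [suspend, add_right_inj] at hz
    rw [smul_right_injective _ hsin.ne' hz]
  refine ⟨hq.lift k hfib, fun s x ξ hξ t ht hx => ?_⟩
  have e : (s, x) = q (s, ⟨ξ, hξ⟩, ⟨t, ht⟩) := by
    simp only [q, q₀, ContinuousMap.coe_mk, Prod.mk.injEq, true_and]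
    exact Subtype.ext hx.symm
  have := DFunLike.congr_fun (hq.lift_comp k hfib) (s, ⟨ξ, hξ⟩, ⟨t, ht⟩)
  rw [e]
  exact congrArg Subtype.val this

/-- Every sweepout joining the half-circles `L ξ` to their mirror images `L (I ξ)` contains a curve
through the origin: otherwise it would descend to a homotopy between the identity of the sphere and
a reflection. -/
theorem sweepout_hits_origin {e : En n} (ha : ‖a‖ = 1) (he : e ∈ equator a) {ρ : ℝ} (hρ : 0 < ρ)
    (L : En n → ℝ → En n)
    (hL : ∀ ξ ∈ equator a, ∀ t ∈ Icc (0 : ℝ) 1, ∃ s r : ℝ, 0 ≤ r ∧ L ξ t = s • a + r • ξ)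
    (H : En n → ℝ → ℝ → En n)
    (hH : ContinuousOn (fun z : En n × ℝ × ℝ => H z.1 z.2.1 z.2.2)
      (equator a ×ˢ (Icc 0 1 ×ˢ Icc 0 1)))
    (hH0 : ∀ ξ ∈ equator a, ∀ s ∈ Icc (0 : ℝ) 1, H ξ s 0 = ρ • a ∧ H ξ s 1 = -(ρ • a))
    (hHL : ∀ ξ ∈ equator a, H ξ 0 = L ξ ∧ H ξ 1 = L (ξ - (2 * ⟪ξ, e⟫) • e)) :
    ∃ ξ ∈ equator a, ∃ s ∈ Icc (0 : ℝ) 1, ∃ t ∈ Icc (0 : ℝ) 1, H ξ s t = 0 := by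
  by_contra hcon
  push Not at hcon
  have h01 : (0 : ℝ) ∈ Icc (0 : ℝ) 1 := ⟨le_rfl, zero_le_one⟩
  have h11 : (1 : ℝ) ∈ Icc (0 : ℝ) 1 := ⟨zero_le_one, le_rfl⟩
  let T : En n ≃ₗᵢ[ℝ] En n := (ℝ ∙ e)ᗮ.reflection
  have hTv : ∀ x, T x = x - (2 * ⟪x, e⟫) • e := by
    intro x
    have := Submodule.reflection_orthogonal_apply (K := ℝ ∙ e) (𝕜 := ℝ) x
    change (ℝ ∙ e)ᗮ.reflection x = _
    rw [this, Submodule.reflection_singleton_apply, he.1, real_inner_comm]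
    simp
    module
  have hTdet : ((T : En n ≃L[ℝ] En n) : En n →L[ℝ] En n).det = -1 := by
    have h := Submodule.det_reflection (K := (ℝ ∙ e)ᗮ) (𝕜 := ℝ)
    have he0 : e ≠ 0 := norm_pos_iff.1 (by rw [he.1]; exact one_pos)
    rw [Submodule.orthogonal_orthogonal, finrank_span_singleton he0, pow_one] at h
    exact h
  have hTa : T a = a := by
    rw [hTv, real_inner_comm, he.2]; simp
  have hTeq : ∀ ξ ∈ equator a, T ξ ∈ equator a := by
    intro ξ hξ
    refine ⟨by rw [T.norm_map, hξ.1], ?_⟩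
    conv_lhs => rw [← hTa]
    rw [T.inner_map_map, hξ.2]
  have hTs : ∀ ξ t, T (suspend a (ξ, t)) = suspend a (T ξ, t) := by
    intro ξ t
    simp [suspend, hTa]
  have hHc : ∀ {f : ℝ × En n × ℝ → En n × ℝ × ℝ}, Continuous f →
      (∀ z ∈ Icc (0 : ℝ) 1 ×ˢ (equator a ×ˢ Icc (0 : ℝ) 1),
        f z ∈ equator a ×ˢ (Icc (0 : ℝ) 1 ×ˢ Icc (0 : ℝ) 1)) →
      ContinuousOn (fun z => H (f z).1 (f z).2.1 (f z).2.2)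
        (Icc 0 1 ×ˢ (equator a ×ˢ Icc 0 1)) := fun hf hm =>
    hH.comp hf.continuousOn hm
  obtain ⟨G₁, hG₁⟩ := exists_lift ha he
    (fun s ξ t => (1 - s) • suspend a (ξ, t) + s • H ξ 0 t)
    (by
      have h1 := hHc (f := fun z => (z.2.1, 0, z.2.2)) (by fun_prop)
        fun z hz => ⟨hz.2.1, h01, hz.2.2⟩
      have h2 : Continuous fun z : ℝ × En n × ℝ => suspend a (z.2.1, z.2.2) :=
        (continuous_suspend a).comp (by fun_prop)
      exact (((continuous_const.sub continuous_fst).smul h2).continuousOn).add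
        (continuous_fst.continuousOn.smul h1))
    (by
      intro s hs ξ hξ t ht
      obtain ⟨s', r, hr, hw⟩ := hL ξ hξ t ht
      rw [← (hHL ξ hξ).1] at hw
      exact nonvanishing_segment ha hξ.1 hξ.2 hρ ht hs hr hw (hcon ξ hξ 0 h01 t ht)
        (fun h => by rw [show t = _ from h, (hH0 ξ hξ 0 h01).1]) (fun h => by rw [show t = _ from h, (hH0 ξ hξ 0 h01).2]))
    (by
      intro s hs ξ hξ η hη
      simp only [(hH0 ξ hξ 0 h01).1, (hH0 η hη 0 h01).1]
      simp [suspend])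
    (by
      intro s hs ξ hξ η hη
      simp only [(hH0 ξ hξ 0 h01).2, (hH0 η hη 0 h01).2]
      simp [suspend])
  obtain ⟨G₂, hG₂⟩ := exists_lift ha he (fun s ξ t => H ξ s t)
    (hHc (f := fun z => (z.2.1, z.1, z.2.2)) (by fun_prop) fun z hz => ⟨hz.2.1, hz.1, hz.2.2⟩)
    (fun s hs ξ hξ t ht => hcon ξ hξ s hs t ht)
    (fun s hs ξ hξ η hη => by rw [(hH0 ξ hξ s hs).1, (hH0 η hη s hs).1])
    (fun s hs ξ hξ η hη => by rw [(hH0 ξ hξ s hs).2, (hH0 η hη s hs).2])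
  obtain ⟨G₃, hG₃⟩ := exists_lift ha he
    (fun s ξ t => (1 - s) • suspend a (T ξ, t) + s • H ξ 1 t)
    (by
      have h1 := hHc (f := fun z => (z.2.1, 1, z.2.2)) (by fun_prop)
        fun z hz => ⟨hz.2.1, h11, hz.2.2⟩
      have h2 : Continuous fun z : ℝ × En n × ℝ => suspend a (T z.2.1, z.2.2) :=
        (continuous_suspend a).comp
          ((T.continuous.comp (continuous_fst.comp continuous_snd)).prodMk
            (continuous_snd.comp continuous_snd))
      exact (((continuous_const.sub continuous_fst).smul h2).continuousOn).add
        (continuous_fst.continuousOn.smul h1))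
    (by
      intro s hs ξ hξ t ht
      obtain ⟨s', r, hr, hw⟩ := hL (T ξ) (hTeq ξ hξ) t ht
      rw [hTv, ← (hHL ξ hξ).2, ← hTv] at hw
      exact nonvanishing_segment ha (hTeq ξ hξ).1 (hTeq ξ hξ).2 hρ ht hs hr hw
        (hcon ξ hξ 1 h11 t ht)
        (fun h => by rw [show t = _ from h, (hH0 ξ hξ 1 h11).1]) (fun h => by rw [show t = _ from h, (hH0 ξ hξ 1 h11).2]))
    (by
      intro s hs ξ hξ η hη
      simp only [(hH0 ξ hξ 1 h11).1, (hH0 η hη 1 h11).1]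
      simp [suspend])
    (by
      intro s hs ξ hξ η hη
      simp only [(hH0 ξ hξ 1 h11).2, (hH0 η hη 1 h11).2]
      simp [suspend])
  let ev : C(unitInterval × Metric.sphere (0 : En n) 1, {x : En n // x ≠ 0}) → unitInterval →
      C(Metric.sphere (0 : En n) 1, {x : En n // x ≠ 0}) := fun G s =>
    ⟨fun x => G (s, x), by fun_prop⟩
  have hhom : ∀ G, (ev G 0).Homotopic (ev G 1) := fun G =>
    ⟨{ toContinuousMap := G, map_zero_left := fun _ => rfl, map_one_left := fun _ => rfl }⟩
  have e12 : ev G₁ 1 = ev G₂ 0 := by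
    ext1 x
    obtain ⟨ξ, hξ, t, ht, hx⟩ := suspend_surj ha he (x := (x : En n)) (by simpa using x.2)
    refine Subtype.ext ?_
    change (G₁ (1, x) : En n) = G₂ (0, x)
    rw [hG₁ 1 x ξ hξ t ht hx, hG₂ 0 x ξ hξ t ht hx]
    simp
  have e23 : ev G₂ 1 = ev G₃ 1 := by
    ext1 x
    obtain ⟨ξ, hξ, t, ht, hx⟩ := suspend_surj ha he (x := (x : En n)) (by simpa using x.2)
    refine Subtype.ext ?_
    change (G₂ (1, x) : En n) = G₃ (1, x)
    rw [hG₂ 1 x ξ hξ t ht hx, hG₃ 1 x ξ hξ t ht hx]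
    simp
  have hfinal : (ev G₁ 0).Homotopic (ev G₃ 0) := by
    refine (hhom G₁).trans ?_
    rw [e12]
    refine (hhom G₂).trans ?_
    rw [e23]
    exact (hhom G₃).symm
  refine not_homotopic_reflection T hTdet _ _ (fun x => ?_) (fun x => ?_) hfinal
  · obtain ⟨ξ, hξ, t, ht, hx⟩ := suspend_surj ha he (x := (x : En n)) (by simpa using x.2)
    change (G₁ (0, x) : En n) = x
    rw [hG₁ 0 x ξ hξ t ht hx]
    simp [hx]
  · obtain ⟨ξ, hξ, t, ht, hx⟩ := suspend_surj ha he (x := (x : En n)) (by simpa using x.2)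
    change (G₃ (0, x) : En n) = T x
    rw [hG₃ 0 x ξ hξ t ht hx, ← hx, hTs]
    simp

end Sweepout

/-! ### The metric tensor as a field of continuous bilinear forms -/

theorem bilin_expand {n : ℕ} (G : En n → En n → ℝ) (hs : ∀ v w, G v w = G w v)
    (ha : ∀ v w u, G (v + w) u = G v u + G w u)
    (hm : ∀ (c : ℝ) v u, G (c • v) u = c * G v u) (v w : En n) :
    G v w = ∑ i, ∑ j, G (EuclideanSpace.single i 1) (EuclideanSpace.single j 1) * (v i * w j) := by
  have key : ∀ v u, G v u = ∑ i, v i * G (EuclideanSpace.single i 1) u := by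
    intro v u
    let f : En n →ₗ[ℝ] ℝ :=
      { toFun := fun v => G v u, map_add' := fun x y => ha x y u,
        map_smul' := fun c x => hm c x u }
    have hv : v = ∑ i, v i • EuclideanSpace.single i (1 : ℝ) := by
      ext k
      simp [Finset.sum_apply, Pi.single_apply]
    change f v = ∑ i, v i * f (EuclideanSpace.single i 1)
    conv_lhs => rw [hv]
    simp
  rw [key]
  refine Finset.sum_congr rfl fun i _ => ?_
  rw [hs, key, Finset.mul_sum]
  refine Finset.sum_congr rfl fun j _ => ?_
  rw [hs]; ring

/-- The metric tensor `g`, recorded as a map into continuous bilinear forms. -/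
noncomputable def metB {n : ℕ} (g : MetricTensor n) (x : En n) : En n →L[ℝ] En n →L[ℝ] ℝ :=
  ∑ i, ∑ j, g x (EuclideanSpace.single i 1) (EuclideanSpace.single j 1) •
    (EuclideanSpace.proj i : En n →L[ℝ] ℝ).smulRight (EuclideanSpace.proj j : En n →L[ℝ] ℝ)

theorem metB_apply {n : ℕ} {g : MetricTensor n} {α μ : ℝ} (hg : IsAsympConical n g α μ)
    (x v w : En n) : metB g x v w = g x v w := by
  rw [bilin_expand (g x) (hg.symm x) (hg.add_left x) (hg.smul_left x)]
  simp [metB]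

theorem metB_contDiff {n : ℕ} {g : MetricTensor n} {α μ : ℝ} (hg : IsAsympConical n g α μ) :
    ContDiff ℝ 2 (metB g) := by
  unfold metB
  refine ContDiff.sum fun i _ => ContDiff.sum fun j _ => ?_
  exact (hg.reg i j).smul contDiff_const

theorem coneMetric_expand {n : ℕ} (α : ℝ) (x v w : En n) :
    coneMetric n α x v w = ∑ i, ∑ j, coneMetric n α x (EuclideanSpace.single i 1)
      (EuclideanSpace.single j 1) * (v i * w j) := by
  refine bilin_expand (coneMetric n α x) ?_ ?_ ?_ v w
  · intro v w; simp only [coneMetric, real_inner_comm w v]; ring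
  · intro v w u; simp only [coneMetric, inner_add_left]; ring
  · intro c v u; simp only [coneMetric, inner_smul_left]; simp; ring

theorem coneMetric_differentiableAt {n : ℕ} (α : ℝ) (v w : En n) {x : En n} (hx : x ≠ 0) :
    DifferentiableAt ℝ (fun y => coneMetric n α y v w) x := by
  unfold coneMetric
  have : ‖x‖ ^ 2 ≠ 0 := by positivity
  have h1 : DifferentiableAt ℝ (fun y : En n => ‖y‖ ^ 2) x :=
    (contDiff_norm_sq ℝ (n := 1)).differentiable one_ne_zero x
  have h2 : DifferentiableAt ℝ (fun y : En n => ⟪v, y⟫ * ⟪w, y⟫ / ‖y‖ ^ 2) x := by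
    have h3 : ∀ v : En n, DifferentiableAt ℝ (fun y : En n => ⟪v, y⟫) x := fun v =>
      (differentiableAt_const v).inner ℝ differentiableAt_id
    simp only [div_eq_mul_inv]
    exact ((h3 v).fun_mul (h3 w)).fun_mul (h1.fun_inv this)
  exact (h2.const_mul _).add_const _

/-- The decay of `g - g_cone`, in the three forms used below: for the metric itself, for its radial
derivative, and for its Lie derivative along an infinitesimal rotation. -/
structure ConicalBounds {n : ℕ} (B : En n → En n →L[ℝ] En n →L[ℝ] ℝ) (α μ C R : ℝ) : Prop where
  metric : ∀ x v w : En n, R ≤ ‖x‖ →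
    |B x v w - coneMetric n α x v w| ≤ C * ‖x‖ ^ (-μ) * ‖v‖ * ‖w‖
  radial : ∀ x v : En n, R ≤ ‖x‖ → |fderiv ℝ B x x v v| ≤ C * ‖x‖ ^ (-μ) * ‖v‖ ^ 2
  rotation : ∀ (S : En n →L[ℝ] En n) (x v : En n), (∀ y z, ⟪S y, z⟫ = -⟪y, S z⟫) → R ≤ ‖x‖ →
    |(1 / 2) * fderiv ℝ B x (S x) v v + B x v (S v)| ≤ C * ‖x‖ ^ (-μ) * ‖S‖ * ‖v‖ ^ 2

theorem abs_coord_le {n : ℕ} (v : En n) (i : Fin n) : |v i| ≤ ‖v‖ := by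
  simpa using PiLp.norm_apply_le v i

/-- The componentwise decay of `g - g_cone` and of its first derivatives gives `ConicalBounds`, with
any smaller decay rate `ν`. -/
theorem conicalBounds_of_asymp {n : ℕ} {g : MetricTensor n} {α μ : ℝ}
    (hg : IsAsympConical n g α μ) {ν : ℝ} (hν : ν ≤ μ) :
    ∃ C R : ℝ, 1 ≤ C ∧ 1 ≤ R ∧ ConicalBounds (metB g) α ν C R := by
  classical
  set af : Fin n → Fin n → En n → ℝ := fun i j y =>
    g y (EuclideanSpace.single i 1) (EuclideanSpace.single j 1) -
        coneMetric n α y (EuclideanSpace.single i 1) (EuclideanSpace.single j 1) with haf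
  choose C R hC hR using hg.decay
  set C0 := ∑ i, ∑ j, C i j with hC0
  set R0 := 1 + ∑ i, ∑ j, |R i j| with hR0
  have hC0n : 0 ≤ C0 := Finset.sum_nonneg fun i _ => Finset.sum_nonneg fun j _ => (hC i j).le
  have hRle : ∀ i j, R i j ≤ R0 := by
    intro i j
    have h1 : |R i j| ≤ ∑ j, |R i j| :=
      Finset.single_le_sum (f := fun j => |R i j|) (fun _ _ => abs_nonneg _) (Finset.mem_univ j)
    have h2 : ∑ j, |R i j| ≤ ∑ i, ∑ j, |R i j| :=
      Finset.single_le_sum (f := fun i => ∑ j, |R i j|)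
        (fun _ _ => Finset.sum_nonneg fun _ _ => abs_nonneg _) (Finset.mem_univ i)
    linarith [le_abs_self (R i j)]
  have hR01 : 1 ≤ R0 := by
    have : 0 ≤ ∑ i, ∑ j, |R i j| :=
      Finset.sum_nonneg fun _ _ => Finset.sum_nonneg fun _ _ => abs_nonneg _
    linarith
  have hpow : ∀ x : En n, R0 ≤ ‖x‖ → ‖x‖ ^ (-μ) ≤ ‖x‖ ^ (-ν) := fun x hx =>
    Real.rpow_le_rpow_of_exponent_le (hR01.trans hx) (by linarith)
  have ha0 : ∀ x : En n, R0 ≤ ‖x‖ → ∀ i j, |af i j x| ≤ C i j * ‖x‖ ^ (-ν) := by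
    intro x hx i j
    have h := hR i j x ((hRle i j).trans hx) 0 (by norm_num)
    rw [norm_iteratedFDeriv_zero] at h
    simp only [Nat.cast_zero, sub_zero, Real.norm_eq_abs] at h
    exact h.trans (mul_le_mul_of_nonneg_left (hpow x hx) (hC i j).le)
  have ha1 : ∀ x : En n, R0 ≤ ‖x‖ → ∀ i j, ‖fderiv ℝ (af i j) x‖ ≤ C i j * ‖x‖ ^ (-ν) / ‖x‖ := by
    intro x hx i j
    have hx0 : 0 < ‖x‖ := by linarith
    have h := hR i j x ((hRle i j).trans hx) 1 (by norm_num)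
    rw [norm_iteratedFDeriv_one, Nat.cast_one, Real.rpow_sub hx0, Real.rpow_one] at h
    refine h.trans ?_
    rw [mul_div_assoc]
    exact mul_le_mul_of_nonneg_left (div_le_div_of_nonneg_right (hpow x hx) hx0.le) (hC i j).le
  have hsum : ∀ x v w : En n, metB g x v w - coneMetric n α x v w =
      ∑ i, ∑ j, af i j x * (v i * w j) := by
    intro x v w
    rw [metB_apply hg, bilin_expand (g x) (hg.symm x) (hg.add_left x) (hg.smul_left x),
      coneMetric_expand, ← Finset.sum_sub_distrib]
    refine Finset.sum_congr rfl fun i _ => ?_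
    rw [← Finset.sum_sub_distrib]
    refine Finset.sum_congr rfl fun j _ => ?_
    simp only [haf]; ring
  -- a sum of components is controlled by the product of the norms
  have hest : ∀ (f : Fin n → Fin n → ℝ) (q : ℝ) (v w : En n), (∀ i j, |f i j| ≤ C i j * q) →
      |∑ i, ∑ j, f i j * (v i * w j)| ≤ C0 * q * ‖v‖ * ‖w‖ := by
    intro f q v w hf
    calc |∑ i, ∑ j, f i j * (v i * w j)| ≤ ∑ i, ∑ j, C i j * q * (‖v‖ * ‖w‖) := by
          refine (Finset.abs_sum_le_sum_abs _ _).trans (Finset.sum_le_sum fun i _ => ?_)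
          refine (Finset.abs_sum_le_sum_abs _ _).trans (Finset.sum_le_sum fun j _ => ?_)
          rw [abs_mul, abs_mul]
          have h0 := (abs_nonneg _).trans (hf i j)
          have h1 := abs_coord_le v i
          have h2 := abs_coord_le w j
          have h3 := hf i j
          gcongr
      _ = C0 * q * ‖v‖ * ‖w‖ := by
          simp only [hC0, Finset.sum_mul]
          refine Finset.sum_congr rfl fun i _ => Finset.sum_congr rfl fun j _ => ?_
          ring
  have hdiffa : ∀ x : En n, x ≠ 0 → ∀ i j, DifferentiableAt ℝ (af i j) x := fun x hx i j =>
    ((hg.reg i j).differentiable (by norm_num) x).sub (coneMetric_differentiableAt α _ _ hx)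
  have hBd : Differentiable ℝ (metB g) := (metB_contDiff hg).differentiable (by norm_num)
  -- derivative of `g` in direction `u`, compared with that of the cone metric
  have hder : ∀ x u v : En n, R0 ≤ ‖x‖ →
      |fderiv ℝ (metB g) x u v v - fderiv ℝ (fun y => coneMetric n α y v v) x u| ≤
        C0 * (‖x‖ ^ (-ν) / ‖x‖ * ‖u‖) * ‖v‖ * ‖v‖ := by
    intro x u v hx
    have hx0 : x ≠ 0 := norm_pos_iff.1 (by linarith)
    have hB1 : HasFDerivAt (fun y => metB g y v v)
        (((fderiv ℝ (metB g) x).flip v).flip v) x := by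
      have := (((hBd x).hasFDerivAt.clm_apply (hasFDerivAt_const v x)).clm_apply
        (hasFDerivAt_const v x))
      refine this.congr_fderiv ?_
      ext u
      simp
    have hA1 : HasFDerivAt (fun y => metB g y v v - coneMetric n α y v v)
        (∑ i, ∑ j, (v i * v j) • fderiv ℝ (af i j) x) x := by
      simp only [hsum]
      refine HasFDerivAt.fun_sum fun i _ => HasFDerivAt.fun_sum fun j _ => ?_
      exact (hdiffa x hx0 i j).hasFDerivAt.mul_const (v i * v j)
    have hA2 := hB1.sub (coneMetric_differentiableAt α v v hx0).hasFDerivAt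
    have heq := congrArg (fun T => T u) (hA1.unique hA2)
    have hval : fderiv ℝ (metB g) x u v v - fderiv ℝ (fun y => coneMetric n α y v v) x u =
        ∑ i, ∑ j, fderiv ℝ (af i j) x u * (v i * v j) := by
      have h2 : (∑ i, ∑ j, (v i * v j) • fderiv ℝ (af i j) x) u =
          ∑ i, ∑ j, fderiv ℝ (af i j) x u * (v i * v j) := by
        simp [mul_comm]
      rw [← h2]
      refine Eq.trans ?_ heq.symm
      simp
    rw [hval]
    refine hest _ _ v v fun i j => ?_
    calc |fderiv ℝ (af i j) x u| ≤ ‖fderiv ℝ (af i j) x‖ * ‖u‖ := (fderiv ℝ (af i j) x).le_opNorm u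
      _ ≤ C i j * ‖x‖ ^ (-ν) / ‖x‖ * ‖u‖ := by
          gcongr; exact ha1 x hx i j
      _ = _ := by ring
  have hcone : ∀ x u v : En n, x ≠ 0 → fderiv ℝ (fun y => coneMetric n α y v v) x u =
      (1 - Real.sin α ^ 2) * (2 * ⟪v, x⟫ * ⟪v, u⟫ / ‖x‖ ^ 2 -
        2 * ⟪v, x⟫ ^ 2 * ⟪x, u⟫ / ‖x‖ ^ 4) := by
    intro x u v hx
    have hx2 : ‖x‖ ≠ 0 := norm_ne_zero_iff.2 hx
    have hl : HasDerivAt (fun t : ℝ => x + t • u) u 0 := by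
      simpa using ((hasDerivAt_id (0 : ℝ)).smul_const u).const_add x
    have h0 := ((coneMetric_differentiableAt α v v hx).hasFDerivAt (x := x))
    have h1 : HasDerivAt (fun t : ℝ => coneMetric n α (x + t • u) v v)
        (fderiv ℝ (fun y => coneMetric n α y v v) x u) 0 := by
      have h0' : HasFDerivAt (fun y => coneMetric n α y v v)
        (fderiv ℝ (fun y => coneMetric n α y v v) x) (x + (0 : ℝ) • u) := by simpa using h0
      exact h0'.comp_hasDerivAt (0 : ℝ) hl
    refine h1.unique ?_
    have hi : HasDerivAt (fun t : ℝ => ⟪v, x + t • u⟫) ⟪v, u⟫ 0 := by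
      simpa using (hasDerivAt_const (0 : ℝ) v).inner ℝ hl
    have hn : HasDerivAt (fun t : ℝ => ‖x + t • u‖ ^ 2) (2 * ⟪x, u⟫) 0 := by
      simpa using hl.norm_sq
    have := (((hi.mul hi).div hn (by simpa using hx2)).const_mul (1 - Real.sin α ^ 2)).add_const
      (Real.sin α ^ 2 * ⟪v, v⟫)
    refine (this.congr_deriv ?_)
    simp only [Pi.mul_apply, zero_smul, add_zero]
    congr 1
    field_simp
    ring
  have hsc : ∀ x u v : En n, R0 ≤ ‖x‖ →
      C0 * (‖x‖ ^ (-ν) / ‖x‖ * ‖u‖) * ‖v‖ * ‖v‖ = C0 * ‖x‖ ^ (-ν) * (‖u‖ / ‖x‖) * ‖v‖ ^ 2 := by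
    intro x u v _; ring
  refine ⟨2 * C0 + 1, R0, by linarith, hR01, ⟨?_, ?_, ?_⟩⟩
  · intro x v w hx
    rw [hsum]
    refine (hest _ _ v w (ha0 x hx)).trans ?_
    have : 0 ≤ ‖x‖ ^ (-ν) := by positivity
    gcongr
    linarith
  · intro x v hx
    have hx0 : x ≠ 0 := norm_pos_iff.1 (by linarith)
    have hx1 : ‖x‖ ≠ 0 := norm_ne_zero_iff.2 hx0
    have h := hder x x v hx
    rw [hcone x x v hx0, hsc x x v hx, div_self hx1, real_inner_self_eq_norm_sq] at h
    have hz : 2 * ⟪v, x⟫ * ⟪v, x⟫ / ‖x‖ ^ 2 - 2 * ⟪v, x⟫ ^ 2 * ‖x‖ ^ 2 / ‖x‖ ^ 4 = 0 := by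
      field_simp; ring
    rw [hz, mul_zero, sub_zero, mul_one] at h
    refine h.trans ?_
    have : 0 ≤ ‖x‖ ^ (-ν) := by positivity
    gcongr
    linarith
  · intro S x v hS hx
    have hx0 : x ≠ 0 := norm_pos_iff.1 (by linarith)
    have hx1 : 0 < ‖x‖ := norm_pos_iff.2 hx0
    have hp : 0 ≤ ‖x‖ ^ (-ν) := by positivity
    have h := hder x (S x) v hx
    have hxS : ⟪x, S x⟫ = 0 := by
      have := hS x x
      rw [real_inner_comm] at this
      linarith
    have hvS : ⟪v, S v⟫ = 0 := by
      have := hS v v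
      rw [real_inner_comm] at this
      linarith
    rw [hcone x _ v hx0, hsc x _ v hx, hxS] at h
    have h2 : |metB g x v (S v) - coneMetric n α x v (S v)| ≤ C0 * ‖x‖ ^ (-ν) * ‖v‖ * ‖S v‖ := by
      rw [hsum]; exact hest _ _ v (S v) (ha0 x hx)
    have h3 : coneMetric n α x v (S v) =
        -((1 / 2) * ((1 - Real.sin α ^ 2) * (2 * ⟪v, x⟫ * ⟪v, S x⟫ / ‖x‖ ^ 2 -
          2 * ⟪v, x⟫ ^ 2 * 0 / ‖x‖ ^ 4))) := by
      simp only [coneMetric, hS v x, hvS]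
      field_simp; ring
    have h4 : C0 * ‖x‖ ^ (-ν) * (‖S x‖ / ‖x‖) * ‖v‖ ^ 2 ≤ C0 * ‖x‖ ^ (-ν) * ‖S‖ * ‖v‖ ^ 2 := by
      gcongr
      rw [div_le_iff₀ hx1]
      exact S.le_opNorm x
    have h5 : C0 * ‖x‖ ^ (-ν) * ‖v‖ * ‖S v‖ ≤ C0 * ‖x‖ ^ (-ν) * ‖S‖ * ‖v‖ ^ 2 := by
      calc C0 * ‖x‖ ^ (-ν) * ‖v‖ * ‖S v‖ ≤ C0 * ‖x‖ ^ (-ν) * ‖v‖ * (‖S‖ * ‖v‖) := by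
            gcongr; exact S.le_opNorm v
        _ = _ := by ring
    have h6 : 0 ≤ ‖x‖ ^ (-ν) * ‖S‖ * ‖v‖ ^ 2 := by positivity
    rw [h3] at h2
    rw [abs_le] at h h2 ⊢
    constructor <;> nlinarith [h.1, h.2, h2.1, h2.2]

/-! ### Length and distance for a `C¹` Riemannian metric -/

/-- A field of symmetric positive definite bilinear forms of class `C¹`. -/
structure RiemForm {n : ℕ} (B : En n → En n →L[ℝ] En n →L[ℝ] ℝ) : Prop where
  contDiff : ContDiff ℝ 1 B
  symm : ∀ x v w, B x v w = B x w v
  pos : ∀ x v, v ≠ 0 → 0 < B x v v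

/-- The metric tensor underlying a field of bilinear forms. -/
noncomputable def gB {n : ℕ} (B : En n → En n →L[ℝ] En n →L[ℝ] ℝ) : MetricTensor n := fun x v w => B x v w

section Length

variable {n : ℕ} {B : En n → En n →L[ℝ] En n →L[ℝ] ℝ}

theorem RiemForm.nonneg (hB : RiemForm B) (x v : En n) : 0 ≤ B x v v := by
  rcases eq_or_ne v 0 with rfl | h
  · simp
  · exact (hB.pos x v h).le

theorem continuous_speedSq (hB : RiemForm B) {σ v : ℝ → En n} (hσ : Continuous σ)
    (hv : Continuous v) : Continuous fun t => B (σ t) (v t) (v t) :=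
  ((hB.contDiff.continuous.comp hσ).clm_apply hv).clm_apply hv

theorem continuous_speed (hB : RiemForm B) {σ : ℝ → En n} (hσ : ContDiff ℝ 1 σ) :
    Continuous fun t => √(B (σ t) (deriv σ t) (deriv σ t)) :=
  Real.continuous_sqrt.comp
    (continuous_speedSq hB hσ.continuous (hσ.continuous_deriv le_rfl))

theorem rdist_set_bddBelow (G : MetricTensor n) (x y : En n) :
    BddBelow {L : ℝ | ∃ γ : ℝ → En n, ContDiff ℝ 1 γ ∧ γ 0 = x ∧ γ 1 = y ∧ L = clen G γ 0 1} := by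
  refine ⟨0, ?_⟩
  rintro _ ⟨γ, -, -, -, rfl⟩
  exact intervalIntegral.integral_nonneg zero_le_one fun t _ => Real.sqrt_nonneg _

theorem rdist_nonneg (G : MetricTensor n) (x y : En n) : 0 ≤ rdist G x y := by
  refine Real.sInf_nonneg ?_
  rintro _ ⟨γ, -, -, -, rfl⟩
  exact intervalIntegral.integral_nonneg zero_le_one fun t _ => Real.sqrt_nonneg _

theorem le_rdist {G : MetricTensor n} {x y : En n} {c : ℝ}
    (h : ∀ γ : ℝ → En n, ContDiff ℝ 1 γ → γ 0 = x → γ 1 = y → c ≤ clen G γ 0 1) :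
    c ≤ rdist G x y := by
  refine le_csInf ?_ ?_
  · refine ⟨_, fun t => x + t • (y - x), ?_, by simp, by simp, rfl⟩
    fun_prop
  · rintro _ ⟨γ, h1, h2, h3, rfl⟩
    exact h γ h1 h2 h3

/-- The distance is bounded by the length of a `C¹` curve defined on an arbitrary interval. -/
theorem rdist_le_length {σ : ℝ → En n} (hσ : ContDiff ℝ 1 σ) {s u : ℝ} (hsu : s < u) :
    rdist (gB B) (σ s) (σ u) ≤ ∫ t in s..u, √(B (σ t) (deriv σ t) (deriv σ t)) := by
  have hpos : 0 < u - s := sub_pos.2 hsu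
  refine csInf_le (rdist_set_bddBelow _ _ _) ?_
  refine ⟨fun r => σ (s + (u - s) * r), hσ.comp (by fun_prop), by simp, by simp, ?_⟩
  have hd : ∀ r, deriv (fun r => σ (s + (u - s) * r)) r = (u - s) • deriv σ (s + (u - s) * r) := by
    intro r
    have h1 : HasDerivAt (fun r : ℝ => s + (u - s) * r) (u - s) r := by
      simpa using ((hasDerivAt_id r).const_mul (u - s)).const_add s
    exact ((hσ.differentiable one_ne_zero _).hasDerivAt.scomp r h1).deriv
  have h2 := intervalIntegral.smul_integral_comp_add_mul (a := (0 : ℝ)) (b := 1)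
    (fun t => √(B (σ t) (deriv σ t) (deriv σ t))) (u - s) s
  simp only [mul_zero, add_zero, mul_one, add_sub_cancel] at h2
  rw [← h2, clen, ← intervalIntegral.integral_smul]
  refine intervalIntegral.integral_congr fun r _ => ?_
  simp only [hd, gB, map_smul, smul_apply, smul_eq_mul]
  rw [← mul_assoc, Real.sqrt_mul (mul_self_nonneg _), Real.sqrt_mul_self hpos.le]

theorem sub_le_length (hB : RiemForm B) {σ : ℝ → En n} (hσ : ContDiff ℝ 1 σ) {s u : ℝ}
    (hsu : s ≤ u) {f f' : ℝ → ℝ}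
    (hf : ∀ t ∈ Icc s u, HasDerivAt f (f' t) t) (hf' : ContinuousOn f' (Icc s u))
    (hle : ∀ t ∈ Icc s u, f' t ≤ √(B (σ t) (deriv σ t) (deriv σ t))) :
    f u - f s ≤ ∫ t in s..u, √(B (σ t) (deriv σ t) (deriv σ t)) := by
  have hi : IntervalIntegrable f' MeasureTheory.volume s u :=
    ContinuousOn.intervalIntegrable (by rwa [uIcc_of_le hsu])
  rw [← intervalIntegral.integral_eq_sub_of_hasDerivAt
    (fun t ht => hf t (by rwa [uIcc_of_le hsu] at ht)) hi]
  exact intervalIntegral.integral_mono_on hsu hi ((continuous_speed hB hσ).intervalIntegrable _ _)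
    hle

theorem clen_mono (hB : RiemForm B) {σ : ℝ → En n} (hσ : ContDiff ℝ 1 σ) {s u : ℝ}
    (hs : 0 ≤ s) (hsu : s ≤ u) (hu : u ≤ 1) :
    ∫ t in s..u, √(B (σ t) (deriv σ t) (deriv σ t)) ≤ clen (gB B) σ 0 1 :=
  intervalIntegral.integral_mono_interval hs hsu hu
    (Eventually.of_forall fun _ => Real.sqrt_nonneg _)
    ((continuous_speed hB hσ).intervalIntegrable _ _)

theorem form_cauchy_schwarz {b : En n →L[ℝ] En n →L[ℝ] ℝ} (hs : ∀ v w, b v w = b w v)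
    (hn : ∀ v, 0 ≤ b v v) (v w : En n) : b w v ≤ √(b w w) * √(b v v) := by
  have key : (b w v) ^ 2 ≤ b w w * b v v := by
    rcases (hn w).eq_or_lt with h | h
    · rcases eq_or_ne (b w v) 0 with hc | hc
      · rw [hc, ← h]; simp
      have h1 := hn (v - ((b v v + 1) / b w v) • w)
      simp only [map_sub, map_smul, sub_apply, smul_apply,
        smul_eq_mul, ← h, hs v w, mul_zero, sub_zero, div_mul_cancel₀ _ hc] at h1
      linarith [hn v]
    · have h1 := hn ((b w w) • v - (b w v) • w)
      simp only [map_sub, map_smul, sub_apply, smul_apply,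
        smul_eq_mul, hs v w] at h1
      have h2 : 0 ≤ b w w * (b w w * b v v - b w v ^ 2) := by linarith
      have := nonneg_of_mul_nonneg_right h2 h
      linarith
  rw [← Real.sqrt_mul (hn w)]
  exact Real.le_sqrt_of_sq_le key

/-- If the metric dominates `κ²` times a constant form `b` along the curve up to time `τ`, then the
curve is at least `κ` times as long as its `b`-displacement. -/
theorem displacement_le_clen (hB : RiemForm B) {σ : ℝ → En n} (hσ : ContDiff ℝ 1 σ) {τ κ : ℝ}
    (hτ : τ ∈ Icc (0 : ℝ) 1) (hκ : 0 ≤ κ) {b : En n →L[ℝ] En n →L[ℝ] ℝ}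
    (hs : ∀ v w, b v w = b w v) (hn : ∀ v, 0 ≤ b v v)
    (hdom : ∀ t ∈ Icc 0 τ, ∀ v, κ ^ 2 * b v v ≤ B (σ t) v v) :
    κ * √(b (σ τ - σ 0) (σ τ - σ 0)) ≤ clen (gB B) σ 0 1 := by
  set w := σ τ - σ 0 with hw
  refine le_trans ?_ (clen_mono hB hσ le_rfl hτ.1 hτ.2)
  rcases (hn w).eq_or_lt with h | h
  · rw [← h]
    simpa using intervalIntegral.integral_nonneg hτ.1 fun t _ => Real.sqrt_nonneg _
  have hq : 0 < √(b w w) := Real.sqrt_pos.2 h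
  have hd : ∀ t, HasDerivAt (fun t => κ * (b w (σ t) / √(b w w)))
      (κ * (b w (deriv σ t) / √(b w w))) t := fun t =>
    (((b w).hasFDerivAt.comp_hasDerivAt t
      (hσ.differentiable one_ne_zero t).hasDerivAt).div_const _).const_mul κ
  have hc : Continuous fun t => κ * (b w (deriv σ t) / √(b w w)) :=
    (((b w).continuous.comp (hσ.continuous_deriv le_rfl)).div_const _).const_mul κ
  have h1 := sub_le_length hB hσ hτ.1 (fun t _ => hd t) hc.continuousOn
    (fun t ht => by
      have h2 := form_cauchy_schwarz hs hn (deriv σ t) w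
      have h3 : b w (deriv σ t) / √(b w w) ≤ √(b (deriv σ t) (deriv σ t)) := by
        rw [div_le_iff₀ hq]; linarith
      refine (mul_le_mul_of_nonneg_left h3 hκ).trans ?_
      refine Real.le_sqrt_of_sq_le ?_
      rw [mul_pow, Real.sq_sqrt (hn _)]
      exact hdom t ht _)
  refine le_trans (le_of_eq ?_) h1
  rw [← mul_sub, ← sub_div, ← map_sub, ← hw, Real.div_sqrt]

theorem exists_exit_time {σ : ℝ → En n} (hσ : Continuous σ) {y : En n} {r : ℝ}
    (h0 : ‖σ 0 - y‖ ≤ r) : ∃ τ ∈ Icc (0 : ℝ) 1, (∀ t ∈ Icc 0 τ, ‖σ t - y‖ ≤ r) ∧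
      (τ = 1 ∨ ‖σ τ - y‖ = r) := by
  by_cases hall : ∀ t ∈ Icc (0 : ℝ) 1, ‖σ t - y‖ ≤ r
  · exact ⟨1, by simp, hall, Or.inl rfl⟩
  push Not at hall
  obtain ⟨t₁, ht₁, hr⟩ := hall
  have hc : Continuous fun t => ‖σ t - y‖ := by fun_prop
  have hK : IsCompact (Icc 0 t₁ ∩ {t | ‖σ t - y‖ = r}) :=
    isCompact_Icc.inter_right (isClosed_eq hc continuous_const)
  have hne : (Icc 0 t₁ ∩ {t | ‖σ t - y‖ = r}).Nonempty := by
    obtain ⟨t, ht, h⟩ := intermediate_value_Icc ht₁.1 hc.continuousOn ⟨h0, hr.le⟩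
    exact ⟨t, ht, h⟩
  obtain ⟨τ, ⟨hτ, hτr⟩, hleast⟩ := hK.exists_isLeast hne
  refine ⟨τ, ⟨hτ.1, hτ.2.trans ht₁.2⟩, fun t ht => ?_, Or.inr hτr⟩
  by_contra hcon
  push Not at hcon
  obtain ⟨t', ht', h'⟩ := intermediate_value_Icc ht.1 hc.continuousOn ⟨h0, hcon.le⟩
  have h2 : τ ≤ t' := hleast ⟨⟨ht'.1, ht'.2.trans (ht.2.trans hτ.2)⟩, h'⟩
  have h3 : t' = t := le_antisymm ht'.2 (ht.2.trans h2)
  rw [h3] at h'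
  simp only at h'
  linarith

/-- Uniform constants for the metric on a ball: comparison with the Euclidean norm, and a Lipschitz
constant. -/
structure BallConst (B : En n → En n →L[ℝ] En n →L[ℝ] ℝ) (R m M K : ℝ) : Prop where
  m_pos : 0 < m
  m_le : m ≤ M
  K_nonneg : 0 ≤ K
  lower : ∀ x, ‖x‖ ≤ R → ∀ v, m * ‖v‖ ^ 2 ≤ B x v v
  upper : ∀ x, ‖x‖ ≤ R → ∀ v, B x v v ≤ M * ‖v‖ ^ 2
  lip : ∀ x y, ‖x‖ ≤ R → ‖y‖ ≤ R → ‖B x - B y‖ ≤ K * ‖x - y‖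

theorem exists_ballConst (hB : RiemForm B) (R : ℝ) : ∃ m M K, BallConst B R m M K := by
  have hcB := hB.contDiff.continuous
  have hK1 : IsCompact (Metric.closedBall (0 : En n) R) := isCompact_closedBall _ _
  obtain ⟨m, hm, hml⟩ := (hK1.prod (isCompact_sphere (0 : En n) 1)).exists_forall_le'
    (f := fun z : En n × En n => B z.1 z.2 z.2) (a := 0)
    (by
      refine Continuous.continuousOn ?_
      exact ((hcB.comp continuous_fst).clm_apply continuous_snd).clm_apply continuous_snd)
    (fun z hz => hB.pos _ _ (by
      have : ‖z.2‖ = 1 := by simpa using hz.2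
      exact norm_pos_iff.1 (by rw [this]; exact one_pos)))
  obtain ⟨M, hM⟩ := hK1.exists_bound_of_continuousOn (f := B) hcB.continuousOn
  obtain ⟨K, hK⟩ := hK1.exists_bound_of_continuousOn (f := fderiv ℝ B)
    (hB.contDiff.continuous_fderiv one_ne_zero).continuousOn
  refine ⟨m, max M m, max K 0, ⟨hm, le_max_right _ _, le_max_right _ _, ?_, ?_, ?_⟩⟩
  · intro x hx v
    rcases eq_or_ne v 0 with rfl | hv
    · simp
    have hv' : 0 < ‖v‖ := norm_pos_iff.2 hv
    have h := hml (x, ‖v‖⁻¹ • v) ⟨by simpa using hx, by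
      simp [norm_smul, inv_mul_cancel₀ hv'.ne']⟩
    simp only [map_smul, smul_apply, smul_eq_mul] at h
    have h2 := mul_le_mul_of_nonneg_right h (sq_nonneg ‖v‖)
    calc m * ‖v‖ ^ 2 ≤ _ := h2
      _ = B x v v := by field_simp
  · intro x hx v
    have h1 := hM x (by simpa using hx)
    have h2 : ‖B x v v‖ ≤ ‖B x‖ * ‖v‖ * ‖v‖ := (B x).le_opNorm₂ v v
    have h3 : ‖B x‖ * ‖v‖ * ‖v‖ ≤ max M m * ‖v‖ * ‖v‖ := by
      gcongr; exact h1.trans (le_max_left _ _)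
    calc B x v v ≤ ‖B x v v‖ := le_abs_self _
      _ ≤ max M m * ‖v‖ * ‖v‖ := h2.trans h3
      _ = _ := by ring
  · intro x y hx hy
    refine (convex_closedBall (0 : En n) R).norm_image_sub_le_of_norm_fderiv_le (𝕜 := ℝ)
      (fun z _ => hB.contDiff.differentiable one_ne_zero z)
      (fun z hz => (hK z hz).trans (le_max_left _ _)) ?_ ?_ <;> simpa

theorem BallConst.compare {R m M K : ℝ} (h : BallConst B R m M K) {x y : En n} (hx : ‖x‖ ≤ R)
    (hy : ‖y‖ ≤ R) (v : En n) : |B x v v - B y v v| ≤ K / m * ‖x - y‖ * B y v v := by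
  have h1 : |(B x - B y) v v| ≤ ‖B x - B y‖ * ‖v‖ * ‖v‖ := (B x - B y).le_opNorm₂ v v
  have h2 := h.lip x y hx hy
  have h3 := h.lower y hy v
  have hm := h.m_pos
  have hK := h.K_nonneg
  calc |B x v v - B y v v| ≤ ‖B x - B y‖ * ‖v‖ * ‖v‖ := h1
    _ ≤ K * ‖x - y‖ * ‖v‖ * ‖v‖ := by gcongr
    _ = K / m * ‖x - y‖ * (m * ‖v‖ ^ 2) := by field_simp
    _ ≤ K / m * ‖x - y‖ * B y v v := by gcongr

/-- Leaving the ball of radius `s` around `p` costs length at least `√m * s`. -/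
theorem rdist_ge_min (hB : RiemForm B) {R m M K : ℝ} (h : BallConst B R m M K) {p q : En n}
    {s : ℝ} (hs : 0 ≤ s) (hp : ‖p‖ + s ≤ R) :
    √m * min ‖q - p‖ s ≤ rdist (gB B) p q := by
  refine le_rdist fun σ hσ h0 h1 => ?_
  obtain ⟨τ, hτ, hin, hout⟩ := exists_exit_time hσ.continuous (y := p) (r := s)
    (by rw [h0]; simpa using hs)
  let b : En n →L[ℝ] En n →L[ℝ] ℝ := innerSL ℝ
  have hb : ∀ v, b v v = ‖v‖ ^ 2 := real_inner_self_eq_norm_sq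
  have key := displacement_le_clen hB hσ hτ (Real.sqrt_nonneg m) (b := b)
    (fun v w => real_inner_comm w v) (fun v => by rw [hb]; positivity)
    (fun t ht v => by
      rw [Real.sq_sqrt h.m_pos.le]
      have h2 : ‖σ t‖ ≤ R := by
        have := norm_add_le (σ t - p) p
        rw [sub_add_cancel] at this
        linarith [hin t ht]
      rw [hb]; exact h.lower _ h2 v)
  refine le_trans ?_ key
  refine mul_le_mul_of_nonneg_left ?_ (Real.sqrt_nonneg _)
  rw [hb, Real.sqrt_sq (norm_nonneg _), h0]
  rcases hout with rfl | h2
  · rw [h1]; exact min_le_left _ _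
  · rw [h2]; exact min_le_right _ _

/-- Near `y` the squared distance is at most the form frozen at `y`, up to a relative error linear in
the size of the neighbourhood: measure the straight segment. -/
theorem rdist_sq_le (hB : RiemForm B) {R m M K : ℝ} (h : BallConst B R m M K) {p q y : En n}
    {s : ℝ} (hy : ‖y‖ + s ≤ R) (hp : ‖p - y‖ ≤ s) (hq : ‖q - y‖ ≤ s) :
    rdist (gB B) p q ^ 2 ≤ (1 + K / m * s) * B y (q - p) (q - p) := by
  have hs : 0 ≤ s := (norm_nonneg _).trans hp
  have hm := h.m_pos
  have hK := h.K_nonneg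
  set σ : ℝ → En n := fun t => p + t • (q - p) with hσ
  have hσc : ContDiff ℝ 1 σ := by simp only [hσ]; fun_prop
  have hd : ∀ t, deriv σ t = q - p := by
    intro t
    have : HasDerivAt σ ((1 : ℝ) • (q - p)) t :=
      ((hasDerivAt_id t).smul_const (q - p)).const_add p
    rw [this.deriv, one_smul]
  have hle := rdist_le_length (B := B) hσc zero_lt_one
  have hb : ∀ t ∈ Icc (0 : ℝ) 1, √(B (σ t) (deriv σ t) (deriv σ t)) ≤
      √((1 + K / m * s) * B y (q - p) (q - p)) := by
    intro t ht
    refine Real.sqrt_le_sqrt ?_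
    rw [hd]
    have h1 : ‖σ t - y‖ ≤ s := by
      have e : σ t - y = (1 - t) • (p - y) + t • (q - y) := by simp only [hσ]; module
      rw [e]
      refine (norm_add_le _ _).trans ?_
      rw [norm_smul, norm_smul, Real.norm_of_nonneg (sub_nonneg.2 ht.2), Real.norm_of_nonneg ht.1]
      nlinarith [ht.1, ht.2]
    have h2 : ‖σ t‖ ≤ R := by
      have := norm_add_le (σ t - y) y
      rw [sub_add_cancel] at this
      linarith
    have h3 := (le_abs_self _).trans (h.compare (y := y) h2 (by linarith) (q - p))
    have h4 : K / m * ‖σ t - y‖ * B y (q - p) (q - p) ≤ K / m * s * B y (q - p) (q - p) := by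
      have := hB.nonneg y (q - p)
      gcongr
    linarith
  have h5 : ∫ t in (0 : ℝ)..1, √(B (σ t) (deriv σ t) (deriv σ t)) ≤
      √((1 + K / m * s) * B y (q - p) (q - p)) := by
    have := intervalIntegral.integral_mono_on (μ := MeasureTheory.volume) zero_le_one
      ((continuous_speed hB hσc).intervalIntegrable 0 1)
      (continuous_const.intervalIntegrable 0 1) hb
    simpa using this
  have h6 : rdist (gB B) p q ≤ √((1 + K / m * s) * B y (q - p) (q - p)) := by
    refine le_trans ?_ h5
    simpa [hσ] using hle
  calc rdist (gB B) p q ^ 2 ≤ √((1 + K / m * s) * B y (q - p) (q - p)) ^ 2 := by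
        gcongr; exact rdist_nonneg _ _ _
    _ = _ := Real.sq_sqrt (mul_nonneg (by positivity) (hB.nonneg _ _))

/-- The factor by which a ball is enlarged so that leaving the larger ball costs more than crossing
the smaller one. -/
noncomputable def escapeFactor (m M : ℝ) : ℝ := 1 + 2 * √(M / m)

/-- The matching lower bound. A curve that stays in the enlarged ball is compared with the form frozen
at `y`; a curve that leaves it is too long to matter. -/
theorem le_rdist_sq (hB : RiemForm B) {R m M K : ℝ} (h : BallConst B R m M K) {p q y : En n}
    {s : ℝ} (hy : ‖y‖ + escapeFactor m M * s ≤ R) (hp : ‖p - y‖ ≤ s) (hq : ‖q - y‖ ≤ s)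
    (hsmall : K / m * (escapeFactor m M * s) ≤ 1) :
    (1 - K / m * (escapeFactor m M * s)) * B y (q - p) (q - p) ≤ rdist (gB B) p q ^ 2 := by
  set A := escapeFactor m M with hA
  have hA1 : 1 ≤ A := by
    rw [hA, escapeFactor]; have := Real.sqrt_nonneg (M / m); linarith
  have hs : 0 ≤ s := (norm_nonneg _).trans hp
  have hm := h.m_pos
  have hM : 0 < M := hm.trans_le h.m_le
  have hK := h.K_nonneg
  have hAs : 0 ≤ A * s := by positivity
  set κ2 := 1 - K / m * (A * s) with hκ2
  have hκ0 : 0 ≤ κ2 := by linarith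
  have hyR : ‖y‖ ≤ R := by linarith
  have hle : √κ2 * √(B y (q - p) (q - p)) ≤ rdist (gB B) p q := by
    refine le_rdist fun σ hσ h0 h1 => ?_
    obtain ⟨τ, hτ, hin, hout⟩ := exists_exit_time hσ.continuous (y := y) (r := A * s)
      (by rw [h0]; nlinarith)
    have key := displacement_le_clen hB hσ hτ (Real.sqrt_nonneg κ2) (b := B y)
      (hB.symm y) (hB.nonneg y)
      (fun t ht v => by
        rw [Real.sq_sqrt hκ0]
        have h2 : ‖σ t‖ ≤ R := by
          have := norm_add_le (σ t - y) y
          rw [sub_add_cancel] at this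
          linarith [hin t ht]
        have h3 := (neg_abs_le _).trans' (neg_le_neg (h.compare h2 hyR v))
        have h4 : K / m * ‖σ t - y‖ * B y v v ≤ K / m * (A * s) * B y v v := by
          have := hB.nonneg y v
          have := hin t ht
          gcongr
        rw [hκ2]; linarith)
    refine le_trans ?_ key
    refine mul_le_mul_of_nonneg_left (Real.sqrt_le_sqrt ?_) (Real.sqrt_nonneg _)
    rw [h0]
    rcases hout with rfl | h2
    · rw [h1]
    · -- the curve has left the large ball, so its displacement exceeds the diameter `2s`
      have h3 : ‖q - p‖ ≤ 2 * s := by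
        have := norm_sub_le (q - y) (p - y)
        rw [sub_sub_sub_cancel_right] at this
        linarith
      have h4 : (A - 1) * s ≤ ‖σ τ - p‖ := by
        have := norm_sub_norm_le (σ τ - y) (p - y)
        rw [sub_sub_sub_cancel_right] at this
        linarith
      have h5 : A - 1 = 2 * √(M / m) := by rw [hA, escapeFactor]; ring
      have h6 : (2 * √(M / m) * s) ^ 2 ≤ ‖σ τ - p‖ ^ 2 := by
        rw [← h5]
        have : 0 ≤ (A - 1) * s := mul_nonneg (by linarith) hs
        gcongr
      have h7 : (2 * √(M / m) * s) ^ 2 = M / m * (2 * s) ^ 2 := by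
        rw [mul_pow, mul_pow, Real.sq_sqrt (by positivity)]; ring
      calc B y (q - p) (q - p) ≤ M * ‖q - p‖ ^ 2 := h.upper y hyR _
        _ ≤ M * (2 * s) ^ 2 := by gcongr
        _ = m * (M / m * (2 * s) ^ 2) := by field_simp
        _ ≤ m * ‖σ τ - p‖ ^ 2 := by rw [← h7]; gcongr
        _ ≤ _ := h.lower y hyR _
  calc κ2 * B y (q - p) (q - p) = (√κ2 * √(B y (q - p) (q - p))) ^ 2 := by
        rw [mul_pow, Real.sq_sqrt hκ0, Real.sq_sqrt (hB.nonneg _ _)]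
    _ ≤ rdist (gB B) p q ^ 2 := by gcongr

end Length

/-! ### Metric geodesics are `C¹` -/

/-- Second differences of size `O(h ^ (3/2))` make the dyadic difference quotients uniformly Cauchy,
so the curve is `C¹`. For metric geodesics such a bound follows from `rdist_sq_le`, `le_rdist_sq`
and the parallelogram law. -/
theorem c1_of_second_difference {n : ℕ} {γ : ℝ → En n} (hγ : Continuous γ) {a b h₀ K : ℝ}
    (hh : 0 < h₀) (hK : 0 ≤ K)
    (hsd : ∀ t ∈ Ioo a b, ∀ h, 0 < h → h ≤ h₀ →
      ‖(γ (t + 2 * h) - γ (t + h)) - (γ (t + h) - γ t)‖ ^ 2 ≤ K * h ^ 3) :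
    ∃ v : ℝ → En n, ContinuousOn v (Ioo a b) ∧ ∀ t ∈ Ioo a b, HasDerivAt γ (v t) t := by
  set h : ℕ → ℝ := fun k => h₀ / 2 ^ k with hhk
  have hpos : ∀ k, 0 < h k := fun k => by simp only [hhk]; positivity
  have hle : ∀ k, h k ≤ h₀ := fun k => div_le_self hh.le (one_le_pow₀ one_le_two)
  have hsucc : ∀ k, h k = 2 * h (k + 1) := fun k => by simp only [hhk, pow_succ]; field_simp
  set Q : ℕ → ℝ → En n := fun k t => (h k)⁻¹ • (γ (t + h k) - γ t) with hQ
  set r : ℝ := √(1 / 2) with hr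
  have hr0 : 0 ≤ r := Real.sqrt_nonneg _
  have hr1 : r < 1 := by
    rw [hr, Real.sqrt_lt' one_pos]; norm_num
  set C : ℝ := √(K * h₀) with hC
  have hstep : ∀ t ∈ Ioo a b, ∀ k, dist (Q k t) (Q (k + 1) t) ≤ C * r ^ k := by
    intro t ht k
    have hp := hpos (k + 1)
    have e : Q k t - Q (k + 1) t = (2 * h (k + 1))⁻¹ •
        ((γ (t + 2 * h (k + 1)) - γ (t + h (k + 1))) - (γ (t + h (k + 1)) - γ t)) := by
      simp only [hQ]
      rw [hsucc k]
      have : (h (k + 1))⁻¹ = 2 * (2 * h (k + 1))⁻¹ := by field_simp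
      rw [this]
      module
    have h1 := hsd t ht (h (k + 1)) hp (hle _)
    rw [dist_eq_norm, e, norm_smul, Real.norm_of_nonneg (by positivity)]
    refine abs_le_of_sq_le_sq' ?_ (by positivity) |>.2
    have hrk : (r ^ k) ^ 2 = 1 / 2 ^ k := by
      rw [← pow_mul, mul_comm, pow_mul, hr, Real.sq_sqrt (by norm_num), one_div, inv_pow, one_div]
    rw [mul_pow, mul_pow, hrk, hC, Real.sq_sqrt (by positivity)]
    calc _ ≤ ((2 * h (k + 1))⁻¹) ^ 2 * (K * h (k + 1) ^ 3) := by gcongr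
      _ = K * h (k + 1) / 4 := by field_simp; ring
      _ ≤ K * h k := by
          rw [hsucc k]; nlinarith [mul_nonneg hK hp.le]
      _ = _ := by simp only [hhk]; ring
  choose! v hv using fun t ht => cauchySeq_tendsto_of_complete
    (cauchySeq_of_le_geometric r C hr1 (hstep t ht))
  have hdist : ∀ t ∈ Ioo a b, ∀ k, dist (Q k t) (v t) ≤ C * r ^ k / (1 - r) := fun t ht k =>
    dist_le_of_le_geometric_of_tendsto r C hr1 (hstep t ht) (hv t ht) k
  have hunif : TendstoUniformlyOn Q v atTop (Ioo a b) := by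
    rw [Metric.tendstoUniformlyOn_iff]
    intro ε hε
    have hlim : Tendsto (fun k => C * r ^ k / (1 - r)) atTop (nhds 0) := by
      have := ((tendsto_pow_atTop_nhds_zero_of_lt_one hr0 hr1).const_mul C).div_const (1 - r)
      simpa using this
    filter_upwards [hlim.eventually_lt_const hε] with k hk t ht
    rw [dist_comm]
    exact (hdist t ht k).trans_lt hk
  have hQc : ∀ k, Continuous (Q k) := fun k => by simp only [hQ]; fun_prop
  refine ⟨v, hunif.continuousOn (Frequently.of_forall fun k => (hQc k).continuousOn), ?_⟩
  -- the Steklov averages of `γ` have the difference quotients as derivatives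
  set F : ℝ → En n := fun t => ∫ s in (0 : ℝ)..t, γ s with hF
  have hFd : ∀ t, HasDerivAt F (γ t) t := fun t =>
    intervalIntegral.integral_hasDerivAt_right (hγ.intervalIntegrable _ _)
      hγ.aestronglyMeasurable.stronglyMeasurableAtFilter hγ.continuousAt
  intro t ht
  refine hasDerivAt_of_tendstoUniformlyOn (f := fun k t => (h k)⁻¹ • (F (t + h k) - F t))
    isOpen_Ioo hunif (Eventually.of_forall fun k t _ => ?_) (fun t _ => ?_) ht
  · have h1 := ((hFd (t + h k)).comp_add_const t (h k)).fun_sub (hFd t)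
    exact h1.fun_const_smul ((h k)⁻¹ : ℝ)
  · have h1 := (hFd t).tendsto_slope_zero_right
    refine h1.comp (tendsto_nhdsWithin_iff.2 ⟨?_, Eventually.of_forall hpos⟩)
    have := (tendsto_pow_atTop_nhds_zero_of_lt_one (r := (1 / 2 : ℝ)) (by norm_num)
      (by norm_num)).const_mul h₀
    simp only [mul_zero] at this
    refine this.congr fun k => ?_
    simp only [hhk]; rw [one_div, inv_pow]; rfl

/-- A curve that is isometric to an interval near `t₀` is `C¹` with unit speed near `t₀`. -/
theorem geodesic_local_c1 {n : ℕ} {B : En n → En n →L[ℝ] En n →L[ℝ] ℝ} (hB : RiemForm B)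
    {γ : ℝ → En n} {t₀ δ : ℝ} (hδ : 0 < δ)
    (hgeo : ∀ s ∈ Icc (t₀ - δ) (t₀ + δ), ∀ u ∈ Icc (t₀ - δ) (t₀ + δ),
      rdist (gB B) (γ s) (γ u) = |s - u|) :
    ∃ η > 0, η ≤ δ ∧ ∃ v : ℝ → En n, ContinuousOn v (Ioo (t₀ - η) (t₀ + η)) ∧
      ∀ t ∈ Ioo (t₀ - η) (t₀ + η), HasDerivAt γ (v t) t ∧ B (γ t) (v t) (v t) = 1 := by
  set R := ‖γ t₀‖ + 3 with hR
  obtain ⟨m, M, K, hc⟩ := exists_ballConst hB R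
  have hm := hc.m_pos
  have hKn := hc.K_nonneg
  have hsm : 0 < √m := Real.sqrt_pos.2 hm
  set d := min δ (√m / 4) with hd
  have hd0 : 0 < d := lt_min hδ (by positivity)
  have hdδ : d ≤ δ := min_le_left _ _
  have hdm : d ≤ √m / 4 := min_le_right _ _
  have hmem : ∀ s ∈ Icc (t₀ - d) (t₀ + d), s ∈ Icc (t₀ - δ) (t₀ + δ) := fun s hs =>
    ⟨by linarith [hs.1], by linarith [hs.2]⟩
  have hclose : ∀ p q : En n, ‖p‖ ≤ ‖γ t₀‖ + 1 → rdist (gB B) p q ≤ √m / 2 →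
      ‖q - p‖ ≤ rdist (gB B) p q / √m ∧ ‖q - p‖ ≤ 1 := by
    intro p q hp hpq
    have h1 := rdist_ge_min hB hc (p := p) (q := q) (s := 1) zero_le_one (by rw [hR]; linarith)
    have h2 : min ‖q - p‖ 1 < 1 := by
      by_contra hcon
      push Not at hcon
      nlinarith
    have h3 : ‖q - p‖ < 1 := by
      rcases min_lt_iff.1 h2 with h | h
      · exact h
      · exact absurd h (lt_irrefl _)
    rw [min_eq_left h3.le] at h1
    exact ⟨by rw [le_div_iff₀ hsm]; linarith, h3.le⟩
  have ht₀ : t₀ ∈ Icc (t₀ - d) (t₀ + d) := ⟨by linarith, by linarith⟩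
  have hbd : ∀ s ∈ Icc (t₀ - d) (t₀ + d), ‖γ s‖ ≤ ‖γ t₀‖ + 1 := by
    intro s hs
    have h1 := hgeo t₀ (hmem _ ht₀) s (hmem s hs)
    have h2 : |t₀ - s| ≤ d := by rw [abs_le]; constructor <;> linarith [hs.1, hs.2]
    have h3 := (hclose (γ t₀) (γ s) (by linarith) (by rw [h1]; linarith)).2
    have := norm_add_le (γ s - γ t₀) (γ t₀)
    rw [sub_add_cancel] at this
    linarith
  set c := 1 / √m with hcdef
  have hc0 : 0 < c := by positivity
  have hlip : ∀ s ∈ Icc (t₀ - d) (t₀ + d), ∀ u ∈ Icc (t₀ - d) (t₀ + d),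
      ‖γ u - γ s‖ ≤ c * |s - u| := by
    intro s hs u hu
    have h1 := hgeo s (hmem s hs) u (hmem u hu)
    have h2 : |s - u| ≤ 2 * d := by rw [abs_le]; constructor <;> linarith [hs.1, hs.2, hu.1, hu.2]
    have h3 := (hclose (γ s) (γ u) (hbd s hs) (by rw [h1]; linarith)).1
    rw [h1] at h3
    rw [hcdef]; refine h3.trans (le_of_eq ?_); ring
  set A := escapeFactor m M with hA
  have hA1 : 1 ≤ A := by
    rw [hA, escapeFactor]; have := Real.sqrt_nonneg (M / m); linarith
  set q := K / m * (A * c) with hq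
  have hq0 : 0 ≤ q := by positivity
  -- comparison of the distance with the frozen metric at scale `h`
  have hcmp : ∀ h, A * c * h ≤ 1 → q * h ≤ 1 / 2 → ∀ t ∈ Icc (t₀ - d) (t₀ + d),
      ∀ s ∈ Icc (t₀ - d) (t₀ + d), ∀ u ∈ Icc (t₀ - d) (t₀ + d), |t - s| ≤ h → |t - u| ≤ h →
      (1 - q * h) * B (γ t) (γ u - γ s) (γ u - γ s) ≤ |s - u| ^ 2 ∧
        |s - u| ^ 2 ≤ (1 + q * h) * B (γ t) (γ u - γ s) (γ u - γ s) := by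
    intro h h1 h2 t ht s hs u hu hts htu
    have hh : 0 ≤ h := (abs_nonneg _).trans hts
    have e : K / m * (A * (c * h)) = q * h := by rw [hq]; ring
    have hp : ‖γ s - γ t‖ ≤ c * h := (hlip t ht s hs).trans (by gcongr)
    have hp' : ‖γ u - γ t‖ ≤ c * h := (hlip t ht u hu).trans (by gcongr)
    have hb := hbd t ht
    rw [← hgeo s (hmem s hs) u (hmem u hu)]
    constructor
    · have := le_rdist_sq hB hc (p := γ s) (q := γ u) (y := γ t) (s := c * h)
        (by rw [← hA, hR]; linarith) hp hp' (by rw [← hA, e]; linarith)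
      rwa [← hA, e] at this
    · have hAc : c * h ≤ A * c * h := by
        have : 0 ≤ c * h := by positivity
        nlinarith
      have := rdist_sq_le hB hc (p := γ s) (q := γ u) (y := γ t) (s := c * h)
        (by rw [hR]; linarith) hp hp'
      refine this.trans ?_
      refine mul_le_mul_of_nonneg_right ?_ (hB.nonneg _ _)
      rw [hq]
      have : K / m * (c * h) ≤ K / m * (A * c * h) := by gcongr
      linarith
  -- the clamped curve, which is continuous on the whole line
  set pr : ℝ → ℝ := fun t => max (t₀ - d) (min t (t₀ + d)) with hpr
  have hprc : Continuous pr := by simp only [hpr]; fun_prop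
  have hprm : ∀ t, pr t ∈ Icc (t₀ - d) (t₀ + d) := fun t =>
    ⟨le_max_left _ _, max_le (by linarith) (min_le_right _ _)⟩
  have hpre : ∀ t ∈ Icc (t₀ - d) (t₀ + d), pr t = t := fun t ht => by
    simp only [hpr]; rw [min_eq_left ht.2, max_eq_right ht.1]
  have hγc : Continuous fun t => γ (pr t) := by
    rw [Metric.continuous_iff]
    intro t ε hε
    obtain ⟨δ', hδ', h⟩ := Metric.continuous_iff.1 hprc t (ε / c) (by positivity)
    refine ⟨δ', hδ', fun s hs => ?_⟩
    rw [dist_eq_norm]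
    refine (hlip _ (hprm t) _ (hprm s)).trans_lt ?_
    have := h s hs
    rw [dist_comm, Real.dist_eq, lt_div_iff₀ hc0] at this
    linarith
  set h₀ := min (d / 4) (min (1 / (A * c)) (1 / (2 * q + 1))) with hh₀
  have hh₀0 : 0 < h₀ := by
    refine lt_min (by positivity) (lt_min (by positivity) (by positivity))
  have hh1 : ∀ h, 0 ≤ h → h ≤ h₀ → h ≤ d / 4 ∧ A * c * h ≤ 1 ∧ q * h ≤ 1 / 2 := by
    intro h hh hle
    have a1 := hle.trans (min_le_left _ _)
    have a2 := hle.trans ((min_le_right _ _).trans (min_le_left _ _))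
    have a3 := hle.trans ((min_le_right _ _).trans (min_le_right _ _))
    rw [le_div_iff₀ (by positivity)] at a2 a3
    exact ⟨a1, by linarith, by nlinarith⟩
  obtain ⟨v, hvc, hvd⟩ := c1_of_second_difference hγc (a := t₀ - d / 2) (b := t₀ + d / 2) hh₀0
    (K := 12 * q / m) (by positivity) (by
      intro t ht h hh0 hhle
      obtain ⟨b1, b2, b3⟩ := hh1 h hh0.le hhle
      have m0 : t ∈ Icc (t₀ - d) (t₀ + d) := ⟨by linarith [ht.1], by linarith [ht.2]⟩
      have m1 : t + h ∈ Icc (t₀ - d) (t₀ + d) := ⟨by linarith [ht.1], by linarith [ht.2]⟩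
      have m2 : t + 2 * h ∈ Icc (t₀ - d) (t₀ + d) := ⟨by linarith [ht.1], by linarith [ht.2]⟩
      rw [hpre _ m0, hpre _ m1, hpre _ m2]
      have s1 : |t + h - t| ≤ h := by rw [add_sub_cancel_left, abs_of_pos hh0]
      have s2 : |t + h - (t + 2 * h)| ≤ h := by
        rw [show t + h - (t + 2 * h) = -h by ring, abs_neg, abs_of_pos hh0]
      have s3 : |t + h - (t + h)| ≤ h := by simpa using hh0.le
      have c1 := (hcmp h b2 b3 _ m1 _ m0 _ m1 s1 s3).1
      have c2 := (hcmp h b2 b3 _ m1 _ m1 _ m2 s3 s2).1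
      have c3 := (hcmp h b2 b3 _ m1 _ m0 _ m2 s1 s2).2
      rw [show t - (t + h) = -h by ring, abs_neg, abs_of_pos hh0] at c1
      rw [show t + h - (t + 2 * h) = -h by ring, abs_neg, abs_of_pos hh0] at c2
      rw [show t - (t + 2 * h) = -(2 * h) by ring, abs_neg, abs_of_pos (by positivity)] at c3
      set y := γ (t + h) with hy
      set X := γ (t + h) - γ t with hX
      set Z := γ (t + 2 * h) - γ (t + h) with hZ
      have hXZ : γ (t + 2 * h) - γ t = X + Z := by rw [hX, hZ]; abel
      rw [hXZ] at c3
      have e1 : B y (Z - X) (Z - X) = 2 * B y X X + 2 * B y Z Z - B y (X + Z) (X + Z) := by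
        simp only [map_sub, map_add, sub_apply, add_apply]
        ring
      have l := hc.lower y ((hbd _ m1).trans (by rw [hR]; linarith)) (Z - X)
      have hqh : 0 ≤ q * h := by positivity
      have nX := hB.nonneg y X
      have nZ := hB.nonneg y Z
      have nS := hB.nonneg y (X + Z)
      have d1 : B y X X ≤ h ^ 2 * (1 + 2 * (q * h)) := by
        have : (1 - q * h) * B y X X ≤ (1 - q * h) * (h ^ 2 * (1 + 2 * (q * h))) := by
          refine c1.trans ?_
          have : 0 ≤ h ^ 2 * (q * h * (1 - 2 * (q * h))) := by
            have : 0 ≤ 1 - 2 * (q * h) := by linarith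
            positivity
          linarith
        exact le_of_mul_le_mul_left this (by linarith)
      have d2 : B y Z Z ≤ h ^ 2 * (1 + 2 * (q * h)) := by
        have : (1 - q * h) * B y Z Z ≤ (1 - q * h) * (h ^ 2 * (1 + 2 * (q * h))) := by
          refine c2.trans ?_
          have : 0 ≤ h ^ 2 * (q * h * (1 - 2 * (q * h))) := by
            have : 0 ≤ 1 - 2 * (q * h) := by linarith
            positivity
          linarith
        exact le_of_mul_le_mul_left this (by linarith)
      have d3 : 4 * h ^ 2 * (1 - q * h) ≤ B y (X + Z) (X + Z) := by
        have : (1 + q * h) * (4 * h ^ 2 * (1 - q * h)) ≤ (1 + q * h) * B y (X + Z) (X + Z) := by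
          refine le_trans ?_ c3
          have : 0 ≤ 4 * h ^ 2 * (q * h) ^ 2 := by positivity
          linarith
        exact le_of_mul_le_mul_left this (by linarith)
      have e2 : 12 * q / m * h ^ 3 = (12 * q * h ^ 3) / m := by ring
      rw [e2, le_div_iff₀ hm]
      linarith)
  refine ⟨d / 2, by positivity, by linarith, v, hvc, fun t ht => ?_⟩
  have hder : HasDerivAt γ (v t) t := by
    refine (hvd t ht).congr_of_eventuallyEq ?_
    filter_upwards [Ioo_mem_nhds ht.1 ht.2] with s hs
    rw [hpre s ⟨by linarith [hs.1], by linarith [hs.2]⟩]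
  refine ⟨hder, ?_⟩
  have hsl := hder.tendsto_slope_zero_right
  have hB2 : Tendsto (fun h : ℝ => B (γ t) (h⁻¹ • (γ (t + h) - γ t)) (h⁻¹ • (γ (t + h) - γ t)))
      (nhdsWithin 0 (Ioi 0)) (nhds (B (γ t) (v t) (v t))) := by
    have hcont : Continuous fun w : En n => B (γ t) w w :=
      (B (γ t)).continuous.clm_apply continuous_id
    exact (hcont.tendsto (v t)).comp hsl
  have hid : Tendsto (fun h : ℝ => q * h) (nhdsWithin 0 (Ioi 0)) (nhds 0) := by
    have : Tendsto (fun h : ℝ => q * h) (nhds 0) (nhds (q * 0)) :=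
      (continuous_const.mul continuous_id).tendsto 0
    rw [mul_zero] at this
    exact this.mono_left nhdsWithin_le_nhds
  have hev : ∀ᶠ h : ℝ in nhdsWithin 0 (Ioi 0),
      (1 - q * h) * B (γ t) (h⁻¹ • (γ (t + h) - γ t)) (h⁻¹ • (γ (t + h) - γ t)) ≤ 1 ∧
      1 ≤ (1 + q * h) * B (γ t) (h⁻¹ • (γ (t + h) - γ t)) (h⁻¹ • (γ (t + h) - γ t)) := by
    filter_upwards [Ioo_mem_nhdsGT hh₀0] with h hh
    obtain ⟨b1, b2, b3⟩ := hh1 h hh.1.le hh.2.le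
    have m0 : t ∈ Icc (t₀ - d) (t₀ + d) := ⟨by linarith [ht.1], by linarith [ht.2]⟩
    have m1 : t + h ∈ Icc (t₀ - d) (t₀ + d) := ⟨by linarith [ht.1, hh.1], by linarith [ht.2]⟩
    have := hcmp h b2 b3 t m0 t m0 (t + h) m1 (by simpa using hh.1.le)
      (by rw [show t - (t + h) = -h by ring, abs_neg, abs_of_pos hh.1])
    rw [show t - (t + h) = -h by ring, abs_neg, abs_of_pos hh.1] at this
    have hh0 := hh.1
    simp only [map_smul, smul_apply, smul_eq_mul]
    have e : ∀ X k : ℝ, k * (h⁻¹ * (h⁻¹ * X)) = k * X / h ^ 2 := fun X k => by field_simp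
    rw [e, e, div_le_one (by positivity), one_le_div (by positivity)]
    exact this
  refine le_antisymm ?_ ?_
  · have := ((tendsto_const_nhds (x := (1 : ℝ))).sub hid).mul hB2
    rw [sub_zero, one_mul] at this
    exact le_of_tendsto this (hev.mono fun h hh => hh.1)
  · have := ((tendsto_const_nhds (x := (1 : ℝ))).add hid).mul hB2
    rw [add_zero, one_mul] at this
    exact ge_of_tendsto this (hev.mono fun h hh => hh.2)

/-! ### The Euler–Lagrange equation -/

section EulerLagrange

variable {n : ℕ} {B : En n → En n →L[ℝ] En n →L[ℝ] ℝ}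

/-- The lemma of du Bois-Reymond: a weak derivative is a derivative. -/
theorem du_bois_reymond {P N : ℝ → ℝ} (hP : Continuous P) (hN : Continuous N) {s u : ℝ}
    (hsu : s < u)
    (h : ∀ φ : ℝ → ℝ, ContDiff ℝ 1 φ → φ s = 0 → φ u = 0 →
      ∫ t in s..u, (N t * φ t + P t * deriv φ t) = 0) :
    ∀ t ∈ Ioo s u, HasDerivAt P (N t) t := by
  have hd : ∀ (f : ℝ → ℝ), Continuous f → ∀ t, HasDerivAt (fun t => ∫ r in s..t, f r) (f t) t :=
    fun f hf t => intervalIntegral.integral_hasDerivAt_right (hf.intervalIntegrable _ _)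
      hf.aestronglyMeasurable.stronglyMeasurableAtFilter hf.continuousAt
  set G : ℝ → ℝ := fun t => ∫ r in s..t, N r with hG
  have hGd := hd N hN
  have hGc : Continuous G := continuous_iff_continuousAt.2 fun t => (hGd t).continuousAt
  set k : ℝ → ℝ := fun t => P t - G t with hk
  have hkc : Continuous k := hP.sub hGc
  set kb : ℝ := (∫ t in s..u, k t) / (u - s) with hkb
  set φ : ℝ → ℝ := fun t => ∫ r in s..t, (k r - kb) with hφ
  have hkbc : Continuous fun t => k t - kb := hkc.sub continuous_const
  have hφd := hd _ hkbc
  have hus : u - s ≠ 0 := (sub_pos.2 hsu).ne'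
  have hφd' : deriv φ = fun t => k t - kb := funext fun t => (hφd t).deriv
  have hφ1 : ContDiff ℝ 1 φ := by
    rw [contDiff_one_iff_deriv]
    exact ⟨fun t => (hφd t).differentiableAt, by rw [hφd']; exact hkbc⟩
  have hφs : φ s = 0 := by simp [hφ]
  have hφu : φ u = 0 := by
    simp only [hφ]
    rw [intervalIntegral.integral_sub (hkc.intervalIntegrable _ _)
      (continuous_const.intervalIntegrable _ _), intervalIntegral.integral_const, hkb]
    simp only [smul_eq_mul]; field_simp; ring
  have h1 := h φ hφ1 hφs hφu
  have h2 : ∫ t in s..u, (N t * φ t + G t * deriv φ t) = 0 := by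
    rw [intervalIntegral.integral_eq_sub_of_hasDerivAt (f := fun t => G t * φ t)
      (fun t _ => by rw [hφd']; exact (hGd t).mul (hφd t))]
    · rw [hφs, hφu]; ring
    · refine Continuous.intervalIntegrable ?_ _ _
      rw [hφd']
      exact (hN.mul hφ1.continuous).add (hGc.mul hkbc)
  have h3 : ∫ t in s..u, (k t - kb) ^ 2 = 0 := by
    have e : ∀ t, (k t - kb) ^ 2 = (N t * φ t + P t * deriv φ t) -
        (N t * φ t + G t * deriv φ t) - kb * (k t - kb) := by
      intro t; rw [hφd']; simp only [hk]; ring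
    simp only [e]
    rw [intervalIntegral.integral_sub, intervalIntegral.integral_sub, h1, h2,
      intervalIntegral.integral_const_mul]
    · have : ∫ t in s..u, (k t - kb) = 0 := hφu
      rw [this]; ring
    all_goals
      refine Continuous.intervalIntegrable ?_ _ _
      try rw [hφd']
      have := hφ1.continuous
      fun_prop
  have h4 : ∀ t ∈ Icc s u, P t = G t + kb := by
    intro t ht
    by_contra hne
    have hpos : 0 < ∫ t in s..u, (k t - kb) ^ 2 := by
      refine intervalIntegral.integral_pos hsu (hkbc.pow 2).continuousOn
        (fun _ _ => sq_nonneg _) ⟨t, ht, ?_⟩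
      refine (sq_nonneg _).lt_of_ne' (pow_ne_zero 2 fun h0 => hne ?_)
      simp only [hk] at h0
      linarith
    linarith
  intro t ht
  refine ((hGd t).add_const kb).congr_of_eventuallyEq ?_
  filter_upwards [Ioo_mem_nhds ht.1 ht.2] with r hr
  exact h4 r ⟨hr.1.le, hr.2.le⟩

/-- The first variation formula: the energy of `γ + ε • ψ` on `[s, u]` is minimal at `ε = 0`, by
Cauchy–Schwarz and the minimality of the length of `γ`. -/
theorem first_variation (hB : RiemForm B) {γ ψ : ℝ → En n} (hγ : ContDiff ℝ 1 γ)
    (hψ : ContDiff ℝ 1 ψ) {s u : ℝ} (hsu : s < u)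
    (hunit : ∀ t ∈ Icc s u, B (γ t) (deriv γ t) (deriv γ t) = 1)
    (hmin : u - s ≤ rdist (gB B) (γ s) (γ u)) (hψs : ψ s = 0) (hψu : ψ u = 0) :
    ∫ t in s..u, (fderiv ℝ B (γ t) (ψ t) (deriv γ t) (deriv γ t)
      + 2 * B (γ t) (deriv γ t) (deriv ψ t)) = 0 := by
  have cγ := hγ.continuous
  have cψ := hψ.continuous
  have cγ' := hγ.continuous_deriv le_rfl
  have cψ' := hψ.continuous_deriv le_rfl
  have cB := hB.contDiff.continuous
  have cDB := hB.contDiff.continuous_fderiv one_ne_zero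
  set F : ℝ → ℝ → ℝ := fun ε t =>
    B (γ t + ε • ψ t) (deriv γ t + ε • deriv ψ t) (deriv γ t + ε • deriv ψ t) with hF
  set F' : ℝ → ℝ → ℝ := fun ε t =>
    fderiv ℝ B (γ t + ε • ψ t) (ψ t) (deriv γ t + ε • deriv ψ t) (deriv γ t + ε • deriv ψ t)
    + 2 * B (γ t + ε • ψ t) (deriv γ t + ε • deriv ψ t) (deriv ψ t) with hF'
  have hFc : ∀ ε, Continuous (F ε) := fun ε => by
    simp only [hF]
    exact continuous_speedSq hB (by fun_prop) (by fun_prop)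
  have hF'c : Continuous fun z : ℝ × ℝ => F' z.1 z.2 := by
    have c1 : Continuous fun z : ℝ × ℝ => γ z.2 + z.1 • ψ z.2 := by fun_prop
    have c2 : Continuous fun z : ℝ × ℝ => deriv γ z.2 + z.1 • deriv ψ z.2 := by fun_prop
    simp only [hF']
    exact ((((cDB.comp c1).clm_apply (cψ.comp continuous_snd)).clm_apply c2).clm_apply c2).add
      (continuous_const.mul (((cB.comp c1).clm_apply c2).clm_apply (cψ'.comp continuous_snd)))
  have hFd : ∀ t ε, HasDerivAt (fun ε => F ε t) (F' ε t) ε := by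
    intro t ε
    have d1 : HasDerivAt (fun ε : ℝ => γ t + ε • ψ t) (ψ t) ε := by
      simpa using ((hasDerivAt_id ε).smul_const (ψ t)).const_add (γ t)
    have d2 : HasDerivAt (fun ε : ℝ => deriv γ t + ε • deriv ψ t) (deriv ψ t) ε := by
      simpa using ((hasDerivAt_id ε).smul_const (deriv ψ t)).const_add (deriv γ t)
    have d3 := ((hB.contDiff.differentiable one_ne_zero _).hasFDerivAt.comp_hasDerivAt ε d1)
    have d4 := (d3.clm_apply d2).clm_apply d2
    refine HasDerivAt.congr_deriv (f := fun ε => F ε t) d4 ?_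
    simp only [hF', add_apply, Function.comp_apply]
    rw [hB.symm _ (deriv ψ t)]
    ring
  obtain ⟨C, hC⟩ := ((isCompact_Icc (a := (-1 : ℝ)) (b := 1)).prod
    (isCompact_Icc (a := s) (b := u))).exists_bound_of_continuousOn hF'c.continuousOn
  have hder := (intervalIntegral.hasDerivAt_integral_of_dominated_loc_of_deriv_le
    (μ := MeasureTheory.volume) (F := F) (F' := F') (x₀ := 0) (a := s) (b := u)
    (bound := fun _ => C) (Ioo_mem_nhds (by norm_num : (-1 : ℝ) < 0) one_pos)
    (Eventually.of_forall fun ε => (hFc ε).aestronglyMeasurable)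
    ((hFc 0).intervalIntegrable _ _)
    (Continuous.aestronglyMeasurable (hF'c.comp (Continuous.prodMk_right 0)))
    (Eventually.of_forall fun t ht ε hε => hC (ε, t) ⟨⟨hε.1.le, hε.2.le⟩, by
      rw [uIoc_of_le hsu.le] at ht; exact ⟨ht.1.le, ht.2⟩⟩)
    (continuous_const.intervalIntegrable _ _)
    (Eventually.of_forall fun t _ ε _ => hFd t ε)).2
  have hJ0 : ∫ t in s..u, F 0 t = u - s := by
    rw [intervalIntegral.integral_congr (g := fun _ => (1 : ℝ))]
    · simp
    · intro t ht
      rw [uIcc_of_le hsu.le] at ht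
      simp only [hF, zero_smul, add_zero]
      exact hunit t ht
  have hJ : ∀ ε, ∫ t in s..u, F 0 t ≤ ∫ t in s..u, F ε t := by
    intro ε
    have hσ : ContDiff ℝ 1 fun t => γ t + ε • ψ t := hγ.add (hψ.const_smul ε)
    have hσ' : ∀ t, deriv (fun t => γ t + ε • ψ t) t = deriv γ t + ε • deriv ψ t := fun t =>
      ((hγ.differentiable one_ne_zero t).hasDerivAt.add
        ((hψ.differentiable one_ne_zero t).hasDerivAt.const_smul ε)).deriv
    have h1 := rdist_le_length (B := B) hσ hsu
    simp only [hσ', hψs, hψu, smul_zero, add_zero] at h1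
    have h2 : ∫ t in s..u, √(F ε t) ≤ ∫ t in s..u, (1 / 2 + F ε t * (1 / 2)) := by
      refine intervalIntegral.integral_mono_on hsu.le
        ((Real.continuous_sqrt.comp (hFc ε)).intervalIntegrable _ _)
        ((continuous_const.add ((hFc ε).mul continuous_const)).intervalIntegrable _ _) ?_
      intro t _
      have h0 : 0 ≤ F ε t := hB.nonneg _ _
      nlinarith [Real.sq_sqrt h0, sq_nonneg (√(F ε t) - 1)]
    have hi : IntervalIntegrable (fun t => F ε t * (1 / 2)) MeasureTheory.volume s u :=
      ((hFc ε).mul continuous_const).intervalIntegrable _ _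
    rw [intervalIntegral.integral_add (continuous_const.intervalIntegrable _ _) hi,
      intervalIntegral.integral_mul_const, intervalIntegral.integral_const, smul_eq_mul] at h2
    have h3 : ∫ t in s..u, √(F ε t) = ∫ t in s..u,
      √(B (γ t + ε • ψ t) (deriv γ t + ε • deriv ψ t) (deriv γ t + ε • deriv ψ t)) := rfl
    rw [hJ0]
    linarith
  have hmn : IsLocalMin (fun ε => ∫ t in s..u, F ε t) 0 := Eventually.of_forall hJ
  have := hmn.hasDerivAt_eq_zero hder
  simpa only [hF', zero_smul, add_zero] using this

/-- The geodesic equation in momentum form, from `first_variation` and `du_bois_reymond`. -/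
theorem euler_lagrange_of_contDiff (hB : RiemForm B) {γ : ℝ → En n} (hγ : ContDiff ℝ 1 γ)
    {s u : ℝ} (hsu : s < u)
    (hunit : ∀ t ∈ Icc s u, B (γ t) (deriv γ t) (deriv γ t) = 1)
    (hmin : u - s ≤ rdist (gB B) (γ s) (γ u)) (w : En n) :
    ∀ t ∈ Ioo s u, HasDerivAt (fun t => B (γ t) (deriv γ t) w)
      (1 / 2 * fderiv ℝ B (γ t) w (deriv γ t) (deriv γ t)) t := by
  have cγ := hγ.continuous
  have cγ' := hγ.continuous_deriv le_rfl
  have cB := hB.contDiff.continuous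
  have cDB := hB.contDiff.continuous_fderiv one_ne_zero
  refine du_bois_reymond (P := fun t => B (γ t) (deriv γ t) w)
    (N := fun t => 1 / 2 * fderiv ℝ B (γ t) w (deriv γ t) (deriv γ t))
    (((cB.comp cγ).clm_apply cγ').clm_apply continuous_const)
    (continuous_const.mul ((((cDB.comp cγ).clm_apply continuous_const).clm_apply cγ').clm_apply
      cγ')) hsu ?_
  intro φ hφ hφs hφu
  have h := first_variation hB hγ (ψ := fun t => φ t • w) (hφ.smul contDiff_const) hsu hunit hmin
    (by simp [hφs]) (by simp [hφu])
  have hd : ∀ t, deriv (fun t => φ t • w) t = deriv φ t • w := fun t =>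
    ((hφ.differentiable one_ne_zero t).hasDerivAt.smul_const w).deriv
  have e : ∀ t, (1 / 2 * fderiv ℝ B (γ t) w (deriv γ t) (deriv γ t)) * φ t
      + B (γ t) (deriv γ t) w * deriv φ t = 1 / 2 *
      (fderiv ℝ B (γ t) (φ t • w) (deriv γ t) (deriv γ t)
      + 2 * B (γ t) (deriv γ t) (deriv (fun t => φ t • w) t)) := by
    intro t
    rw [hd]
    simp only [map_smul, smul_apply, smul_eq_mul]
    ring
  simp only [e]
  rw [intervalIntegral.integral_const_mul, h, mul_zero]

/-- The equation satisfied at time `t` by a unit speed geodesic with momentum `B γ γ'`: the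
derivative of the momentum is the covector `w ↦ (D_w B)(γ', γ') / 2`. -/
structure UnitGeodesicAt (B : En n → En n →L[ℝ] En n →L[ℝ] ℝ) (γ : ℝ → En n) (t : ℝ) : Prop where
  hasDerivAt : HasDerivAt γ (deriv γ t) t
  unit : B (γ t) (deriv γ t) (deriv γ t) = 1
  momentum : ∃ N : En n →L[ℝ] ℝ, (∀ w, N w = 1 / 2 * fderiv ℝ B (γ t) w (deriv γ t) (deriv γ t)) ∧
    HasDerivAt (fun t => B (γ t) (deriv γ t)) N t

/-- In finite dimension a curve of functionals may be differentiated pointwise. -/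
theorem hasDerivAt_dual {ℓ : ℝ → En n →L[ℝ] ℝ} {N : En n →L[ℝ] ℝ} {t : ℝ}
    (h : ∀ w, HasDerivAt (fun t => ℓ t w) (N w) t) : HasDerivAt ℓ N t := by
  have e : ∀ f : En n →L[ℝ] ℝ, f = ∑ i : Fin n,
      f (EuclideanSpace.single i 1) • (EuclideanSpace.proj i : En n →L[ℝ] ℝ) := by
    intro f
    ext x
    conv_lhs => rw [← (EuclideanSpace.basisFun (Fin n) ℝ).sum_repr x]
    simp [map_sum, mul_comm]
  rw [e N, show ℓ = fun t => ∑ i : Fin n, ℓ t (EuclideanSpace.single i 1) •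
    (EuclideanSpace.proj i : En n →L[ℝ] ℝ) from funext fun t => e (ℓ t)]
  exact HasDerivAt.fun_sum fun i _ => (h _).smul_const _

/-- The equation holds at the centre of an interval on which the curve is isometric. The curve is
modified away from the centre so as to be `C¹` on the whole line. -/
theorem unitGeodesicAt_of_local (hB : RiemForm B) {γ : ℝ → En n} {t₀ δ : ℝ} (hδ : 0 < δ)
    (hgeo : ∀ s ∈ Icc (t₀ - δ) (t₀ + δ), ∀ u ∈ Icc (t₀ - δ) (t₀ + δ),
      rdist (gB B) (γ s) (γ u) = |s - u|) : UnitGeodesicAt B γ t₀ := by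
  obtain ⟨η, hη, hηδ, v, hvc, hv⟩ := geodesic_local_c1 hB hδ hgeo
  set d := η / 2 with hd
  have hd0 : 0 < d := by positivity
  set pr : ℝ → ℝ := fun t => max (t₀ - d) (min t (t₀ + d)) with hpr
  have hprc : Continuous pr := by simp only [hpr]; fun_prop
  have hprm : ∀ t, pr t ∈ Ioo (t₀ - η) (t₀ + η) := fun t => by
    have h1 : t₀ - d ≤ pr t := le_max_left _ _
    have h2 : pr t ≤ t₀ + d := max_le (by linarith) (min_le_right _ _)
    exact ⟨by linarith, by linarith⟩
  have hpre : ∀ t ∈ Icc (t₀ - d) (t₀ + d), pr t = t := fun t ht => by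
    simp only [hpr]; rw [min_eq_left ht.2, max_eq_right ht.1]
  have hwc : Continuous fun t => v (pr t) := by
    rw [← continuousOn_univ]
    exact hvc.comp hprc.continuousOn fun t _ => hprm t
  -- a globally defined `C¹` curve that agrees with `γ` near `t₀`
  set σ : ℝ → En n := fun t => γ (t₀ - d) + ∫ r in (t₀ - d)..t, v (pr r) with hσ
  have hσd : ∀ t, HasDerivAt σ (v (pr t)) t := fun t =>
    (intervalIntegral.integral_hasDerivAt_right (hwc.intervalIntegrable _ _)
      hwc.aestronglyMeasurable.stronglyMeasurableAtFilter hwc.continuousAt).const_add _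
  have hσd' : deriv σ = fun t => v (pr t) := funext fun t => (hσd t).deriv
  have hσ1 : ContDiff ℝ 1 σ := by
    rw [contDiff_one_iff_deriv]
    exact ⟨fun t => (hσd t).differentiableAt, by rw [hσd']; exact hwc⟩
  have hσγ : ∀ t ∈ Icc (t₀ - d) (t₀ + d), σ t = γ t := by
    intro t ht
    have : ∫ r in (t₀ - d)..t, v (pr r) = γ t - γ (t₀ - d) := by
      refine intervalIntegral.integral_eq_sub_of_hasDerivAt (fun r hr => ?_)
        (hwc.intervalIntegrable _ _)
      rw [uIcc_of_le ht.1] at hr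
      have hr' : r ∈ Icc (t₀ - d) (t₀ + d) := ⟨hr.1, hr.2.trans ht.2⟩
      rw [hpre r hr']
      exact (hv r ⟨by linarith [hr'.1], by linarith [hr'.2]⟩).1
    simp only [hσ]; rw [this]; abel
  have hEL := euler_lagrange_of_contDiff hB hσ1 (s := t₀ - d) (u := t₀ + d) (by linarith)
    (fun t ht => by
      rw [hσd', hσγ t ht]
      simp only [hpre t ht]
      exact (hv t ⟨by linarith [ht.1], by linarith [ht.2]⟩).2)
    (by
      rw [hσγ _ ⟨le_rfl, by linarith⟩, hσγ _ ⟨by linarith, le_rfl⟩,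
        hgeo _ ⟨by linarith, by linarith⟩ _ ⟨by linarith, by linarith⟩,
        show t₀ - d - (t₀ + d) = -(2 * d) by ring, abs_neg, abs_of_pos (by positivity)]
      linarith)
  have ht₀ : t₀ ∈ Icc (t₀ - d) (t₀ + d) := ⟨by linarith, by linarith⟩
  have hγd : ∀ t ∈ Icc (t₀ - d) (t₀ + d), deriv γ t = v t := fun t ht =>
    (hv t ⟨by linarith [ht.1], by linarith [ht.2]⟩).1.deriv
  have hv₀ := hv t₀ ⟨by linarith, by linarith⟩
  have hd₀ := hγd t₀ ht₀
  refine ⟨by rw [hd₀]; exact hv₀.1, by rw [hd₀]; exact hv₀.2,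
    (1 / 2 : ℝ) • ((fderiv ℝ B (γ t₀)).flip (deriv γ t₀)).flip (deriv γ t₀), ?_, ?_⟩
  · intro w; simp
  · refine hasDerivAt_dual fun w => ?_
    have h1 := hEL w t₀ ⟨by linarith, by linarith⟩
    rw [hσd', hσγ t₀ ht₀] at h1
    simp only [hpre t₀ ht₀, ← hd₀] at h1
    refine HasDerivAt.congr_of_eventuallyEq (f := fun t => B (σ t) (v (pr t)) w) ?_ ?_
    · simpa using h1
    · filter_upwards [Ioo_mem_nhds (show t₀ - d < t₀ by linarith) (show t₀ < t₀ + d by linarith)]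
        with t ht
      have ht' : t ∈ Icc (t₀ - d) (t₀ + d) := ⟨ht.1.le, ht.2.le⟩
      rw [hσγ t ht', hpre t ht', hγd t ht']

/-- A constant speed geodesic on `[0,1]`, reparametrised by arc length, solves the geodesic
equation and is continuous. -/
theorem geodesic_unit_speed (hB : RiemForm B) {Γ : ℝ → En n} {c : ℝ} (hc : 0 < c)
    (hΓ : IsGeodesicOn (rdist (gB B)) Γ c (Icc 0 1)) :
    (∀ t ∈ Ioo 0 c, UnitGeodesicAt B (fun t => Γ (t / c)) t) ∧ ContinuousOn Γ (Icc 0 1) := by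
  constructor
  · intro t ht
    have h01 : t / c ∈ Ioo (0 : ℝ) 1 := ⟨div_pos ht.1 hc, (div_lt_one hc).2 ht.2⟩
    obtain ⟨δ, hδ, h⟩ := hΓ (t / c) ⟨h01.1.le, h01.2.le⟩
    set d := min (c * δ / 2) (min t (c - t)) with hd
    have hd0 : 0 < d := lt_min (by positivity) (lt_min ht.1 (by linarith [ht.2]))
    have hd1 : d ≤ c * δ / 2 := min_le_left _ _
    have hd2 : d ≤ t := (min_le_right _ _).trans (min_le_left _ _)
    have hd3 : d ≤ c - t := (min_le_right _ _).trans (min_le_right _ _)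
    refine unitGeodesicAt_of_local hB hd0 fun s hs u hu => ?_
    have hmem : ∀ s ∈ Icc (t - d) (t + d), s / c ∈ Icc (0 : ℝ) 1 ∧ |s / c - t / c| < δ := by
      intro s hs
      refine ⟨⟨div_nonneg (by linarith [hs.1]) hc.le, (div_le_one hc).2 (by linarith [hs.2])⟩, ?_⟩
      rw [← sub_div, abs_div, abs_of_pos hc, div_lt_iff₀ hc]
      refine lt_of_le_of_lt (b := d) (abs_le.2 ⟨by linarith [hs.1], by linarith [hs.2]⟩) ?_
      nlinarith [mul_pos hc hδ]
    rw [h _ (hmem s hs).1 _ (hmem u hu).1 (hmem s hs).2 (hmem u hu).2, ← sub_div, abs_div,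
      abs_of_pos hc]
    field_simp
  · intro t ht
    obtain ⟨δ, hδ, h⟩ := hΓ t ht
    obtain ⟨m, M, K, hbc⟩ := exists_ballConst hB (‖Γ t‖ + 1)
    have hsm : 0 < √m := Real.sqrt_pos.2 hbc.m_pos
    rw [Metric.continuousWithinAt_iff]
    intro ε hε
    set ε' := min ε 1 with hε'
    have hε'0 : 0 < ε' := lt_min hε one_pos
    refine ⟨min δ (√m * ε' / c), lt_min hδ (by positivity), fun s hs hst => ?_⟩
    rw [Real.dist_eq] at hst
    have h1 := h t ht s hs (by simpa using hδ) (hst.trans_le (min_le_left _ _))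
    have h2 := rdist_ge_min hB hbc (p := Γ t) (q := Γ s) (s := ε') hε'0.le
      (by have := min_le_right ε 1; linarith)
    have h3 : c * |s - t| < √m * ε' := by
      have := hst.trans_le (min_le_right _ _)
      rw [lt_div_iff₀ hc] at this
      linarith
    rw [h1, abs_sub_comm] at h2
    have h4 : min ‖Γ s - Γ t‖ ε' < ε' := lt_of_mul_lt_mul_left (h2.trans_lt h3) hsm.le
    rcases min_lt_iff.1 h4 with h5 | h5
    · rw [dist_eq_norm]; exact h5.trans_le (min_le_left _ _)
    · exact absurd h5 (lt_irrefl _)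

/-- A geodesic of speed `0` is locally constant, hence has equal endpoints. -/
theorem geodesic_zero_speed (hB : RiemForm B) {Γ : ℝ → En n}
    (hΓ : IsGeodesicOn (rdist (gB B)) Γ 0 (Icc 0 1)) : Γ 0 = Γ 1 := by
  have hloc : ∀ t ∈ Icc (0 : ℝ) 1, ∀ᶠ s in nhdsWithin t (Icc 0 1), Γ s = Γ t := by
    intro t ht
    obtain ⟨δ, hδ, h⟩ := hΓ t ht
    obtain ⟨m, M, K, hbc⟩ := exists_ballConst hB (‖Γ t‖ + 1)
    have hsm : 0 < √m := Real.sqrt_pos.2 hbc.m_pos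
    filter_upwards [self_mem_nhdsWithin, mem_nhdsWithin_of_mem_nhds (Metric.ball_mem_nhds t hδ)]
      with s hs hst
    have h1 := h t ht s hs (by simpa using hδ) hst
    have h2 := rdist_ge_min hB hbc (p := Γ t) (q := Γ s) (s := 1) zero_le_one le_rfl
    rw [h1, zero_mul] at h2
    have h3 : min ‖Γ s - Γ t‖ 1 ≤ 0 := by
      by_contra hcon
      push Not at hcon
      nlinarith
    rcases min_le_iff.1 h3 with h4 | h4
    · exact sub_eq_zero.1 (norm_le_zero_iff.1 h4)
    · norm_num at h4
  exact isPreconnected_Icc.induction₂ (fun s t => Γ s = Γ t)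
    (fun t ht => (hloc t ht).mono fun _ h => h.symm) (fun _ _ _ _ _ _ h h' => h.trans h')
    (fun _ _ _ _ h => h.symm) (by simp) (by simp)
end EulerLagrange

/-! ### Length of curves through the origin -/

section RadialLength

variable {n : ℕ} {B : En n → En n →L[ℝ] En n →L[ℝ] ℝ}

theorem coneMetric_radial_le (α : ℝ) (x v : En n) :
    ⟪v, x⟫ ^ 2 / ‖x‖ ^ 2 ≤ coneMetric n α x v v := by
  have h1 : ⟪v, x⟫ ^ 2 / ‖x‖ ^ 2 ≤ ‖v‖ ^ 2 := by
    refine div_le_of_le_mul₀ (by positivity) (by positivity) ?_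
    rw [← mul_pow, ← sq_abs]
    exact pow_le_pow_left₀ (abs_nonneg _) (abs_real_inner_le_norm v x) 2
  have h2 : coneMetric n α x v v =
      ⟪v, x⟫ ^ 2 / ‖x‖ ^ 2 + Real.sin α ^ 2 * (‖v‖ ^ 2 - ⟪v, x⟫ ^ 2 / ‖x‖ ^ 2) := by
    simp only [coneMetric]
    rw [real_inner_self_eq_norm_sq]
    ring
  rw [h2]
  nlinarith [sq_nonneg (Real.sin α)]

theorem coneMetric_norm_le (α : ℝ) (x v : En n) :
    Real.sin α ^ 2 * ‖v‖ ^ 2 ≤ coneMetric n α x v v := by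
  simp only [coneMetric]
  rw [real_inner_self_eq_norm_sq]
  have : 0 ≤ (1 - Real.sin α ^ 2) * (⟪v, x⟫ * ⟪v, x⟫ / ‖x‖ ^ 2) := by
    have h1 := Real.sin_sq_le_one α
    have h2 : 0 ≤ ⟪v, x⟫ * ⟪v, x⟫ := mul_self_nonneg _
    exact mul_nonneg (by linarith) (by positivity)
  linarith

theorem ConicalBounds.radial_lower {α μ C R : ℝ} (h : ConicalBounds B α μ C R)
    {δ : ℝ} (hδ0 : 0 ≤ δ) (hδ1 : δ ≤ 1) {x : En n} (hx : R ≤ ‖x‖)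
    (hδ : C * ‖x‖ ^ (-μ) ≤ δ * Real.sin α ^ 2) (v : En n) :
    (1 - δ) * (⟪v, x⟫ ^ 2 / ‖x‖ ^ 2) ≤ B x v v := by
  have h1 := (abs_le.1 (h.metric x v v hx)).1
  have h2 := coneMetric_radial_le α x v
  have h3 := coneMetric_norm_le α x v
  have h4 : C * ‖x‖ ^ (-μ) * ‖v‖ * ‖v‖ ≤ δ * Real.sin α ^ 2 * ‖v‖ ^ 2 := by
    rw [mul_assoc, ← sq]
    exact mul_le_mul_of_nonneg_right hδ (sq_nonneg _)
  have h5 : δ * (Real.sin α ^ 2 * ‖v‖ ^ 2) ≤ δ * coneMetric n α x v v := by gcongr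
  have h6 : (1 - δ) * (⟪v, x⟫ ^ 2 / ‖x‖ ^ 2) ≤ (1 - δ) * coneMetric n α x v v :=
    mul_le_mul_of_nonneg_left h2 (by linarith)
  linarith

/-- Outside the ball of radius `R₁` the metric dominates `(1 - η)²` times the radial part. -/
def RadialLower (B : En n → En n →L[ℝ] En n →L[ℝ] ℝ) (η R₁ : ℝ) : Prop :=
  ∀ x : En n, R₁ ≤ ‖x‖ → ∀ v, (1 - η) ^ 2 * (⟪v, x⟫ ^ 2 / ‖x‖ ^ 2) ≤ B x v v

theorem exists_radialLower {α μ C R : ℝ} (h : ConicalBounds B α μ C R)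
    (hs : 0 < Real.sin α) (hμ : 0 < μ) {η : ℝ} (hη : 0 < η) (hη1 : η < 1) :
    ∃ R₁ > 0, RadialLower B η R₁ := by
  have hlim : Tendsto (fun r : ℝ => C * r ^ (-μ)) atTop (nhds 0) := by
    simpa using (tendsto_rpow_neg_atTop hμ).const_mul C
  obtain ⟨R₂, hR₂⟩ := eventually_atTop.1 (hlim.eventually_le_const
    (show 0 < η * Real.sin α ^ 2 by positivity))
  refine ⟨max 1 (max R R₂), by positivity, fun x hx v => ?_⟩
  have h1 := h.radial_lower hη.le hη1.le (((le_max_left _ _).trans (le_max_right _ _)).trans hx)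
    (hR₂ _ (((le_max_right _ _).trans (le_max_right _ _)).trans hx)) v
  refine le_trans (mul_le_mul_of_nonneg_right ?_ (by positivity)) h1
  nlinarith

theorem RadialLower.length_ge (hB : RiemForm B) {η R₁ : ℝ} (h : RadialLower B η R₁)
    (hR₁ : 0 < R₁) {σ : ℝ → En n} (hσ : ContDiff ℝ 1 σ) {s u : ℝ} (hsu : s ≤ u)
    (hout : ∀ t ∈ Icc s u, R₁ ≤ ‖σ t‖) :
    (1 - η) * |‖σ u‖ - ‖σ s‖| ≤ ∫ t in s..u, √(B (σ t) (deriv σ t) (deriv σ t)) := by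
  have hne : ∀ t ∈ Icc s u, σ t ≠ 0 := fun t ht => norm_pos_iff.1 (hR₁.trans_le (hout t ht))
  have hd : ∀ t ∈ Icc s u, HasDerivAt (fun t => ‖σ t‖) (⟪deriv σ t, σ t⟫ / ‖σ t‖) t := by
    intro t ht
    have h1 := ((hσ.differentiable one_ne_zero t).hasDerivAt.norm_sq).sqrt
      (by have := norm_pos_iff.2 (hne t ht); positivity)
    simp only [Real.sqrt_sq (norm_nonneg _)] at h1
    convert h1 using 1
    rw [real_inner_comm, mul_div_mul_left _ _ two_ne_zero]
  have hle : ∀ t ∈ Icc s u, |(1 - η) * (⟪deriv σ t, σ t⟫ / ‖σ t‖)| ≤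
      √(B (σ t) (deriv σ t) (deriv σ t)) := by
    intro t ht
    refine Real.abs_le_sqrt ?_
    rw [mul_pow, div_pow]
    exact h _ (hout t ht) _
  have hc : ContinuousOn (fun t => (1 - η) * (⟪deriv σ t, σ t⟫ / ‖σ t‖)) (Icc s u) := by
    have c1 : Continuous fun t => ⟪deriv σ t, σ t⟫ :=
      (hσ.continuous_deriv le_rfl).inner hσ.continuous
    exact continuousOn_const.mul (c1.continuousOn.div hσ.continuous.norm.continuousOn
      fun t ht => (norm_pos_iff.2 (hne t ht)).ne')
  have a1 := sub_le_length hB hσ hsu (fun t ht => (hd t ht).const_mul (1 - η)) hc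
    fun t ht => (le_abs_self _).trans (hle t ht)
  have a2 := sub_le_length hB hσ hsu (fun t ht => ((hd t ht).const_mul (1 - η)).fun_neg) hc.neg
    fun t ht => (neg_le_abs _).trans (hle t ht)
  rcases abs_cases (‖σ u‖ - ‖σ s‖) with h' | h' <;> rw [h'.1] <;> linarith

/-- A curve from radius `ρ` to radius `ρ` through the origin crosses the shell between radii `R₁` and
`ρ` at least twice. -/
theorem RadialLower.clen_ge (hB : RiemForm B) {η R₁ : ℝ} (h : RadialLower B η R₁)
    (hη : η < 1) (hR₁ : 0 < R₁) {σ : ℝ → En n} (hσ : ContDiff ℝ 1 σ) {ρ : ℝ} (h0 : ‖σ 0‖ = ρ)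
    (h1 : ‖σ 1‖ = ρ) (hρ : R₁ < ρ) (hz : ∃ t ∈ Icc (0 : ℝ) 1, σ t = 0) :
    2 * (1 - η) * (ρ - R₁) ≤ clen (gB B) σ 0 1 := by
  set Z := Icc (0 : ℝ) 1 ∩ {t | ‖σ t‖ ≤ R₁} with hZ
  have hcl : IsClosed {t | ‖σ t‖ ≤ R₁} := isClosed_le hσ.continuous.norm continuous_const
  have hZc : IsCompact Z := isCompact_Icc.inter_right hcl
  have hZn : Z.Nonempty := by
    obtain ⟨t, ht, h⟩ := hz
    exact ⟨t, ht, by simp [h, hR₁.le]⟩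
  obtain ⟨τ₁, hτ₁, hmin⟩ := hZc.exists_isLeast hZn
  obtain ⟨τ₂, hτ₂, hmax⟩ := hZc.exists_isGreatest hZn
  have hτ : τ₁ ≤ τ₂ := hmin hτ₂
  have p1 : 0 < τ₁ := by
    refine hτ₁.1.1.lt_of_ne fun hh => ?_
    have := hτ₁.2
    rw [← hh] at this
    simp only [mem_ofPred_eq, h0] at this
    linarith
  have p2 : τ₂ < 1 := by
    refine hτ₂.1.2.lt_of_ne fun hh => ?_
    have := hτ₂.2
    rw [hh] at this
    simp only [mem_ofPred_eq, h1] at this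
    linarith
  have hcl' : IsClosed {t | R₁ ≤ ‖σ t‖} := isClosed_le continuous_const hσ.continuous.norm
  have q1 : Icc 0 τ₁ ⊆ {t | R₁ ≤ ‖σ t‖} := by
    rw [← closure_Ico p1.ne]
    refine closure_minimal (fun t ht => ?_) hcl'
    by_contra hcon
    simp only [mem_ofPred_eq, not_le] at hcon
    have := hmin ⟨⟨ht.1, ht.2.le.trans hτ₁.1.2⟩, hcon.le⟩
    linarith [ht.2]
  have q2 : Icc τ₂ 1 ⊆ {t | R₁ ≤ ‖σ t‖} := by
    rw [← closure_Ioc p2.ne]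
    refine closure_minimal (fun t ht => ?_) hcl'
    by_contra hcon
    simp only [mem_ofPred_eq, not_le] at hcon
    have := hmax ⟨⟨hτ₂.1.1.trans ht.1.le, ht.2⟩, hcon.le⟩
    linarith [ht.1]
  have l1 := h.length_ge hB hR₁ hσ p1.le fun t ht => q1 ht
  have l2 := h.length_ge hB hR₁ hσ p2.le fun t ht => q2 ht
  have l3 : 0 ≤ ∫ t in τ₁..τ₂, √(B (σ t) (deriv σ t) (deriv σ t)) :=
    intervalIntegral.integral_nonneg hτ fun _ _ => Real.sqrt_nonneg _
  have hi := fun s u => (continuous_speed hB hσ).intervalIntegrable (μ := MeasureTheory.volume) s u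
  have l4 : clen (gB B) σ 0 1 = (∫ t in (0 : ℝ)..τ₁, √(B (σ t) (deriv σ t) (deriv σ t))) +
      (∫ t in τ₁..τ₂, √(B (σ t) (deriv σ t) (deriv σ t))) +
      ∫ t in τ₂..1, √(B (σ t) (deriv σ t) (deriv σ t)) := by
    rw [intervalIntegral.integral_add_adjacent_intervals (hi _ _) (hi _ _),
      intervalIntegral.integral_add_adjacent_intervals (hi _ _) (hi _ _)]
    rfl
  have r1 : ‖σ τ₁‖ ≤ R₁ := hτ₁.2
  have r2 : ‖σ τ₂‖ ≤ R₁ := hτ₂.2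
  have m1 : (1 - η) * (ρ - R₁) ≤ (1 - η) * |‖σ τ₁‖ - ‖σ 0‖| := by
    refine mul_le_mul_of_nonneg_left ?_ (by linarith)
    rw [h0]; linarith [neg_abs_le (‖σ τ₁‖ - ρ)]
  have m2 : (1 - η) * (ρ - R₁) ≤ (1 - η) * |‖σ 1‖ - ‖σ τ₂‖| := by
    refine mul_le_mul_of_nonneg_left ?_ (by linarith)
    rw [h1]; linarith [le_abs_self (ρ - ‖σ τ₂‖)]
  linarith

theorem clen_sq_le_cenergy (hB : RiemForm B) {σ : ℝ → En n} (hσ : ContDiff ℝ 1 σ) :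
    clen (gB B) σ 0 1 ^ 2 ≤ cenergy (gB B) σ 0 1 := by
  set f : ℝ → ℝ := fun t => √(B (σ t) (deriv σ t) (deriv σ t)) with hf
  have hfc : Continuous f := continuous_speed hB hσ
  set k := ∫ t in (0 : ℝ)..1, f t with hk
  have h0 : 0 ≤ ∫ t in (0 : ℝ)..1, (f t - k) ^ 2 :=
    intervalIntegral.integral_nonneg zero_le_one fun _ _ => sq_nonneg _
  have e : ∀ t, (f t - k) ^ 2 = B (σ t) (deriv σ t) (deriv σ t) - 2 * k * f t + k ^ 2 := by
    intro t
    have : f t ^ 2 = B (σ t) (deriv σ t) (deriv σ t) := Real.sq_sqrt (hB.nonneg _ _)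
    rw [← this]; ring
  have hBc : Continuous fun t => B (σ t) (deriv σ t) (deriv σ t) :=
    continuous_speedSq hB hσ.continuous (hσ.continuous_deriv le_rfl)
  have i1 := hBc.intervalIntegrable (μ := MeasureTheory.volume) 0 1
  have i2 : IntervalIntegrable (fun t => 2 * k * f t) MeasureTheory.volume 0 1 :=
    (continuous_const.mul hfc).intervalIntegrable _ _
  simp only [e] at h0
  rw [intervalIntegral.integral_add (i1.sub i2) (continuous_const.intervalIntegrable _ _),
    intervalIntegral.integral_sub i1 i2, intervalIntegral.integral_const_mul,
    intervalIntegral.integral_const, ← hk, smul_eq_mul] at h0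
  have e1 : clen (gB B) σ 0 1 = k := rfl
  have e2 : cenergy (gB B) σ 0 1 = ∫ t in (0 : ℝ)..1, B (σ t) (deriv σ t) (deriv σ t) := rfl
  rw [e1, e2]
  linarith

end RadialLength

/-! ### Trajectories that are asymptotically conical geodesics -/

theorem abs_sub_le_of_abs_deriv_le {f Φ φ : ℝ → ℝ} {T : ℝ} (hT : 0 ≤ T)
    (hf : ∀ t ∈ Icc 0 T, ∃ f', HasDerivAt f f' t ∧ |f'| ≤ φ t)
    (hΦ : ∀ t ∈ Icc 0 T, HasDerivAt Φ (φ t) t) : |f T - f 0| ≤ Φ T - Φ 0 := by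
  choose! f' hf' hle using hf
  refine image_norm_le_of_norm_deriv_right_le_deriv_boundary' (a := 0) (b := T)
    (f := fun t => f t - f 0) (f' := f') (B := fun t => Φ t - Φ 0) (B' := φ)
    (fun t ht => ((hf' t ht).continuousAt.sub continuousAt_const).continuousWithinAt)
    (fun t ht => ((hf' t ⟨ht.1, ht.2.le⟩).sub_const _).hasDerivWithinAt) (by simp)
    (fun t ht => ((hΦ t ht).continuousAt.sub continuousAt_const).continuousWithinAt)
    (fun t ht => ((hΦ t ⟨ht.1, ht.2.le⟩).sub_const _).hasDerivWithinAt)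
    (fun t ht => hle t ⟨ht.1, ht.2.le⟩) (right_mem_Icc.2 hT)

/-- If `|f'(t)| ≤ Φ'(|t|)` on an interval around `0`, then `|f(t) - f(0)| ≤ Φ(|t|) - Φ(0)`. -/
theorem abs_sub_le_of_abs_deriv_le_two_sided {f Φ φ : ℝ → ℝ} {T₁ T₂ t : ℝ}
    (hT₁ : 0 ≤ T₁) (hT₂ : 0 ≤ T₂) (ht : t ∈ Icc (-T₁) T₂)
    (hf : ∀ t ∈ Icc (-T₁) T₂, ∃ f', HasDerivAt f f' t ∧ |f'| ≤ φ |t|)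
    (hΦ : ∀ t, 0 ≤ t → HasDerivAt Φ (φ t) t) : |f t - f 0| ≤ Φ |t| - Φ 0 := by
  rcases le_total 0 t with h | h
  · rw [abs_of_nonneg h]
    refine abs_sub_le_of_abs_deriv_le h (fun r hr => ?_) fun r hr => hΦ r hr.1
    have := hf r ⟨by linarith [hr.1], hr.2.trans ht.2⟩
    rwa [abs_of_nonneg hr.1] at this
  · rw [abs_of_nonpos h]
    have key := abs_sub_le_of_abs_deriv_le (f := fun r => f (-r)) (Φ := Φ) (φ := φ) (T := -t)
      (by linarith) (fun r hr => ?_) fun r hr => hΦ r hr.1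
    · simpa using key
    · obtain ⟨f', h1, h2⟩ := hf (-r) ⟨by linarith [hr.2, ht.1], by linarith [hr.1]⟩
      rw [abs_neg, abs_of_nonneg hr.1] at h2
      refine ⟨-f', ?_, by rwa [abs_neg]⟩
      have h3 := h1.comp r (hasDerivAt_neg r)
      simpa [Function.comp_def] using h3

/-- A curve `x` with velocity `v` that stays outside the ball of radius `R₀` and satisfies the
conservation laws of the cone `C_α^n` up to relative errors `K ‖x‖ ^ (-ν)`: unit speed, growth
at unit rate of the radial momentum `b ≈ ⟪v, x⟫`, and conservation of the angular momenta
`m ≈ sin² α ⟪v, S x⟫`, for `S` skew-symmetric. -/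
structure ConicalTraj {n : ℕ} (α ν K R₀ : ℝ) (J : Set ℝ) (x v : ℝ → En n) (b : ℝ → ℝ) :
    Prop where
  deriv_x : ∀ t ∈ J, HasDerivAt x (v t) t
  far : ∀ t ∈ J, R₀ ≤ ‖x t‖
  speed : ∀ t ∈ J, |coneMetric n α (x t) (v t) (v t) - 1| ≤ K * ‖x t‖ ^ (-ν)
  radial : ∀ t ∈ J, ∃ b', HasDerivAt b b' t ∧ |b' - 1| ≤ K * ‖x t‖ ^ (-ν)
  radial_approx : ∀ t ∈ J, |b t - ⟪v t, x t⟫| ≤ K * ‖x t‖ ^ (-ν) * ‖x t‖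
  angular : ∀ S : En n →L[ℝ] En n, (∀ y z, ⟪S y, z⟫ = -⟪y, S z⟫) → ∃ m : ℝ → ℝ, ∀ t ∈ J,
    (∃ m', HasDerivAt m m' t ∧ |m'| ≤ K * ‖S‖ * ‖x t‖ ^ (-ν)) ∧
      |m t - Real.sin α ^ 2 * ⟪v t, S (x t)⟫| ≤ K * ‖S‖ * ‖x t‖ ^ (-ν) * ‖x t‖

section Traj

variable {n : ℕ} {α ν K R₀ : ℝ} {J : Set ℝ} {x v : ℝ → En n} {b : ℝ → ℝ}

/-- Geodesics of an asymptotically conical metric satisfy the conservation laws of the cone up to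
errors of order `‖γ‖ ^ (-ν)`. -/
theorem conicalTraj_of_geodesic {B : En n → En n →L[ℝ] En n →L[ℝ] ℝ} {C R : ℝ} {γ : ℝ → En n}
    (hcb : ConicalBounds B α ν C R) (hC : 1 ≤ C) (hs : 0 < Real.sin α)
    (hν : 0 < ν) (hR : R ≤ R₀) (hR₀ : 1 ≤ R₀)
    (hsmall : C * R₀ ^ (-ν) ≤ Real.sin α ^ 2 / 2)
    (hgeo : ∀ t ∈ J, UnitGeodesicAt B γ t) (hfar : ∀ t ∈ J, R₀ ≤ ‖γ t‖) :
    ConicalTraj α ν (4 * C / Real.sin α ^ 2) R₀ J γ (deriv γ)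
      (fun t => B (γ t) (deriv γ t) (γ t)) := by
  set s := Real.sin α with hsdef
  have hs1 : s ≤ 1 := Real.sin_le_one α
  have hv : ∀ t ∈ J, ‖deriv γ t‖ ≤ 2 / s := by
    intro t ht
    have h1 := (hcb.metric (γ t) (deriv γ t) (deriv γ t) (hR.trans (hfar t ht)))
    rw [(hgeo t ht).unit] at h1
    have h2 := coneMetric_norm_le α (γ t) (deriv γ t)
    rw [← hsdef] at h2
    have h3 : ‖γ t‖ ^ (-ν) ≤ R₀ ^ (-ν) :=
      Real.rpow_le_rpow_of_nonpos (by linarith) (hfar t ht) (by linarith)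
    have h4 : C * ‖γ t‖ ^ (-ν) * ‖deriv γ t‖ * ‖deriv γ t‖ ≤ s ^ 2 / 2 * ‖deriv γ t‖ ^ 2 := by
      rw [mul_assoc, ← sq]
      refine mul_le_mul_of_nonneg_right (le_trans ?_ hsmall) (sq_nonneg _)
      gcongr
    have h5 := (abs_le.1 h1).1
    rw [le_div_iff₀ hs]
    refine abs_le_of_sq_le_sq' ?_ (by norm_num) |>.2
    nlinarith
  have hr0 : ∀ t, 0 ≤ ‖γ t‖ ^ (-ν) := fun t => Real.rpow_nonneg (norm_nonneg _) _
  have hv2 : ∀ t ∈ J, ‖deriv γ t‖ ^ 2 ≤ 4 / s ^ 2 := by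
    intro t ht
    have := pow_le_pow_left₀ (norm_nonneg _) (hv t ht) 2
    rwa [div_pow, show (2 : ℝ) ^ 2 = 4 by norm_num] at this
  have hv1 : ∀ t ∈ J, ‖deriv γ t‖ ≤ 4 / s ^ 2 := by
    intro t ht
    refine (hv t ht).trans ?_
    rw [div_le_div_iff₀ hs (by positivity)]
    nlinarith
  have hKe : ∀ t ∈ J, ∀ y, 0 ≤ y → y ≤ 4 / s ^ 2 →
      C * ‖γ t‖ ^ (-ν) * y ≤ 4 * C / s ^ 2 * ‖γ t‖ ^ (-ν) := by
    intro t ht y hy0 hy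
    calc _ ≤ C * ‖γ t‖ ^ (-ν) * (4 / s ^ 2) := by
          have := hr0 t
          gcongr
      _ = _ := by ring
  have hne : ∀ t ∈ J, ‖γ t‖ ≠ 0 := fun t ht => (lt_of_lt_of_le (by linarith) (hfar t ht)).ne'
  refine ⟨fun t ht => (hgeo t ht).hasDerivAt, hfar, ?_, ?_, ?_, ?_⟩
  · intro t ht
    have h1 := (hcb.metric (γ t) (deriv γ t) (deriv γ t) (hR.trans (hfar t ht)))
    rw [(hgeo t ht).unit, abs_sub_comm, mul_assoc _ ‖deriv γ t‖, ← sq] at h1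
    exact h1.trans (hKe t ht _ (sq_nonneg _) (hv2 t ht))
  · intro t ht
    obtain ⟨N, hN, hNd⟩ := (hgeo t ht).momentum
    refine ⟨_, hNd.clm_apply (hgeo t ht).hasDerivAt, ?_⟩
    rw [hN, (hgeo t ht).unit, add_sub_cancel_right, abs_mul]
    have h1 := hcb.radial (γ t) (deriv γ t) (hR.trans (hfar t ht))
    have h2 := hKe t ht _ (sq_nonneg _) (hv2 t ht)
    rw [abs_of_pos (by norm_num : (0 : ℝ) < 1 / 2)]
    linarith [abs_nonneg (fderiv ℝ B (γ t) (γ t) (deriv γ t) (deriv γ t))]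
  · intro t ht
    have h1 := (hcb.metric (γ t) (deriv γ t) (γ t) (hR.trans (hfar t ht)))
    have e : coneMetric n α (γ t) (deriv γ t) (γ t) = ⟪deriv γ t, γ t⟫ := by
      simp only [coneMetric]
      rw [real_inner_self_eq_norm_sq, mul_div_assoc, div_self (pow_ne_zero 2 (hne t ht))]
      ring
    rw [e] at h1
    refine h1.trans (mul_le_mul_of_nonneg_right ?_ (norm_nonneg _))
    exact hKe t ht _ (norm_nonneg _) (hv1 t ht)
  · intro S hS
    refine ⟨fun t => B (γ t) (deriv γ t) (S (γ t)), fun t ht => ⟨?_, ?_⟩⟩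
    · obtain ⟨N, hN, hNd⟩ := (hgeo t ht).momentum
      refine ⟨_, hNd.clm_apply (S.hasFDerivAt.comp_hasDerivAt t (hgeo t ht).hasDerivAt), ?_⟩
      rw [hN]
      have h1 := hcb.rotation S (γ t) (deriv γ t) hS (hR.trans (hfar t ht))
      refine h1.trans ?_
      have h2 := mul_le_mul_of_nonneg_left (hKe t ht _ (sq_nonneg _) (hv2 t ht)) (norm_nonneg S)
      linarith
    · have h1 := (hcb.metric (γ t) (deriv γ t) (S (γ t)) (hR.trans (hfar t ht)))
      have hSx : ⟪S (γ t), γ t⟫ = 0 := by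
        have := hS (γ t) (γ t)
        rw [real_inner_comm (S (γ t))] at this
        linarith
      have e : coneMetric n α (γ t) (deriv γ t) (S (γ t)) = s ^ 2 * ⟪deriv γ t, S (γ t)⟫ := by
        simp only [coneMetric]
        rw [hSx]
        ring
      rw [e] at h1
      refine h1.trans ?_
      have h2 := hKe t ht _ (norm_nonneg _) (hv1 t ht)
      calc _ ≤ (C * ‖γ t‖ ^ (-ν) * ‖deriv γ t‖) * (‖S‖ * ‖γ t‖) :=
            mul_le_mul_of_nonneg_left (S.le_opNorm _)
              (by have := hr0 t; positivity)
        _ ≤ (4 * C / s ^ 2 * ‖γ t‖ ^ (-ν)) * (‖S‖ * ‖γ t‖) := by gcongr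
        _ = _ := by ring

theorem ConicalTraj.abs_inner_le (h : ConicalTraj α ν K R₀ J x v b) {t η : ℝ} (ht : t ∈ J)
    (hη : 0 ≤ η) (hp : 0 < ‖x t‖) (he : K * ‖x t‖ ^ (-ν) ≤ η) :
    |⟪v t, x t⟫| ≤ (1 + η) * ‖x t‖ := by
  have h1 := (abs_le.1 ((h.speed t ht).trans he)).2
  have h2 := coneMetric_radial_le α (x t) (v t)
  have h3 : ⟪v t, x t⟫ ^ 2 ≤ (1 + η) * ‖x t‖ ^ 2 := by
    rw [← div_le_iff₀ (by positivity)]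
    linarith
  refine abs_le_of_sq_le_sq ?_ (by positivity)
  nlinarith [sq_nonneg ‖x t‖]

theorem ConicalTraj.shift (h : ConicalTraj α ν K R₀ J x v b) (s : ℝ) {J' : Set ℝ}
    (hJ : ∀ t ∈ J', t + s ∈ J) :
    ConicalTraj α ν K R₀ J' (fun t => x (t + s)) (fun t => v (t + s)) (fun t => b (t + s)) where
  deriv_x t ht := (h.deriv_x _ (hJ t ht)).comp_add_const t s
  far t ht := h.far _ (hJ t ht)
  speed t ht := h.speed _ (hJ t ht)
  radial t ht := by
    obtain ⟨b', h1, h2⟩ := h.radial _ (hJ t ht)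
    exact ⟨b', h1.comp_add_const t s, h2⟩
  radial_approx t ht := h.radial_approx _ (hJ t ht)
  angular S hS := by
    obtain ⟨m, hm⟩ := h.angular S hS
    refine ⟨fun t => m (t + s), fun t ht => ⟨?_, (hm _ (hJ t ht)).2⟩⟩
    obtain ⟨m', h1, h2⟩ := (hm _ (hJ t ht)).1
    exact ⟨m', h1.comp_add_const t s, h2⟩

end Traj

/-! ### Radial behaviour of a trajectory around its point of closest approach -/

/-- A conical trajectory on `[-T₁, T₂]` whose radial momentum vanishes at time `0`, with relative
errors at most `η ≤ 1/16`. -/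
structure CentredTraj {n : ℕ} (α ν K R₀ η T₁ T₂ : ℝ) (x v : ℝ → En n) (b : ℝ → ℝ) : Prop where
  traj : ConicalTraj α ν K R₀ (Icc (-T₁) T₂) x v b
  sin_pos : 0 < Real.sin α
  nu_pos : 0 < ν
  nu_le : ν ≤ 1 / 2
  one_le_R₀ : 1 ≤ R₀
  K_nonneg : 0 ≤ K
  err : K * R₀ ^ (-ν) ≤ η
  eta_le : η ≤ 1 / 16
  T₁_nonneg : 0 ≤ T₁
  T₂_nonneg : 0 ≤ T₂
  b_zero : b 0 = 0

namespace CentredTraj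

variable {n : ℕ} {α ν K R₀ η T₁ T₂ : ℝ} {x v : ℝ → En n} {b : ℝ → ℝ} {t : ℝ}

theorem zero_mem (h : CentredTraj α ν K R₀ η T₁ T₂ x v b) : (0 : ℝ) ∈ Icc (-T₁) T₂ :=
  ⟨by linarith [h.T₁_nonneg], h.T₂_nonneg⟩

theorem norm_pos (h : CentredTraj α ν K R₀ η T₁ T₂ x v b) (ht : t ∈ Icc (-T₁) T₂) :
    0 < ‖x t‖ := by
  linarith [h.traj.far t ht, h.one_le_R₀]

theorem eta_nonneg (h : CentredTraj α ν K R₀ η T₁ T₂ x v b) : 0 ≤ η :=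
  (mul_nonneg h.K_nonneg (Real.rpow_nonneg (by linarith [h.one_le_R₀]) _)).trans h.err

theorem err_le (h : CentredTraj α ν K R₀ η T₁ T₂ x v b) (ht : t ∈ Icc (-T₁) T₂) :
    K * ‖x t‖ ^ (-ν) ≤ η := by
  refine le_trans ?_ h.err
  have := Real.rpow_le_rpow_of_nonpos (by linarith [h.one_le_R₀]) (h.traj.far t ht)
    (by linarith [h.nu_pos] : -ν ≤ 0)
  exact mul_le_mul_of_nonneg_left this h.K_nonneg

theorem abs_inner_le (h : CentredTraj α ν K R₀ η T₁ T₂ x v b) (ht : t ∈ Icc (-T₁) T₂) :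
    |⟪v t, x t⟫| ≤ (1 + η) * ‖x t‖ :=
  h.traj.abs_inner_le ht h.eta_nonneg (h.norm_pos ht) (h.err_le ht)

theorem hasDerivAt_norm (h : CentredTraj α ν K R₀ η T₁ T₂ x v b) (ht : t ∈ Icc (-T₁) T₂) :
    HasDerivAt (fun t => ‖x t‖) (⟪v t, x t⟫ / ‖x t‖) t := by
  have hp := h.norm_pos ht
  have h1 := (h.traj.deriv_x t ht).norm_sq.sqrt (by positivity)
  simp only [Real.sqrt_sq (norm_nonneg _)] at h1
  refine h1.congr_deriv ?_
  rw [real_inner_comm]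
  field_simp

theorem norm_le (h : CentredTraj α ν K R₀ η T₁ T₂ x v b) (ht : t ∈ Icc (-T₁) T₂) :
    ‖x t‖ ≤ ‖x 0‖ + 2 * |t| := by
  have := abs_sub_le_of_abs_deriv_le_two_sided (f := fun t => ‖x t‖) (Φ := fun t => 2 * t)
    (φ := fun _ => 2) h.T₁_nonneg h.T₂_nonneg ht (fun r hr => ⟨_, h.hasDerivAt_norm hr, ?_⟩)
    (fun r _ => by simpa using (hasDerivAt_id r).const_mul 2)
  · have h2 := (abs_le.1 this).2
    simp only [mul_zero, sub_zero] at h2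
    linarith
  · rw [abs_div, abs_norm, div_le_iff₀ (h.norm_pos hr)]
    refine (h.abs_inner_le hr).trans ?_
    gcongr
    linarith [h.eta_le]

theorem abs_b_sub_le (h : CentredTraj α ν K R₀ η T₁ T₂ x v b) (ht : t ∈ Icc (-T₁) T₂) :
    |b t - t| ≤ η * |t| := by
  have := abs_sub_le_of_abs_deriv_le_two_sided (f := fun t => b t - t) (Φ := fun t => η * t)
    (φ := fun _ => η) h.T₁_nonneg h.T₂_nonneg ht (fun r hr => ?_)
    (fun r _ => by simpa using (hasDerivAt_id r).const_mul η)
  · simpa [h.b_zero] using this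
  · obtain ⟨b', h1, h2⟩ := h.traj.radial r hr
    exact ⟨b' - 1, h1.sub (hasDerivAt_id r), h2.trans (h.err_le hr)⟩

/-- On a cone `‖x t‖² = ‖x 0‖² + t²`. -/
theorem abs_norm_sq_sub_le (h : CentredTraj α ν K R₀ η T₁ T₂ x v b) (ht : t ∈ Icc (-T₁) T₂) :
    |‖x t‖ ^ 2 - (‖x 0‖ ^ 2 + t ^ 2)| ≤ 4 * η * (‖x 0‖ ^ 2 + t ^ 2) := by
  have hη := h.eta_nonneg
  have := abs_sub_le_of_abs_deriv_le_two_sided (f := fun t => ‖x t‖ ^ 2 - t ^ 2)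
    (Φ := fun t => 2 * η * ‖x 0‖ * t + 3 * η * t ^ 2)
    (φ := fun t => 2 * η * ‖x 0‖ + 6 * η * t) h.T₁_nonneg h.T₂_nonneg ht (fun r hr => ?_)
    (fun r _ => ?_)
  · simp only [sq_abs, mul_zero, ne_eq, OfNat.ofNat_ne_zero, not_false_eq_true, zero_pow,
      sub_zero, add_zero] at this
    have e : ‖x t‖ ^ 2 - (‖x 0‖ ^ 2 + t ^ 2) = ‖x t‖ ^ 2 - t ^ 2 - ‖x 0‖ ^ 2 := by ring
    rw [e]
    refine this.trans ?_
    have h1 : 2 * (‖x 0‖ * |t|) ≤ ‖x 0‖ ^ 2 + t ^ 2 := by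
      nlinarith [sq_nonneg (‖x 0‖ - |t|), sq_abs t]
    nlinarith [mul_le_mul_of_nonneg_left h1 hη, mul_nonneg hη (sq_nonneg ‖x 0‖)]
  · refine ⟨_, (h.traj.deriv_x r hr).norm_sq.sub ((hasDerivAt_id r).pow 2), ?_⟩
    have h1 := (h.traj.radial_approx r hr).trans
      (mul_le_mul_of_nonneg_right (h.err_le hr) (norm_nonneg _))
    have h2 := h.abs_b_sub_le hr
    have h3 := mul_le_mul_of_nonneg_left (h.norm_le hr) hη
    rw [real_inner_comm]
    simp only [id, Nat.cast_ofNat, mul_one]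
    norm_num
    rw [abs_le] at *
    constructor <;> nlinarith
  · refine (((hasDerivAt_id r).const_mul (2 * η * ‖x 0‖)).add
      (((hasDerivAt_id r).pow 2).const_mul (3 * η))).congr_deriv ?_
    simp only [id, Nat.cast_ofNat, mul_one]
    norm_num
    ring

theorem q_pos (h : CentredTraj α ν K R₀ η T₁ T₂ x v b) (t : ℝ) : 0 < ‖x 0‖ + |t| := by
  have := h.norm_pos h.zero_mem
  positivity

theorem norm_ge_half (h : CentredTraj α ν K R₀ η T₁ T₂ x v b) (ht : t ∈ Icc (-T₁) T₂) :
    (‖x 0‖ + |t|) / 2 ≤ ‖x t‖ := by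
  have h1 := (abs_le.1 (h.abs_norm_sq_sub_le ht)).1
  refine abs_le_of_sq_le_sq' ?_ (norm_nonneg _) |>.2
  have h2 : 4 * η * (‖x 0‖ ^ 2 + t ^ 2) ≤ 1 / 4 * (‖x 0‖ ^ 2 + t ^ 2) := by
    gcongr
    linarith [h.eta_le]
  nlinarith [sq_nonneg (‖x 0‖ - |t|), sq_abs t]

theorem rpow_le (h : CentredTraj α ν K R₀ η T₁ T₂ x v b) (ht : t ∈ Icc (-T₁) T₂) :
    ‖x t‖ ^ (-ν) ≤ 2 * (‖x 0‖ + |t|) ^ (-ν) := by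
  have hq := h.q_pos t
  refine (Real.rpow_le_rpow_of_nonpos (by positivity) (h.norm_ge_half ht)
    (by linarith [h.nu_pos])).trans ?_
  rw [div_eq_mul_inv, Real.mul_rpow hq.le (by norm_num), mul_comm]
  refine mul_le_mul_of_nonneg_right ?_ (by positivity)
  rw [Real.inv_rpow (by norm_num), Real.rpow_neg (by norm_num), inv_inv]
  calc (2 : ℝ) ^ ν ≤ 2 ^ (1 : ℝ) :=
        Real.rpow_le_rpow_of_exponent_le (by norm_num) (by linarith [h.nu_le])
    _ = 2 := by simp

theorem rpow_mul_le (h : CentredTraj α ν K R₀ η T₁ T₂ x v b) (ht : t ∈ Icc (-T₁) T₂) :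
    ‖x t‖ ^ (-ν) * ‖x t‖ ≤ 4 * (‖x 0‖ + |t|) ^ (1 - ν) := by
  have hq := h.q_pos t
  have h1 := h.norm_le ht
  have e : (‖x 0‖ + |t|) ^ (1 - ν) = (‖x 0‖ + |t|) ^ (-ν) * (‖x 0‖ + |t|) := by
    rw [sub_eq_neg_add, Real.rpow_add_one hq.ne']
  rw [e]
  calc _ ≤ 2 * (‖x 0‖ + |t|) ^ (-ν) * (2 * (‖x 0‖ + |t|)) := by
        refine mul_le_mul (h.rpow_le ht) ?_ (norm_nonneg _) (by positivity)
        linarith [norm_nonneg (x 0)]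
    _ = _ := by ring

/-- Almost conservation of the angular momentum attached to the infinitesimal rotation `S`. -/
theorem angular_le (h : CentredTraj α ν K R₀ η T₁ T₂ x v b) (ht : t ∈ Icc (-T₁) T₂)
    (S : En n →L[ℝ] En n) (hS : ∀ y z, ⟪S y, z⟫ = -⟪y, S z⟫) :
    Real.sin α ^ 2 * |⟪v t, S (x t)⟫ - ⟪v 0, S (x 0)⟫| ≤
      12 * K * ‖S‖ * (‖x 0‖ + |t|) ^ (1 - ν) := by
  obtain ⟨m, hm⟩ := h.traj.angular S hS
  have hK := h.K_nonneg
  have hν := h.nu_le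
  have hKS : 0 ≤ K * ‖S‖ := by positivity
  have hx0 := h.norm_pos h.zero_mem
  have h1 := abs_sub_le_of_abs_deriv_le_two_sided (f := m)
    (Φ := fun t => 2 * (K * ‖S‖) * ((‖x 0‖ + t) ^ (1 - ν) / (1 - ν)))
    (φ := fun t => 2 * (K * ‖S‖) * (‖x 0‖ + t) ^ (-ν)) h.T₁_nonneg h.T₂_nonneg ht
    (fun r hr => ?_) (fun r hr => ?_)
  · have h2 := (hm t ht).2
    have h3 := (hm 0 h.zero_mem).2
    have h4 := mul_le_mul_of_nonneg_left (h.rpow_mul_le ht) hKS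
    have h5 := mul_le_mul_of_nonneg_left (h.rpow_mul_le h.zero_mem) hKS
    have h6 : (‖x 0‖ + |(0 : ℝ)|) ^ (1 - ν) ≤ (‖x 0‖ + |t|) ^ (1 - ν) := by
      refine Real.rpow_le_rpow (by positivity) ?_ (by linarith)
      simp
    have h7 := mul_le_mul_of_nonneg_left h6 hKS
    have hQ : 0 ≤ (‖x 0‖ + |t|) ^ (1 - ν) := by positivity
    have h8 : (‖x 0‖ + |t|) ^ (1 - ν) / (1 - ν) ≤ 2 * (‖x 0‖ + |t|) ^ (1 - ν) := by
      rw [div_le_iff₀ (by linarith)]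
      nlinarith
    have h9 : 0 ≤ (‖x 0‖ + 0) ^ (1 - ν) / (1 - ν) := div_nonneg (by positivity) (by linarith)
    have h10 := mul_le_mul_of_nonneg_left h8 hKS
    have h11 := mul_nonneg hKS h9
    rw [← abs_of_nonneg (sq_nonneg (Real.sin α)), ← abs_mul]
    rw [abs_le] at *
    constructor <;> nlinarith
  · obtain ⟨m', h1, h2⟩ := (hm r hr).1
    refine ⟨m', h1, h2.trans ?_⟩
    have := mul_le_mul_of_nonneg_left (h.rpow_le hr) hKS
    linarith
  · have hpos : ‖x 0‖ + r ≠ 0 := by positivity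
    have h2 := (((hasDerivAt_id r).const_add ‖x 0‖).rpow_const (p := 1 - ν)
      (Or.inl hpos)).div_const (1 - ν)
    refine (h2.const_mul (2 * (K * ‖S‖))).congr_deriv ?_
    have : 1 - ν ≠ 0 := by linarith
    simp only [id]
    rw [show 1 - ν - 1 = -ν by ring]
    field_simp

end CentredTraj

/-! ### Direction of a trajectory -/

theorem abs_angular_speed_sub_le {N D s d η r₀ : ℝ} (hDp : 0 < D) (hNp : 0 < N) (hs : 0 < s)
    (hr : 0 < r₀) (hη : 0 ≤ η) (hη16 : η ≤ 1 / 16) (hN : |N - D| ≤ 4 * η * D)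
    (hd : |s * d - 1| ≤ 2 * η) : |r₀ / D / s - r₀ * d / N| ≤ 12 * η / s * (r₀ / D) := by
  have hN2 : 3 / 4 * D ≤ N := by
    have := (abs_le.1 hN).1
    nlinarith
  have e2 : r₀ / D / s - r₀ * d / N = r₀ / D * ((N - D) - (s * d - 1) * D) / (s * N) := by
    field_simp
    ring
  have h6 : |(N - D) - (s * d - 1) * D| ≤ 6 * η * D := by
    refine (abs_sub _ _).trans ?_
    rw [abs_mul, abs_of_pos hDp]
    nlinarith
  rw [e2, abs_div, abs_of_pos (by positivity : 0 < s * N), div_le_iff₀ (by positivity),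
    abs_mul, abs_of_pos (by positivity : 0 < r₀ / D)]
  calc _ ≤ r₀ / D * (6 * η * D) := by gcongr
    _ ≤ r₀ / D * (12 * η * N) := by
        refine mul_le_mul_of_nonneg_left ?_ (by positivity)
        nlinarith
    _ = _ := by field_simp

namespace CentredTraj

variable {n : ℕ} {α ν K R₀ η T₁ T₂ : ℝ} {x v : ℝ → En n} {b : ℝ → ℝ} {t : ℝ}

/-- An orthonormal frame `u, w` of a plane containing the position and the velocity at time `0`; the
component of the velocity along `w` is close to `1 / sin α`. -/
theorem exists_frame (h : CentredTraj α ν K R₀ η T₁ T₂ x v b) :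
    ∃ u w : En n, ∃ c d : ℝ, ‖u‖ = 1 ∧ ‖w‖ = 1 ∧ ⟪u, w⟫ = 0 ∧ x 0 = ‖x 0‖ • u ∧
      v 0 = c • u + d • w ∧ |Real.sin α * d - 1| ≤ 2 * η := by
  have hr := h.norm_pos h.zero_mem
  have hs := h.sin_pos
  have hη := h.eta_nonneg
  have hη16 := h.eta_le
  set r := ‖x 0‖ with hrdef
  set u : En n := r⁻¹ • x 0 with hu
  have hun : ‖u‖ = 1 := by
    rw [hu, norm_smul, ← hrdef, norm_inv, Real.norm_eq_abs, abs_of_pos hr,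
      inv_mul_cancel₀ hr.ne']
  have hxu : x 0 = r • u := by rw [hu, smul_smul, mul_inv_cancel₀ hr.ne', one_smul]
  set c : ℝ := ⟪v 0, u⟫ with hc
  set z : En n := v 0 - c • u with hz
  have huu : ⟪u, u⟫ = 1 := by rw [real_inner_self_eq_norm_sq, hun]; norm_num
  have hzu : ⟪z, u⟫ = 0 := by
    rw [hz, inner_sub_left, real_inner_smul_left, huu, ← hc]; ring
  have hcη : |c| ≤ η := by
    have h1 := (h.traj.radial_approx 0 h.zero_mem).trans
      (mul_le_mul_of_nonneg_right (h.err_le h.zero_mem) (norm_nonneg _))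
    rw [h.b_zero, zero_sub, abs_neg, hxu, real_inner_smul_right, ← hc, abs_mul, abs_of_pos hr,
      norm_smul, hun, mul_one, Real.norm_eq_abs, abs_of_pos hr, mul_comm] at h1
    exact le_of_mul_le_mul_right h1 hr
  have hvz : v 0 = c • u + z := by rw [hz]; abel
  have hvv : ⟪v 0, v 0⟫ = c ^ 2 + ‖z‖ ^ 2 := by
    have huz : ⟪u, z⟫ = 0 := by rw [real_inner_comm, hzu]
    rw [hvz]
    simp only [inner_add_left, inner_add_right, real_inner_smul_left,
      real_inner_smul_right, hzu, huz, real_inner_self_eq_norm_sq]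
    rw [norm_smul, hun, Real.norm_eq_abs, mul_one, sq_abs]
    ring
  have hsp := (h.traj.speed 0 h.zero_mem).trans (h.err_le h.zero_mem)
  have e : coneMetric n α (x 0) (v 0) (v 0) = c ^ 2 + Real.sin α ^ 2 * ‖z‖ ^ 2 := by
    simp only [coneMetric]
    rw [hvv, ← hrdef, hxu, real_inner_smul_right, ← hc]
    field_simp
    ring
  rw [e] at hsp
  have hc2 : c ^ 2 ≤ η := by
    rw [← sq_abs]
    nlinarith [abs_nonneg c]
  have hd : |Real.sin α * ‖z‖ - 1| ≤ 2 * η := by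
    have h0 : 0 ≤ Real.sin α * ‖z‖ := by positivity
    rw [abs_le] at hsp ⊢
    constructor <;> nlinarith [sq_nonneg c]
  have hz0 : 0 < ‖z‖ := by
    rcases (norm_nonneg z).lt_or_eq with h0 | h0
    · exact h0
    · rw [← h0] at hd
      norm_num at hd
      linarith
  refine ⟨u, ‖z‖⁻¹ • z, c, ‖z‖, hun, ?_, ?_, hxu, ?_, hd⟩
  · rw [norm_smul, norm_inv, norm_norm, inv_mul_cancel₀ hz0.ne']
  · rw [real_inner_smul_right, real_inner_comm, hzu, mul_zero]
  · rw [smul_inv_smul₀ hz0.ne', ← hvz]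

/-- Almost conservation of the angular momentum in the plane of `p` and `p'`. -/
theorem plane_le (h : CentredTraj α ν K R₀ η T₁ T₂ x v b) (ht : t ∈ Icc (-T₁) T₂) {p p' : En n}
    (hp : ‖p‖ ≤ 1) (hp' : ‖p'‖ ≤ 1) :
    |(⟪p, x t⟫ * ⟪p', v t⟫ - ⟪p', x t⟫ * ⟪p, v t⟫) -
      (⟪p, x 0⟫ * ⟪p', v 0⟫ - ⟪p', x 0⟫ * ⟪p, v 0⟫)| ≤
      24 * K / Real.sin α ^ 2 * (‖x 0‖ + |t|) ^ (1 - ν) := by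
  let S : En n →L[ℝ] En n := (innerSL ℝ p).smulRight p' - (innerSL ℝ p').smulRight p
  have hSa : ∀ y, S y = ⟪p, y⟫ • p' - ⟪p', y⟫ • p := fun y => by simp [S]
  have hS : ∀ y z, ⟪S y, z⟫ = -⟪y, S z⟫ := by
    intro y z
    rw [hSa, hSa, inner_sub_left, inner_sub_right]
    simp only [real_inner_smul_left, real_inner_smul_right]
    rw [real_inner_comm y p, real_inner_comm y p']
    ring
  have hSn : ‖S‖ ≤ 2 := by
    refine S.opNorm_le_bound (by norm_num) fun y => ?_
    rw [hSa]
    refine (norm_sub_le _ _).trans ?_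
    rw [norm_smul, norm_smul, Real.norm_eq_abs, Real.norm_eq_abs]
    have h1 : |⟪p, y⟫| ≤ ‖y‖ := (abs_real_inner_le_norm p y).trans
      (mul_le_of_le_one_left (norm_nonneg _) hp)
    have h2 : |⟪p', y⟫| ≤ ‖y‖ := (abs_real_inner_le_norm p' y).trans
      (mul_le_of_le_one_left (norm_nonneg _) hp')
    have h3 := mul_le_mul h1 hp' (norm_nonneg _) (norm_nonneg _)
    have h4 := mul_le_mul h2 hp (norm_nonneg _) (norm_nonneg _)
    linarith
  have hv : ∀ t, ⟪v t, S (x t)⟫ = ⟪p, x t⟫ * ⟪p', v t⟫ - ⟪p', x t⟫ * ⟪p, v t⟫ := by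
    intro t
    rw [hSa, inner_sub_right, real_inner_smul_right, real_inner_smul_right,
      real_inner_comm p', real_inner_comm p]
  have h1 := h.angular_le ht S hS
  rw [hv, hv] at h1
  have hs := h.sin_pos
  have hK := h.K_nonneg
  have hq := h.q_pos t
  rw [div_mul_eq_mul_div, le_div_iff₀ (by positivity), mul_comm]
  refine h1.trans ?_
  calc _ ≤ 12 * K * 2 * (‖x 0‖ + |t|) ^ (1 - ν) := by gcongr
    _ = _ := by ring

set_option maxHeartbeats 1000000 in
/-- Relative to an orthonormal frame `u, w` of the plane spanned by `x 0` and `v 0`, the direction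
of `x t` is close to the point at angle `arctan (t / ‖x 0‖) / sin α`, as it would be on the
cone. -/
theorem direction_close (h : CentredTraj α ν K R₀ η T₁ T₂ x v b) (ht : t ∈ Icc (-T₁) T₂)
    {u w : En n} {c d : ℝ} (hu : ‖u‖ = 1) (hw : ‖w‖ = 1) (huw : ⟪u, w⟫ = 0)
    (hx0 : x 0 = ‖x 0‖ • u) (hv0 : v 0 = c • u + d • w) (hd : |Real.sin α * d - 1| ≤ 2 * η) :
    |(Real.cos (Real.arctan (t / ‖x 0‖) / Real.sin α) * ⟪x t, u⟫ +
      Real.sin (Real.arctan (t / ‖x 0‖) / Real.sin α) * ⟪x t, w⟫) / ‖x t‖ - 1| ≤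
      96 * η / (Real.sin α ^ 2 * ν) + 24 * η / Real.sin α := by
  set r₀ := ‖x 0‖ with hr₀
  set s := Real.sin α with hs
  have hr := h.norm_pos h.zero_mem
  rw [← hr₀] at hr
  have hsp : 0 < s := h.sin_pos
  have hη := h.eta_nonneg
  have hη16 := h.eta_le
  have hν := h.nu_pos
  have hK := h.K_nonneg
  have huu : ⟪u, u⟫ = 1 := by rw [real_inner_self_eq_norm_sq, hu]; norm_num
  have hww : ⟪w, w⟫ = 1 := by rw [real_inner_self_eq_norm_sq, hw]; norm_num
  have hwu : ⟪w, u⟫ = 0 := by rw [real_inner_comm, huw]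
  let τ : ℝ → ℝ := fun t => Real.arctan (t / r₀) / s
  let A : ℝ → ℝ := fun t => (Real.cos (τ t) * ⟪x t, u⟫ + Real.sin (τ t) * ⟪x t, w⟫) / ‖x t‖
  have hA0 : A 0 = 1 := by
    simp only [A, τ, zero_div, Real.arctan_zero, Real.cos_zero, Real.sin_zero]
    rw [hx0, real_inner_smul_left, huu, norm_smul, hu, Real.norm_eq_abs, abs_of_pos hr]
    field_simp
    ring
  have hen : ∀ a : ℝ, ‖Real.cos a • u + Real.sin a • w‖ = 1 := by
    intro a
    have : ‖Real.cos a • u + Real.sin a • w‖ ^ 2 = 1 := by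
      rw [← real_inner_self_eq_norm_sq]
      simp only [inner_add_left, inner_add_right, real_inner_smul_left, real_inner_smul_right,
        huu, hww, huw, hwu]
      nlinarith [Real.sin_sq_add_cos_sq a]
    nlinarith [norm_nonneg (Real.cos a • u + Real.sin a • w)]
  have hΦ : ∀ r, 0 ≤ r → HasDerivAt
      (fun r => (96 * K / s ^ 2) * (-(r₀ + r) ^ (-ν) / ν) + 12 * η / s * Real.arctan (r / r₀))
      ((96 * K / s ^ 2) * (r₀ + r) ^ (-1 - ν) + 12 * η / s * (r₀ / (r₀ ^ 2 + r ^ 2))) r := by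
    intro r hr'
    have hpos : r₀ + r ≠ 0 := by positivity
    have h2 := ((((hasDerivAt_id r).const_add r₀).rpow_const (p := -ν)
      (Or.inl hpos)).neg.div_const ν).const_mul (96 * K / s ^ 2)
    have h3 := (((hasDerivAt_id r).div_const r₀).arctan).const_mul (12 * η / s)
    refine (h2.add h3).congr_deriv ?_
    simp only [id]
    rw [show -ν - 1 = -1 - ν by ring]
    field_simp
  have hmain := abs_sub_le_of_abs_deriv_le_two_sided (f := A) h.T₁_nonneg h.T₂_nonneg ht
    (fun r hr' => ?_) hΦ
  · rw [hA0] at hmain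
    refine hmain.trans ?_
    simp only [add_zero, zero_div, Real.arctan_zero, mul_zero]
    have h1 : K * r₀ ^ (-ν) ≤ η := h.err_le h.zero_mem
    have h2 : 0 ≤ (r₀ + |t|) ^ (-ν) := by positivity
    have h3 : Real.arctan (|t| / r₀) ≤ 2 := by
      linarith [Real.arctan_lt_pi_div_two (|t| / r₀), Real.pi_le_four]
    have h4 : 96 * K / s ^ 2 * (-(r₀ + |t|) ^ (-ν) / ν) ≤ 0 :=
      mul_nonpos_of_nonneg_of_nonpos (by positivity)
        (div_nonpos_of_nonpos_of_nonneg (by linarith) hν.le)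
    have h5 : 96 * K / s ^ 2 * (-r₀ ^ (-ν) / ν) = -(96 * (K * r₀ ^ (-ν)) / (s ^ 2 * ν)) := by
      field_simp
    have h6 : 96 * (K * r₀ ^ (-ν)) / (s ^ 2 * ν) ≤ 96 * η / (s ^ 2 * ν) := by gcongr
    have h7 : 12 * η / s * Real.arctan (|t| / r₀) ≤ 12 * η / s * 2 := by gcongr
    have h8 : 12 * η / s * 2 = 24 * η / s := by ring
    linarith
  · have hxr := h.norm_pos hr'
    have hτ : HasDerivAt τ (r₀ / (r₀ ^ 2 + r ^ 2) / s) r := by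
      refine ((((hasDerivAt_id r).div_const r₀).arctan).div_const s).congr_deriv ?_
      simp only [id]
      field_simp
    have hxu : ∀ y : En n, HasDerivAt (fun t => ⟪x t, y⟫) ⟪v r, y⟫ r := fun y => by
      simpa using (h.traj.deriv_x r hr').inner ℝ (hasDerivAt_const r y)
    set τ' := r₀ / (r₀ ^ 2 + r ^ 2) / s with hτ'
    set C := Real.cos (τ r) with hC
    set S := Real.sin (τ r) with hS
    have hA := ((hτ.cos.mul (hxu u)).add (hτ.sin.mul (hxu w))).fun_div
      (h.hasDerivAt_norm hr') hxr.ne'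
    refine ⟨_, hA, ?_⟩
    simp only [Pi.add_apply, Pi.mul_apply, ← hC, ← hS]
    set e : En n := C • u + S • w with he
    set θ : En n := ‖x r‖⁻¹ • x r with hθ
    have hθn : ‖θ‖ = 1 := by
      rw [hθ, norm_smul, norm_inv, norm_norm, inv_mul_cancel₀ hxr.ne']
    have hpl := h.plane_le hr' hθn.le (hen (τ r)).le
    rw [← hC, ← hS, ← he, ← hs, ← hr₀] at hpl
    have hJ : |-S * ⟪θ, u⟫ + C * ⟪θ, w⟫| ≤ 1 := by
      have h1 := hen (τ r + π / 2)
      rw [Real.cos_add_pi_div_two, Real.sin_add_pi_div_two, ← hC, ← hS] at h1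
      have h2 := abs_real_inner_le_norm θ ((-S) • u + C • w)
      rw [h1, hθn, inner_add_right, real_inner_smul_right, real_inner_smul_right] at h2
      linarith
    have hΩ0 : ⟪θ, x 0⟫ * ⟪e, v 0⟫ - ⟪e, x 0⟫ * ⟪θ, v 0⟫ =
        -(r₀ * d) * (-S * ⟪θ, u⟫ + C * ⟪θ, w⟫) := by
      rw [hv0, hx0, he]
      simp only [inner_add_left, inner_add_right, real_inner_smul_left, real_inner_smul_right,
        huu, hww, huw, hwu]
      ring
    have hΩ : ⟪θ, x r⟫ * ⟪e, v r⟫ - ⟪e, x r⟫ * ⟪θ, v r⟫ =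
        ‖x r‖ * (C * ⟪v r, u⟫ + S * ⟪v r, w⟫)
          - (C * ⟪x r, u⟫ + S * ⟪x r, w⟫) * ⟪v r, x r⟫ / ‖x r‖ := by
      rw [hθ, he]
      simp only [inner_add_left, real_inner_smul_left, real_inner_self_eq_norm_sq]
      rw [real_inner_comm (v r) u, real_inner_comm (v r) w, real_inner_comm (x r) u,
        real_inner_comm (x r) w, real_inner_comm (v r) (x r)]
      field_simp
    rw [hΩ0, hΩ] at hpl
    have hθu : ∀ y, ⟪x r, y⟫ = ‖x r‖ * ⟪θ, y⟫ := fun y => by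
      rw [hθ, real_inner_smul_left]
      field_simp
    set j := -S * ⟪θ, u⟫ + C * ⟪θ, w⟫ with hj
    set Ω := ‖x r‖ * (C * ⟪v r, u⟫ + S * ⟪v r, w⟫)
          - (C * ⟪x r, u⟫ + S * ⟪x r, w⟫) * ⟪v r, x r⟫ / ‖x r‖ with hΩd
    have hexp : ((-S * τ' * ⟪x r, u⟫ + C * ⟪v r, u⟫ + (C * τ' * ⟪x r, w⟫ + S * ⟪v r, w⟫)) *
          ‖x r‖ - (C * ⟪x r, u⟫ + S * ⟪x r, w⟫) * (⟪v r, x r⟫ / ‖x r‖)) / ‖x r‖ ^ 2 =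
        (Ω - -(r₀ * d) * j) / ‖x r‖ ^ 2 + j * (τ' - r₀ * d / ‖x r‖ ^ 2) := by
      rw [hΩd, hj, hθu u, hθu w]
      field_simp
      ring
    rw [hexp]
    have hq := h.q_pos r
    rw [← hr₀] at hq
    refine (abs_add_le _ _).trans (add_le_add ?_ ?_)
    · have hhalf := h.norm_ge_half hr'
      rw [← hr₀] at hhalf
      rw [abs_div, abs_of_pos (by positivity : 0 < ‖x r‖ ^ 2), div_le_iff₀ (by positivity)]
      refine hpl.trans ?_
      have e1 : (r₀ + |r|) ^ (1 - ν) = (r₀ + |r|) ^ (-1 - ν) * (r₀ + |r|) ^ 2 := by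
        rw [← Real.rpow_natCast, ← Real.rpow_add hq]
        norm_num
        congr 1
        ring
      rw [e1]
      have h4 : (r₀ + |r|) ^ 2 ≤ 4 * ‖x r‖ ^ 2 := by nlinarith
      have h5 : 0 ≤ 24 * K / s ^ 2 * (r₀ + |r|) ^ (-1 - ν) := by positivity
      calc _ = 24 * K / s ^ 2 * (r₀ + |r|) ^ (-1 - ν) * (r₀ + |r|) ^ 2 := by ring
        _ ≤ 24 * K / s ^ 2 * (r₀ + |r|) ^ (-1 - ν) * (4 * ‖x r‖ ^ 2) := by gcongr
        _ = _ := by ring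
    · rw [abs_mul, sq_abs]
      have hN := h.abs_norm_sq_sub_le hr'
      rw [← hr₀] at hN
      have h7 : |τ' - r₀ * d / ‖x r‖ ^ 2| ≤ 12 * η / s * (r₀ / (r₀ ^ 2 + r ^ 2)) :=
        abs_angular_speed_sub_le (by positivity) (by positivity) hsp hr hη hη16 hN hd
      calc _ ≤ 1 * |τ' - r₀ * d / ‖x r‖ ^ 2| := mul_le_mul_of_nonneg_right hJ (abs_nonneg _)
        _ ≤ _ := by rw [one_mul]; exact h7

end CentredTraj

/-! ### Total angle swept by a long trajectory -/

theorem arctan_le_self_of_nonneg {y : ℝ} (hy : 0 ≤ y) : Real.arctan y ≤ y := by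
  have h := Real.arctan_lt_pi_div_two y
  rcases hy.eq_or_lt with rfl | hy
  · simp
  · have h2 := Real.lt_tan (Real.arctan_pos.2 hy) h
    rw [Real.tan_arctan] at h2
    exact h2.le

set_option maxHeartbeats 1000000 in
/-- A trajectory centred at its closest point, with both ends much farther away than that point,
turns by an angle close to `π / sin α`. If the ends are in addition nearly antipodal, then
`π / sin α` is close to an odd multiple of `π`. -/
theorem CentredTraj.one_add_cos_le {n : ℕ} {α ν K R₀ η T₁ T₂ : ℝ} {x v : ℝ → En n} {b : ℝ → ℝ}
    (h : CentredTraj α ν K R₀ η T₁ T₂ x v b) {a : En n} (ha : ‖a‖ = 1) {ρ κ β : ℝ}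
    (hρ : 0 < ρ) (hκ : 0 ≤ κ) (hT₁ : 0 < T₁) (hT₂ : 0 < T₂)
    (h₁ : ‖x (-T₁) - ρ • a‖ ≤ κ * ρ) (h₂ : ‖x T₂ + ρ • a‖ ≤ κ * ρ)
    (hβ₁ : ‖x 0‖ / T₁ ≤ β) (hβ₂ : ‖x 0‖ / T₂ ≤ β) :
    1 + Real.cos (π / Real.sin α) ≤
      4 * (96 * η / (Real.sin α ^ 2 * ν) + 24 * η / Real.sin α + 2 * κ) +
        2 * β / Real.sin α := by
  obtain ⟨u, w, c, d, hu, hw, huw, hx0, hv0, hd⟩ := h.exists_frame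
  have hT₁m : -T₁ ∈ Icc (-T₁) T₂ := ⟨le_rfl, by linarith⟩
  have hT₂m : T₂ ∈ Icc (-T₁) T₂ := ⟨by linarith, le_rfl⟩
  have hdir₁ := (abs_le.1 (h.direction_close hT₁m hu hw huw hx0 hv0 hd)).1
  have hdir₂ := (abs_le.1 (h.direction_close hT₂m hu hw huw hx0 hv0 hd)).1
  have hp₁ := h.norm_pos hT₁m
  have hp₂ := h.norm_pos hT₂m
  have hr := h.norm_pos h.zero_mem
  have hs := h.sin_pos
  have hη := h.eta_nonneg
  have hν := h.nu_pos
  set δ := 96 * η / (Real.sin α ^ 2 * ν) + 24 * η / Real.sin α with hδ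
  have hδ0 : 0 ≤ δ := by positivity
  have hβ0 : 0 ≤ β := le_trans (by positivity) hβ₁
  -- For `δ > 1` the bound exceeds `2`.
  rcases lt_or_ge 1 δ with hδ1 | hδ1
  · have : 0 ≤ 2 * β / Real.sin α := by positivity
    linarith [Real.cos_le_one (π / Real.sin α)]
  set s := Real.sin α with hsd
  set r₀ := ‖x 0‖ with hr₀
  set τ₁ := Real.arctan (-T₁ / r₀) / s with hτ₁
  set τ₂ := Real.arctan (T₂ / r₀) / s with hτ₂
  have huu : ⟪u, u⟫ = 1 := by rw [real_inner_self_eq_norm_sq, hu]; norm_num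
  have hww : ⟪w, w⟫ = 1 := by rw [real_inner_self_eq_norm_sq, hw]; norm_num
  have hwu : ⟪w, u⟫ = 0 := by rw [real_inner_comm, huw]
  let E : ℝ → En n := fun a => Real.cos a • u + Real.sin a • w
  have hE : ∀ y z, ⟪E y, E z⟫ = Real.cos (y - z) := by
    intro y z
    simp only [E, inner_add_left, inner_add_right, real_inner_smul_left, real_inner_smul_right,
      huu, hww, huw, hwu]
    rw [Real.cos_sub]
    ring
  have hEn : ∀ y, ‖E y‖ = 1 := by
    intro y
    have := hE y y
    rw [real_inner_self_eq_norm_sq, sub_self, Real.cos_zero] at this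
    nlinarith [norm_nonneg (E y)]
  have hEx : ∀ (y : En n) z, Real.cos z * ⟪y, u⟫ + Real.sin z * ⟪y, w⟫ = ⟪y, E z⟫ := by
    intro y z
    simp only [E, inner_add_right, real_inner_smul_right]
  rw [hEx] at hdir₁ hdir₂
  have hend : ∀ (y a' : En n) z, ‖a'‖ = 1 → 0 < ‖y‖ → -δ ≤ ⟪y, E z⟫ / ‖y‖ - 1 →
      ‖y - ρ • a'‖ ≤ κ * ρ → 1 - δ - 2 * κ ≤ ⟪a', E z⟫ := by
    intro y a' z ha' hy h1 h2
    have h3 : (1 - δ) * ‖y‖ ≤ ⟪y, E z⟫ := by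
      rw [← le_div_iff₀ hy]
      linarith
    have h4 := (real_inner_le_norm (y - ρ • a') (E z)).trans_eq (by rw [hEn, mul_one])
    rw [inner_sub_left, real_inner_smul_left] at h4
    have h5 : ‖ρ • a'‖ - ‖y - ρ • a'‖ ≤ ‖y‖ := by
      have := norm_sub_norm_le (ρ • a') y
      rw [norm_sub_rev] at this
      linarith
    rw [norm_smul, ha', mul_one, Real.norm_eq_abs, abs_of_pos hρ] at h5
    have h6 : (1 - δ - 2 * κ) * ρ ≤ ⟪a', E z⟫ * ρ := by
      nlinarith [mul_nonneg hδ0 (mul_nonneg hκ hρ.le),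
        mul_le_mul_of_nonneg_left h5 (sub_nonneg.2 hδ1),
        mul_le_mul_of_nonneg_left h2 (sub_nonneg.2 hδ1)]
    exact le_of_mul_le_mul_right h6 hρ
  have hc₁ := hend _ a τ₁ ha hp₁ hdir₁ h₁
  have hc₂ := hend _ (-a) τ₂ (by rwa [norm_neg]) hp₂ hdir₂ (by rwa [smul_neg, sub_neg_eq_add])
  have hcos : 1 + Real.cos (τ₂ - τ₁) ≤ 4 * (δ + 2 * κ) := by
    have h1 := real_inner_le_norm a (E τ₁ - E τ₂)
    rw [ha, one_mul, inner_sub_right] at h1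
    rw [inner_neg_left] at hc₂
    have h2 : ‖E τ₁ - E τ₂‖ ^ 2 = 2 - 2 * Real.cos (τ₂ - τ₁) := by
      rw [norm_sub_sq_real, hEn, hEn, hE, ← Real.cos_neg (τ₁ - τ₂), neg_sub]
      ring
    have h3 : ‖E τ₁ - E τ₂‖ ≤ 2 := by
      have := norm_sub_le (E τ₁) (E τ₂)
      rw [hEn, hEn] at this
      linarith
    have h0 := norm_nonneg (E τ₁ - E τ₂)
    generalize ‖E τ₁ - E τ₂‖ = y at h1 h2 h3 h0
    have h4 : 2 - 2 * (δ + 2 * κ) ≤ y := by linarith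
    have h5 : 0 ≤ (y - 2 + 2 * (δ + 2 * κ)) * (y + 2) :=
      mul_nonneg (by linarith) (by linarith)
    have h6 : (δ + 2 * κ) * (y + 2) ≤ (δ + 2 * κ) * 4 :=
      mul_le_mul_of_nonneg_left (by linarith) (by linarith)
    linarith
  have hinv : ∀ T, 0 < T → Real.arctan (T / r₀) = π / 2 - Real.arctan (r₀ / T) := by
    intro T hT
    rw [← Real.arctan_inv_of_pos (by positivity), inv_div]
  have hτ : |(τ₂ - τ₁) - π / s| ≤ 2 * β / s := by
    have e : (τ₂ - τ₁) - π / s = -((Real.arctan (r₀ / T₁) + Real.arctan (r₀ / T₂)) / s) := by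
      rw [hτ₁, hτ₂, neg_div, Real.arctan_neg, hinv _ hT₁, hinv _ hT₂]
      field_simp
      ring
    have h1 : 0 ≤ Real.arctan (r₀ / T₁) := Real.arctan_nonneg.2 (by positivity)
    have h2 : 0 ≤ Real.arctan (r₀ / T₂) := Real.arctan_nonneg.2 (by positivity)
    rw [e, abs_neg, abs_of_nonneg (by positivity)]
    gcongr
    have h3 := arctan_le_self_of_nonneg (y := r₀ / T₁) (by positivity)
    have h4 := arctan_le_self_of_nonneg (y := r₀ / T₂) (by positivity)
    linarith
  have hlip : |Real.cos (τ₂ - τ₁) - Real.cos (π / s)| ≤ |(τ₂ - τ₁) - π / s| :=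
    Real.abs_cos_sub_cos_le _ _
  have := (abs_le.1 (hlip.trans hτ)).1
  linarith

set_option maxHeartbeats 1000000 in
/-- A conical trajectory between almost antipodal points at distance about `ρ` from the origin,
of length almost `2ρ` or more, forces `π / sin α` to be close to an odd multiple of `π`: its
closest point to the origin must be much closer than `ρ`, because the radial momentum increases
at unit rate from about `-ρ` to about `ρ`. -/
theorem ConicalTraj.one_add_cos_le {n : ℕ} {α ν K R₀ κ t₁ t₂ : ℝ} {x v : ℝ → En n} {b : ℝ → ℝ}
    (h : ConicalTraj α ν K R₀ (Icc t₁ t₂) x v b) (hs : 0 < Real.sin α) (hν : 0 < ν)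
    (hν1 : ν ≤ 1 / 2) (hR₀ : 1 ≤ R₀) (hK : 0 ≤ K) (herr : K * R₀ ^ (-ν) ≤ κ) (hκ : 0 < κ)
    (hκ1 : κ ≤ 1 / 100) {a : En n} (ha : ‖a‖ = 1) {ρ : ℝ} (hρ : 0 < ρ)
    (hlen : 2 * (1 - κ) * ρ ≤ t₂ - t₁)
    (h₁ : ‖x t₁ - ρ • a‖ ≤ κ * ρ) (h₂ : ‖x t₂ + ρ • a‖ ≤ κ * ρ) :
    1 + Real.cos (π / Real.sin α) ≤
      4 * (96 * κ / (Real.sin α ^ 2 * ν) + 24 * κ / Real.sin α + 2 * κ) +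
        2 * (16 * √κ) / Real.sin α := by
  have hρa : ‖ρ • a‖ = ρ := by rw [norm_smul, ha, mul_one, Real.norm_eq_abs, abs_of_pos hρ]
  have ht12 : t₁ ≤ t₂ := by nlinarith
  have hm₁ : t₁ ∈ Icc t₁ t₂ := left_mem_Icc.2 ht12
  have hm₂ : t₂ ∈ Icc t₁ t₂ := right_mem_Icc.2 ht12
  have hr₁ : ‖x t₁‖ ≤ (1 + κ) * ρ := by
    have := norm_sub_norm_le (x t₁) (ρ • a)
    linarith
  have hr₂ : ‖x t₂‖ ≤ (1 + κ) * ρ := by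
    have := norm_sub_norm_le (x t₂) (-(ρ • a))
    rw [norm_neg, sub_neg_eq_add] at this
    linarith
  have he : ∀ t ∈ Icc t₁ t₂, K * ‖x t‖ ^ (-ν) ≤ κ := by
    intro t ht
    refine le_trans (mul_le_mul_of_nonneg_left ?_ hK) herr
    exact Real.rpow_le_rpow_of_nonpos (by linarith) (h.far t ht) (by linarith)
  have hb : ∀ t ∈ Icc t₁ t₂, |b t| ≤ (1 + 2 * κ) * ‖x t‖ := by
    intro t ht
    have hp : 0 < ‖x t‖ := by linarith [h.far t ht]
    have h3 := h.abs_inner_le ht hκ.le hp (he t ht)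
    have h4 := (h.radial_approx t ht).trans (mul_le_mul_of_nonneg_right (he t ht) hp.le)
    rw [abs_le] at *
    constructor <;> linarith
  have hbm : ∀ s₁ ∈ Icc t₁ t₂, ∀ s₂ ∈ Icc t₁ t₂, s₁ ≤ s₂ →
      |b s₂ - s₂ - (b s₁ - s₁)| ≤ κ * (s₂ - s₁) := by
    intro s₁ hs₁ s₂ hs₂ h12
    have := abs_sub_le_of_abs_deriv_le (f := fun r => b (s₁ + r) - (s₁ + r))
      (Φ := fun r => κ * r) (φ := fun _ => κ) (T := s₂ - s₁) (by linarith) (fun r hr => ?_)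
      (fun r _ => by simpa using (hasDerivAt_id r).const_mul κ)
    · simpa using this
    · have hmem : s₁ + r ∈ Icc t₁ t₂ := ⟨by linarith [hr.1, hs₁.1], by linarith [hr.2, hs₂.2]⟩
      obtain ⟨b', h3, h4⟩ := h.radial _ hmem
      refine ⟨b' - 1, ?_, h4.trans (he _ hmem)⟩
      exact (h3.comp_const_add s₁ r).sub ((hasDerivAt_id r).const_add s₁)
  have hbm' := (abs_le.1 (hbm t₁ hm₁ t₂ hm₂ ht12)).1
  have hb₁ := (abs_le.1 (hb t₁ hm₁)).1
  have hb₂ := (abs_le.1 (hb t₂ hm₂)).2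
  have hbig : (1 + 2 * κ) * ((1 + κ) * ρ) ≤ (1 + 4 * κ) * ρ := by
    rw [← mul_assoc]
    refine mul_le_mul_of_nonneg_right ?_ hρ.le
    nlinarith
  have hb₁' : -((1 + 4 * κ) * ρ) ≤ b t₁ := by
    have := mul_le_mul_of_nonneg_left hr₁ (by linarith : 0 ≤ 1 + 2 * κ)
    linarith
  have hb₂' : b t₂ ≤ (1 + 4 * κ) * ρ := by
    have := mul_le_mul_of_nonneg_left hr₂ (by linarith : 0 ≤ 1 + 2 * κ)
    linarith
  have hdiff : 2 * (1 - 2 * κ) * ρ ≤ b t₂ - b t₁ := by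
    have h3 : (1 - κ) * (2 * (1 - κ) * ρ) ≤ (1 - κ) * (t₂ - t₁) :=
      mul_le_mul_of_nonneg_left hlen (by linarith)
    nlinarith [mul_nonneg (mul_nonneg hκ.le hκ.le) hρ.le]
  have hκρ : κ * ρ ≤ 1 / 100 * ρ := mul_le_mul_of_nonneg_right hκ1 hρ.le
  have hn₁ : b t₁ ≤ -(ρ / 2) := by linarith
  have hn₂ : ρ / 2 ≤ b t₂ := by linarith
  obtain ⟨s₀, hs₀, hbs₀⟩ : ∃ s₀ ∈ Icc t₁ t₂, b s₀ = 0 := by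
    have hcont : ContinuousOn b (Icc t₁ t₂) := fun t ht => by
      obtain ⟨b', h3, -⟩ := h.radial t ht
      exact h3.continuousAt.continuousWithinAt
    exact intermediate_value_Icc ht12 hcont ⟨by linarith, by linarith⟩
  have hT₂ : ρ / 4 ≤ t₂ - s₀ := by
    have h3 := (abs_le.1 (hbm s₀ hs₀ t₂ hm₂ hs₀.2)).2
    have h4 : κ * (t₂ - s₀) ≤ 1 * (t₂ - s₀) :=
      mul_le_mul_of_nonneg_right (by linarith) (by linarith [hs₀.2])
    linarith
  have hT₁ : ρ / 4 ≤ s₀ - t₁ := by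
    have h3 := (abs_le.1 (hbm t₁ hm₁ s₀ hs₀ hs₀.1)).2
    have h4 : κ * (s₀ - t₁) ≤ 1 * (s₀ - t₁) :=
      mul_le_mul_of_nonneg_right (by linarith) (by linarith [hs₀.1])
    linarith
  have hc : CentredTraj α ν K R₀ κ (s₀ - t₁) (t₂ - s₀) (fun t => x (t + s₀))
      (fun t => v (t + s₀)) (fun t => b (t + s₀)) :=
    { traj := h.shift s₀ fun t ht => ⟨by linarith [ht.1], by linarith [ht.2]⟩
      sin_pos := hs
      nu_pos := hν
      nu_le := hν1
      one_le_R₀ := hR₀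
      K_nonneg := hK
      err := herr
      eta_le := by linarith
      T₁_nonneg := by linarith
      T₂_nonneg := by linarith
      b_zero := by simpa using hbs₀ }
  have e₁ : -(s₀ - t₁) + s₀ = t₁ := by ring
  have e₂ : t₂ - s₀ + s₀ = t₂ := by ring
  have hN₁ := hc.abs_norm_sq_sub_le (t := -(s₀ - t₁)) ⟨le_rfl, by linarith⟩
  have hN₂ := hc.abs_norm_sq_sub_le (t := t₂ - s₀) ⟨by linarith, le_rfl⟩
  simp only [e₁, e₂, zero_add] at hN₁ hN₂
  have hr₀ : ‖x s₀‖ ≤ 4 * √κ * ρ := by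
    have h3 := (abs_le.1 hN₁).1
    have h4 := (abs_le.1 hN₂).1
    have h5 : ‖x t₁‖ ^ 2 ≤ ((1 + κ) * ρ) ^ 2 := pow_le_pow_left₀ (norm_nonneg _) hr₁ 2
    have h6 : ‖x t₂‖ ^ 2 ≤ ((1 + κ) * ρ) ^ 2 := pow_le_pow_left₀ (norm_nonneg _) hr₂ 2
    set A := s₀ - t₁
    set D := t₂ - s₀
    have h7 : 4 * ((1 - κ) * ρ) ^ 2 ≤ 2 * (A ^ 2 + D ^ 2) := by
      have h8 : (2 * (1 - κ) * ρ) ^ 2 ≤ (A + D) ^ 2 :=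
        pow_le_pow_left₀ (by have : 0 ≤ 1 - κ := by linarith
                             positivity) (by simp only [A, D]; linarith) 2
      nlinarith [sq_nonneg (A - D)]
    have h8 : ‖x s₀‖ ^ 2 ≤ 16 * κ * ρ ^ 2 := by
      have h9 : (1 - 4 * κ) * (2 * ‖x s₀‖ ^ 2 + (A ^ 2 + D ^ 2)) ≤ 2 * ((1 + κ) * ρ) ^ 2 := by
        linarith
      have h10 : (1 - 4 * κ) * (2 * ((1 - κ) * ρ) ^ 2) ≤ (1 - 4 * κ) * (A ^ 2 + D ^ 2) :=
        mul_le_mul_of_nonneg_left (by linarith) (by linarith)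
      have h11 : (1 - 4 * κ) * ‖x s₀‖ ^ 2 ≤
          ((1 + κ) ^ 2 - (1 - 4 * κ) * (1 - κ) ^ 2) * ρ ^ 2 := by linarith
      have h12 : (1 + κ) ^ 2 - (1 - 4 * κ) * (1 - κ) ^ 2 ≤ 8 * κ := by
        have : 0 ≤ κ * κ * (2 - κ) := mul_nonneg (by positivity) (by linarith)
        linarith
      have h13 := h11.trans (mul_le_mul_of_nonneg_right h12 (sq_nonneg ρ))
      have h14 : 1 / 2 * ‖x s₀‖ ^ 2 ≤ (1 - 4 * κ) * ‖x s₀‖ ^ 2 :=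
        mul_le_mul_of_nonneg_right (by linarith) (sq_nonneg _)
      linarith
    refine abs_le_of_sq_le_sq' ?_ (by positivity) |>.2
    rw [mul_pow, mul_pow, Real.sq_sqrt hκ.le]
    linarith
  have hβ : ∀ T, ρ / 4 ≤ T → ‖x s₀‖ / T ≤ 16 * √κ := by
    intro T hT
    rw [div_le_iff₀ (by linarith)]
    have := mul_le_mul_of_nonneg_left hT (by positivity : 0 ≤ 16 * √κ)
    linarith
  refine hc.one_add_cos_le (a := a) ha (ρ := ρ) hρ hκ.le (by linarith) (by linarith) ?_ ?_ ?_ ?_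
  · simpa only [e₁] using h₁
  · simpa only [e₂] using h₂
  · simpa only [zero_add] using hβ _ hT₁
  · simpa only [zero_add] using hβ _ hT₂

/-! ### Min-max geodesics far from the origin -/

/-- A geodesic of `B` from `ρa` to `-ρa` of length at least `(2 - κ)ρ`, contained in the region
where `B` is `κ`-close to the cone, forces `π / sin α` to be close to an odd multiple of `π`. -/
theorem one_add_cos_le_of_far {n : ℕ} {B : En n → En n →L[ℝ] En n →L[ℝ] ℝ} (hB : RiemForm B)
    {α ν C R R₀ κ : ℝ} (hcb : ConicalBounds B α ν C R) (hC : 1 ≤ C) (hs : 0 < Real.sin α)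
    (hν : 0 < ν) (hν1 : ν ≤ 1 / 2) (hR : R ≤ R₀) (hR₀ : 1 ≤ R₀)
    (hsmall : C * R₀ ^ (-ν) ≤ Real.sin α ^ 2 / 2)
    (herr : 4 * C / Real.sin α ^ 2 * R₀ ^ (-ν) ≤ κ) (hκ : 0 < κ) (hκ1 : κ ≤ 1 / 100)
    {a : En n} (ha : ‖a‖ = 1) {ρ c : ℝ} (hρ : 0 < ρ) (hc : 2 * (1 - κ / 2) * ρ ≤ c)
    {Γ : ℝ → En n} (hΓ : IsGeodesicOn (rdist (gB B)) Γ c (Icc 0 1)) (h0 : Γ 0 = ρ • a)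
    (h1 : Γ 1 = -(ρ • a)) (hfar : ∀ t ∈ Icc (0 : ℝ) 1, R₀ ≤ ‖Γ t‖) :
    1 + Real.cos (π / Real.sin α) ≤
      4 * (96 * κ / (Real.sin α ^ 2 * ν) + 24 * κ / Real.sin α + 2 * κ) +
        2 * (16 * √κ) / Real.sin α := by
  have hc0 : 0 < c := by nlinarith
  obtain ⟨hgeo, hcont⟩ := geodesic_unit_speed hB hc0 hΓ
  obtain ⟨δ₀, hδ₀, hd₀⟩ := Metric.continuousWithinAt_iff.1
    (hcont 0 ⟨le_rfl, zero_le_one⟩) (κ * ρ) (by positivity)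
  obtain ⟨δ₁, hδ₁, hd₁⟩ := Metric.continuousWithinAt_iff.1
    (hcont 1 ⟨zero_le_one, le_rfl⟩) (κ * ρ) (by positivity)
  obtain ⟨σ, hσ0, hσ⟩ := exists_between (lt_min (lt_min hδ₀ hδ₁) (by positivity : 0 < κ / 8))
  have hσ₀ : σ < δ₀ := hσ.trans_le ((min_le_left _ _).trans (min_le_left _ _))
  have hσ₁ : σ < δ₁ := hσ.trans_le ((min_le_left _ _).trans (min_le_right _ _))
  have hσκ : σ < κ / 8 := hσ.trans_le (min_le_right _ _)
  have hJ : ∀ t ∈ Icc (c * σ) (c * (1 - σ)), t ∈ Ioo 0 c := by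
    intro t ht
    exact ⟨(by positivity : 0 < c * σ).trans_le ht.1, ht.2.trans_lt (by nlinarith)⟩
  have hJ' : ∀ t ∈ Icc (c * σ) (c * (1 - σ)), t / c ∈ Icc (0 : ℝ) 1 := by
    intro t ht
    exact ⟨(div_pos (hJ t ht).1 hc0).le, ((div_lt_one hc0).2 (hJ t ht).2).le⟩
  have htraj := conicalTraj_of_geodesic (J := Icc (c * σ) (c * (1 - σ))) hcb hC hs hν hR hR₀
    hsmall (fun t ht => hgeo t (hJ t ht)) (fun t ht => hfar _ (hJ' t ht))
  have e₁ : c * σ / c = σ := by field_simp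
  have e₂ : c * (1 - σ) / c = 1 - σ := by field_simp
  refine htraj.one_add_cos_le hs hν hν1 hR₀ (by positivity) herr hκ hκ1 ha hρ ?_ ?_ ?_
  · have h3 : 2 * (1 - κ / 2) * ρ * (1 - κ / 4) ≤ c * (1 - κ / 4) :=
      mul_le_mul_of_nonneg_right hc (by linarith)
    have h4 : c * (1 - κ / 4) ≤ c * (1 - 2 * σ) :=
      mul_le_mul_of_nonneg_left (by linarith) hc0.le
    nlinarith [mul_nonneg (mul_nonneg hκ.le hκ.le) hρ.le, mul_pos hκ hρ]
  · have := hd₀ (x := σ) ⟨hσ0.le, by linarith⟩ (by simpa [abs_of_pos hσ0] using hσ₀)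
    rw [dist_eq_norm, h0] at this
    simpa only [e₁] using this.le
  · have := hd₁ (x := 1 - σ) ⟨by linarith, by linarith⟩
      (by rw [Real.dist_eq, sub_sub_cancel_left, abs_neg, abs_of_pos hσ0]; exact hσ₁)
    rw [dist_eq_norm, h1, sub_neg_eq_add] at this
    simpa only [e₂] using this.le

theorem sin_eq_of_cos_pi_div_eq {s : ℝ} (hs : 0 < s) (h : Real.cos (π / s) = -1) :
    ∃ k : ℕ, s = 1 / (2 * (k : ℝ) + 1) := by
  have h1 : Real.cos (π / s - π) = 1 := by rw [Real.cos_sub_pi, h, neg_neg]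
  obtain ⟨k, hk⟩ := (Real.cos_eq_one_iff _).1 h1
  have hπ := Real.pi_pos
  have h2 : 1 / s = 2 * (k : ℝ) + 1 := by
    have h3 : π * (1 / s) = π * (2 * (k : ℝ) + 1) := by
      rw [mul_one_div]
      linarith
    exact mul_left_cancel₀ hπ.ne' h3
  have hk0 : 0 ≤ k := by
    have h4 : 0 < 2 * (k : ℝ) + 1 := by rw [← h2]; positivity
    have h5 : (0 : ℤ) < 2 * k + 1 := by exact_mod_cast h4
    omega
  lift k to ℕ using hk0
  refine ⟨k, ?_⟩
  rw [Int.cast_natCast] at h2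
  rw [← h2, one_div_one_div]

/-- If for arbitrarily small `κ` the estimate of `one_add_cos_le_of_far` holds, then `α` is one of
the exceptional angles. -/
theorem exceptional_of_forall {α ν : ℝ} (hα : α ∈ Ioo 0 (π / 2))
    (h : ∀ κ, 0 < κ → κ ≤ 1 / 100 → 1 + Real.cos (π / Real.sin α) ≤
      4 * (96 * κ / (Real.sin α ^ 2 * ν) + 24 * κ / Real.sin α + 2 * κ) +
        2 * (16 * √κ) / Real.sin α) :
    ∃ k : ℕ, α = Real.arcsin (1 / (2 * (k : ℝ) + 1)) := by
  have hs : 0 < Real.sin α := Real.sin_pos_of_pos_of_lt_pi hα.1 (by linarith [hα.2, Real.pi_pos])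
  have hF : Continuous fun κ : ℝ =>
      4 * (96 * κ / (Real.sin α ^ 2 * ν) + 24 * κ / Real.sin α + 2 * κ) +
        2 * (16 * √κ) / Real.sin α := by fun_prop
  have hlim := (hF.tendsto 0).mono_left (nhdsWithin_le_nhds (s := Ioi 0))
  have hle := ge_of_tendsto hlim (by
    filter_upwards [Ioc_mem_nhdsGT (show (0 : ℝ) < 1 / 100 by norm_num)] with κ hκ
    exact h κ hκ.1 hκ.2)
  norm_num at hle
  have hcos : Real.cos (π / Real.sin α) = -1 :=
    le_antisymm (by linarith) (Real.neg_one_le_cos _)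
  obtain ⟨k, hk⟩ := sin_eq_of_cos_pi_div_eq hs hcos
  refine ⟨k, ?_⟩
  rw [← hk, Real.arcsin_sin (by linarith [hα.1, Real.pi_pos]) hα.2.le]

end

/-- uniform distance bound for min-max geodesic segments.
On an asymptotically conical `(ℝⁿ,g)` with `α ∉ {arcsin 1/(2k+1)}` and proper
exponential maps, any family `Γ_ρ` (`ρ > R_κ`) of min-max geodesic segments joining
`p = ρa` and `q = -ρa` with energy `E(Γ_ρ) = Λ_{pq}` stays at uniformly bounded
Euclidean distance from the origin: `sup_ρ dist(Γ_ρ, o) < ∞`. -/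
theorem statement_18
 (n : ℕ) (hn : 2 ≤ n) (g : MetricTensor n) (α μ ε Cs Rε Rκ : ℝ)
    (hα : α ∈ Set.Ioo 0 (π / 2))
    (hαk : ∀ k : ℕ, α ≠ Real.arcsin (1 / (2 * (k : ℝ) + 1)))
    (hμ : 0 < μ) (hg : IsAsympConical n g α μ)
    (hproper : ProperExpAll g)
    (hε : 0 < ε) (hε' : ε < 1/2) (hCs : 1 ≤ Cs)
    (hεα : Real.sin (π / 2 * Real.sin α) ^ 2 < (1 - 5*Cs*ε)^2 / (1 + 5*Cs*ε)^2)
    (hRε : 0 < Rε)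
    (hlen : ∀ γ : ℝ → En n, ContDiff ℝ 1 γ → (∀ t ∈ Set.Icc (0:ℝ) 1, Rε ≤ ‖γ t‖) →
      (1 - Cs*ε) * clen (coneMetric n α) γ 0 1 ≤ clen g γ 0 1 ∧
      clen g γ 0 1 ≤ (1 + Cs*ε) * clen (coneMetric n α) γ 0 1)
    (hRκ : Rε ≤ Rκ)
    (hdist : ∀ x : En n, Rκ ≤ ‖x‖ →
      (1 - ε) * ‖x‖ ≤ rdist g 0 x ∧ rdist g 0 x ≤ (1 + ε) * ‖x‖)
    (hmins : ∀ x : En n, Rκ ≤ ‖x‖ → ∀ γ : ℝ → En n,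
      IsMinSeg (coneDist n α) γ x (-x) → ∀ t ∈ Set.Icc (0:ℝ) 1, Rε ≤ ‖γ t‖)
    (a e : En n) (ha : ‖a‖ = 1) (he : ‖e‖ = 1) (hae : ⟪e, a⟫ = 0)
    (L : ℝ → En n → ℝ → En n)
    (hL : ∀ ρ : ℝ, Rκ < ρ → ∀ ξ : En n, ‖ξ‖ = 1 → ⟪ξ, a⟫ = 0 →
      IsMinSeg (coneDist n α) (L ρ ξ) (ρ • a) (-(ρ • a)) ∧
      (∀ t ∈ Set.Icc (0:ℝ) 1, ∃ s r : ℝ, 0 ≤ r ∧ L ρ ξ t = s • a + r • ξ) ∧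
      (∃ t ∈ Set.Icc (0:ℝ) 1, ∃ r : ℝ, 0 < r ∧ L ρ ξ t = r • ξ)) :
    let S : Set (En n) := {ξ | ‖ξ‖ = 1 ∧ ⟪ξ, a⟫ = 0}
    let I : En n → En n := fun x => x - (2 * ⟪x, e⟫) • e
    let Mclass : ℝ → (En n → ℝ → ℝ → En n) → Prop := fun ρ H =>
      (∀ ξ ∈ S, ∀ s ∈ Set.Icc (0:ℝ) 1,
        ContDiff ℝ 1 (H ξ s) ∧ H ξ s 0 = ρ • a ∧ H ξ s 1 = -(ρ • a)) ∧
      (∀ ξ ∈ S, H ξ 0 = L ρ ξ ∧ H ξ 1 = L ρ (I ξ)) ∧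
      ContinuousOn (fun z : En n × ℝ × ℝ => H z.1 z.2.1 z.2.2)
        (S ×ˢ (Set.Icc 0 1 ×ˢ Set.Icc 0 1))
    let Λ : ℝ → ℝ := fun ρ => sInf {m : ℝ | ∃ H, Mclass ρ H ∧
      IsLUB {E : ℝ | ∃ ξ ∈ S, ∃ s ∈ Set.Icc (0:ℝ) 1, E = cenergy g (H ξ s) 0 1} m}
    ∀ Γfam : ℝ → ℝ → En n,
      (∀ ρ : ℝ, Rκ < ρ → ∃ c : ℝ, 0 ≤ c ∧
        Γfam ρ 0 = ρ • a ∧ Γfam ρ 1 = -(ρ • a) ∧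
        IsGeodesicOn (rdist g) (Γfam ρ) c (Set.Icc 0 1) ∧
        cenergy g (Γfam ρ) 0 1 = Λ ρ ∧ c^2 = Λ ρ) →
      ∃ C : ℝ, ∀ ρ : ℝ, Rκ < ρ → ∃ t ∈ Set.Icc (0:ℝ) 1, ‖Γfam ρ t‖ ≤ C := by
  intro S I Mclass Λ Γfam hΓ
  have hs : 0 < Real.sin α := Real.sin_pos_of_pos_of_lt_pi hα.1 (by linarith [hα.2, Real.pi_pos])
  have hgB : gB (metB g) = g := by
    funext x v w
    exact metB_apply hg x v w
  have hB : RiemForm (metB g) :=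
    { contDiff := (metB_contDiff hg).of_le (by norm_num)
      symm := fun x v w => by rw [metB_apply hg, metB_apply hg, hg.symm]
      pos := fun x v hv => by rw [metB_apply hg]; exact hg.posdef x v hv }
  obtain ⟨C, R, hC, hR, hcb⟩ := conicalBounds_of_asymp hg (min_le_left μ (1 / 2))
  set ν := min μ (1 / 2) with hν
  have hν0 : 0 < ν := lt_min hμ (by norm_num)
  have hν1 : ν ≤ 1 / 2 := min_le_right _ _
  by_contra hcon
  push Not at hcon
  obtain ⟨k, hk⟩ := exceptional_of_forall (ν := ν) hα fun κ hκ hκ1 => by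
    obtain ⟨R₁, hR₁, hrad⟩ := exists_radialLower hcb hs hν0 (η := κ / 4) (by positivity)
      (by linarith)
    have hlim : Tendsto (fun r : ℝ => 4 * C / Real.sin α ^ 2 * r ^ (-ν)) atTop (nhds 0) := by
      simpa using (tendsto_rpow_neg_atTop hν0).const_mul (4 * C / Real.sin α ^ 2)
    obtain ⟨R₀, herr, hRR₀, hR₁R₀⟩ := ((hlim.eventually_le_const hκ).and
      ((eventually_ge_atTop R).and (eventually_ge_atTop (4 * R₁ / κ)))).exists
    have hsmall : C * R₀ ^ (-ν) ≤ Real.sin α ^ 2 / 2 := by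
      rw [div_mul_eq_mul_div, div_le_iff₀ (by positivity)] at herr
      nlinarith [sq_nonneg (Real.sin α)]
    obtain ⟨ρ, hρ, hfar⟩ := hcon R₀
    obtain ⟨c, hc0, h0, h1, hgeo, -, hcΛ⟩ := hΓ ρ hρ
    have hR₀ : 1 ≤ R₀ := hR.trans hRR₀
    have hρ0 : 0 < ρ := by linarith
    have hρa : ‖ρ • a‖ = ρ := by rw [norm_smul, ha, mul_one, Real.norm_eq_abs, abs_of_pos hρ0]
    have hρR₀ : R₀ < ρ := by
      have := hfar 0 ⟨le_rfl, zero_le_one⟩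
      rwa [h0, hρa] at this
    have hR₁ρ : R₁ ≤ κ / 4 * ρ := by
      rw [div_le_iff₀ hκ] at hR₁R₀
      nlinarith
    rw [← hgB] at hgeo
    refine one_add_cos_le_of_far hB hcb hC hs hν0 hν1 hRR₀ hR₀ hsmall herr hκ hκ1 ha hρ0 ?_ hgeo
      h0 h1 fun t ht => (hfar t ht).le
    have hlow : 2 * (1 - κ / 2) * ρ ≤ 2 * (1 - κ / 4) * (ρ - R₁) := by
      have h3 : (1 - κ / 4) * ((1 - κ / 4) * ρ) ≤ (1 - κ / 4) * (ρ - R₁) :=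
        mul_le_mul_of_nonneg_left (by linarith) (by linarith)
      nlinarith [mul_nonneg (mul_nonneg hκ.le hκ.le) hρ0.le]
    refine hlow.trans (abs_le_of_sq_le_sq' ?_ hc0).2
    rw [hcΛ]
    -- An empty class of sweepouts would make `Λ ρ = 0`, hence `Γfam ρ` constant.
    refine le_csInf ?_ ?_
    · by_contra hne
      rw [Set.not_nonempty_iff_eq_empty] at hne
      have hc : c = 0 := by
        have : c ^ 2 = 0 := by
          rw [hcΛ]
          simp only [Λ, hne, Real.sInf_empty]
        exact pow_eq_zero_iff (by norm_num) |>.1 this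
      rw [hc] at hgeo
      have h2 := geodesic_zero_speed hB hgeo
      rw [h0, h1] at h2
      have h3 := congrArg (fun y : En n => ⟪y, a⟫) h2
      simp only [inner_neg_left, real_inner_smul_left, real_inner_self_eq_norm_sq, ha] at h3
      linarith
    · rintro m ⟨H, ⟨hH1, hH2, hH3⟩, hlub⟩
      obtain ⟨ξ, hξ, s, hs', t, ht, hz⟩ := sweepout_hits_origin ha
        (show e ∈ equator a from ⟨he, hae⟩) hρ0 (L ρ)
        (fun ξ hξ => (hL ρ hρ ξ hξ.1 hξ.2).2.1) H hH3 (fun ξ hξ s hs => (hH1 ξ hξ s hs).2) hH2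
      obtain ⟨hsm, hH0, hH1'⟩ := hH1 ξ hξ s hs'
      have h3 := hrad.clen_ge hB (by linarith) hR₁ hsm (ρ := ρ) (by rw [hH0, hρa])
        (by rw [hH1', norm_neg, hρa]) (by nlinarith) ⟨t, ht, hz⟩
      have h4 := clen_sq_le_cenergy hB hsm
      have h5 : cenergy (gB (metB g)) (H ξ s) 0 1 ≤ m := by
        rw [hgB]
        exact hlub.1 ⟨ξ, hξ, s, hs', rfl⟩
      have h6 : 0 ≤ 2 * (1 - κ / 4) * (ρ - R₁) :=
        mul_nonneg (by linarith) (by nlinarith)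
      exact (pow_le_pow_left₀ h6 h3 2).trans (h4.trans h5)
  exact hαk k hk
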